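/- arXiv:2401.06555 — 2 statements merged into one kernel-verified Lean document; each statement's English description precedes it below -/
import Mathlib

section
/- Let c be a negative integer and suppose that c = L_n − 2^x·3^y = L_{n₁} − 2^{x₁}·3^{y₁} = L_{n₂} − 2^{x₂}·3^{y₂} for nonnegative integers with n > n₁ > n₂ and n₁ > 500. If n ≥ 60000, then min(x, x₁) < 2.4·10^17 · (log n)⁴ and min(y, y₁) < 2.4·10^17 · (log n)⁴. -/
/-- The Lucas sequence: L 0 = 2, L 1 = 1, L (n+2) = L (n+1) + L n. -/
def lucas : ℕ → ℤ
  | 0 => 2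
  | 1 => 1
  | n + 2 => lucas (n + 1) + lucas n

section

open Finset

/-- Expansion of a determinant whose rows are combinations of vectors divisible by powers of `q`. -/
theorem pow_dvd_det_of_sum {O n ι : Type*} [CommRing O] [Fintype n] [DecidableEq n] [Fintype ι]
    (q : O) (G : ℕ) (e : ι → ℕ) (C : n → ι → O) (B : ι → n → O)
    (h : ∀ σ : n → ι, Function.Injective σ → G ≤ ∑ i, e (σ i)) (M : Matrix n n O)
    (hM : ∀ i j, M i j = ∑ t, C i t * (q ^ e t * B t j)) : q ^ G ∣ M.det := by
  classical
  have hM' : M = fun i => ∑ t, (C i t * q ^ e t) • B t := by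
    ext i j
    rw [hM, Finset.sum_apply]
    exact Finset.sum_congr rfl fun t _ => by simp [mul_assoc]
  have hdet : M.det = ∑ σ : n → ι, Matrix.detRowAlternating
      (fun i => (C i (σ i) * q ^ e (σ i)) • B (σ i)) := by
    have h1 := MultilinearMap.map_sum (Matrix.detRowAlternating (n := n) (R := O)).toMultilinearMap
      (fun (i : n) (t : ι) => (C i t * q ^ e t) • B t)
    rw [hM']
    exact h1
  rw [hdet]
  refine Finset.dvd_sum fun σ _ => ?_
  have h2 : Matrix.detRowAlternating (fun i => (C i (σ i) * q ^ e (σ i)) • B (σ i)) =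
      (∏ i, (C i (σ i) * q ^ e (σ i))) • Matrix.detRowAlternating (fun i => B (σ i)) :=
    MultilinearMap.map_smul_univ
      (Matrix.detRowAlternating (n := n) (R := O)).toMultilinearMap _ _
  rw [h2]
  by_cases hσ : Function.Injective σ
  · rw [Finset.prod_mul_distrib, Finset.prod_pow_eq_pow_sum, smul_eq_mul]
    exact ((pow_dvd_pow q (h σ hσ)).mul_left _).mul_right _
  · have : Matrix.detRowAlternating (fun i => B (σ i)) = 0 := by
      obtain ⟨i, j, hij, hne⟩ : ∃ i j, σ i = σ j ∧ i ≠ j := by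
        simpa [Function.Injective] using hσ
      exact AlternatingMap.map_eq_zero_of_eq _ _ (by simp [hij]) hne
    rw [this]; simp

/-- A sum of weights over an injective family: naturals below `Z` weigh `j - K`, all the other
indices at least `N`. -/
theorem le_sum_of_injective {n ι : Type*} [Fintype n] (Z K : ℕ)
    (e : Fin Z ⊕ ι → ℕ) (he : ∀ j, e (Sum.inl j) = j - K)
    (he' : ∀ c, Fintype.card n ≤ e (Sum.inr c)) (σ : n → Fin Z ⊕ ι)
    (hσ : Function.Injective σ) :
    Fintype.card n * (Fintype.card n - 1) / 2 - Fintype.card n * K ≤ ∑ i, e (σ i) := by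
  classical
  set N := Fintype.card n with hN
  set w : n → ℕ := fun i => min (e (σ i) + K) N
  have hw : ∑ i, w i ≤ ∑ i, e (σ i) + N * K := by
    calc ∑ i, w i ≤ ∑ i, (e (σ i) + K) := Finset.sum_le_sum fun i _ => min_le_left _ _
      _ = _ := by simp [Finset.sum_add_distrib, hN]
  have hcount : ∀ i, w i = ∑ h ∈ range N, if h < w i then 1 else 0 := by
    intro i
    rw [Finset.sum_ite, Finset.sum_const_zero, add_zero, Finset.sum_const, smul_eq_mul, mul_one]
    have : (range N).filter (fun h => h < w i) = range (w i) := by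
      ext h; simp only [mem_filter, mem_range]
      have : w i ≤ N := min_le_right _ _
      omega
    rw [this, card_range]
  have hlow : ∀ h ∈ range N, N - 1 - h ≤ ∑ i, if h < w i then 1 else 0 := by
    intro h hh
    rw [mem_range] at hh
    rw [← Finset.card_filter]
    have h1 := Finset.card_filter_add_card_filter_not (s := (univ : Finset n)) (fun i => h < w i)
    have h2 : #(univ.filter fun i => ¬ h < w i) ≤ h + 1 := by
      rw [← card_range (h + 1)]
      have hf : ∀ i, ¬ h < w i → ∃ j : Fin Z, σ i = Sum.inl j ∧ (j : ℕ) ≤ h := by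
        intro i hi
        have hi' : w i ≤ h := not_lt.mp hi
        rcases hs : σ i with j | c
        · refine ⟨j, rfl, ?_⟩
          have : min (e (σ i) + K) N ≤ h := hi'
          rw [hs, he] at this
          omega
        · have : min (e (σ i) + K) N ≤ h := hi'
          rw [hs] at this
          have := he' c
          omega
      refine Finset.card_le_card_of_injOn
        (fun i => Sum.elim (fun j : Fin Z => (j : ℕ)) (fun _ => 0) (σ i)) ?_ ?_
      · intro i hi
        obtain ⟨j, hj, hjh⟩ := hf i (by simpa using hi)
        simp only [hj, Sum.elim_inl, coe_range, Set.mem_Iio]; omega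
      · intro i hi i' hi' hii
        obtain ⟨j, hj, -⟩ := hf i (by simpa using hi)
        obtain ⟨j', hj', -⟩ := hf i' (by simpa using hi')
        simp only [hj, hj', Sum.elim_inl] at hii
        exact hσ (by rw [hj, hj', Fin.ext hii])
    rw [card_univ, ← hN] at h1
    omega
  have hsum : ∑ h ∈ range N, (N - 1 - h) ≤ ∑ i, w i := by
    rw [Finset.sum_congr rfl fun i _ => hcount i, Finset.sum_comm]
    exact Finset.sum_le_sum hlow
  rw [Finset.sum_range_reflect (fun j => j), Finset.sum_range_id] at hsum
  omega

/-- Iterated differences of `ζ ↦ ζ(ζ-1)⋯(ζ-k+1) B ^ ζ` when `B ≡ 1 mod q`. -/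
theorem pow_dvd_fwdDiff_iter {O : Type*} [CommRing O] (q B : O) (hB : q ∣ B - 1) (j k ζ : ℕ) :
    q ^ (j - k) ∣ (fwdDiff 1)^[j] (fun z : ℕ => (z.descFactorial k : O) * B ^ z) ζ := by
  have hstep : ∀ k : ℕ, fwdDiff 1 (fun z : ℕ => (z.descFactorial k : O) * B ^ z) =
      (B - 1) • (fun z : ℕ => (z.descFactorial k : O) * B ^ z) +
      ((k : O) * B) • (fun z : ℕ => (z.descFactorial (k - 1) : O) * B ^ z) := by
    intro k
    ext z
    simp only [fwdDiff, Pi.add_apply, Pi.smul_apply, smul_eq_mul]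
    cases k with
    | zero => simp [pow_succ]; ring
    | succ k =>
      have : (z + 1).descFactorial (k + 1) =
          z.descFactorial (k + 1) + (k + 1) * z.descFactorial k := by
        rw [Nat.succ_descFactorial_succ, Nat.descFactorial_succ]
        rcases lt_or_ge z k with h | h
        · simp [Nat.descFactorial_of_lt h]
        · obtain ⟨t, rfl⟩ := Nat.exists_eq_add_of_le h
          simp only [Nat.add_sub_cancel_left]; ring
      rw [this]
      push_cast
      ring
  induction j generalizing k with
  | zero => simp
  | succ j ih =>
    rw [Function.iterate_succ_apply, hstep, fwdDiff_iter_add, fwdDiff_iter_const_smul,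
      fwdDiff_iter_const_smul]
    simp only [Pi.add_apply, Pi.smul_apply, smul_eq_mul]
    refine dvd_add ?_ ?_
    · refine dvd_trans (pow_dvd_pow q (by omega : j + 1 - k ≤ 1 + (j - k))) ?_
      rw [pow_add, pow_one]
      exact mul_dvd_mul hB (ih k)
    · cases k with
      | zero => simp
      | succ k =>
        refine Dvd.dvd.mul_left ?_ _
        have := ih k
        simpa using this

end

section

open Finset Polynomial

theorem eval_comp_det {n : Type*} [Fintype n] [DecidableEq n] (M : Matrix n n ℝ[X]) (x : ℝ) :
    (M.det).eval x = (M.map (eval x)).det := by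
  rw [← coe_evalRingHom, RingHom.map_det]; rfl

/-- Nonvanishing of a mixed exponential-polynomial determinant: a zero estimate. -/
theorem eq_zero_of_expPoly_eq_zero (K L R S S₀ : ℕ) (α β : ℝ) (hα : 1 < α) (hβ : β ≠ 0)
    (hRS : R ≤ S) (hcard : (K - 1) * L < R * S₀) (P : Fin L → ℝ[X])
    (hP : ∀ l, (P l).natDegree ≤ K - 1)
    (h : ∀ r < R + L, ∀ s < S₀, ∑ l : Fin L,
      (P l).eval ((r + s * S : ℕ) : ℝ) * α ^ ((l : ℕ) * r) * β ^ ((l : ℕ) * s) = 0) : P = 0 := by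
  classical
  by_contra hne
  set I := {l : Fin L // P l ≠ 0}
  set N := Fintype.card I with hN
  have hNL : N ≤ L := by
    exact (Fintype.card_subtype_le (fun l : Fin L => P l ≠ 0)).trans_eq (Fintype.card_fin L)
  have hNpos : 0 < N := by
    obtain ⟨l, hl⟩ := Function.ne_iff.mp hne
    exact Fintype.card_pos_iff.mpr ⟨⟨l, hl⟩⟩
  let σ : I ≃ Fin N := Fintype.equivFin I
  let M : Matrix I I ℝ[X] := fun i l =>
    X ^ (K - 1 - (P l).natDegree) * (P l).comp (X + C ((σ i : ℕ) : ℝ)) *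
      C (α ^ ((l : Fin L) * (σ i : ℕ)))
  have hMdeg : ∀ i l, (M i l).natDegree ≤ K - 1 := by
    intro i l
    have h1 := hP l
    refine (natDegree_mul_C_le _ _).trans (natDegree_mul_le.trans ?_)
    have h2 : ((P l).comp (X + C ((σ i : ℕ) : ℝ))).natDegree = (P l).natDegree := by
      rw [natDegree_comp, natDegree_X_add_C, mul_one]
    rw [natDegree_X_pow, h2]
    omega
  have hMcoeff : ∀ i l, (M i l).coeff (K - 1) =
      (P l).leadingCoeff * α ^ ((l : Fin L) * (σ i : ℕ)) := by
    intro i l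
    have h1 := hP l
    have h2 : ((P l).comp (X + C ((σ i : ℕ) : ℝ))).natDegree = (P l).natDegree := by
      rw [natDegree_comp, natDegree_X_add_C, mul_one]
    have h3 : ((P l).comp (X + C ((σ i : ℕ) : ℝ))).leadingCoeff = (P l).leadingCoeff := by
      rw [leadingCoeff_comp (by rw [natDegree_X_add_C]; exact one_ne_zero), leadingCoeff_X_add_C,
        one_pow, mul_one]
    simp only [M]
    rw [coeff_mul_C]
    conv_lhs => rw [show K - 1 = (P l).natDegree + (K - 1 - (P l).natDegree) by omega]
    rw [show (P l).natDegree + (K - 1 - (P l).natDegree) - (P l).natDegree =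
      K - 1 - (P l).natDegree by omega, mul_comm (X ^ _), coeff_mul_X_pow]
    conv_lhs => rw [← h2]
    rw [coeff_natDegree, h3]
  have hcoeff : M.det.coeff (N * (K - 1)) = (Matrix.of fun i l => (M i l).coeff (K - 1)).det := by
    rw [Matrix.det_apply, Matrix.det_apply, finsetSum_coeff]
    refine Finset.sum_congr rfl fun τ _ => ?_
    rw [← Finset.card_univ (α := I)] at hN
    rw [Polynomial.coeff_smul, hN, coeff_prod_of_natDegree_le]
    · rfl
    · intro p _; exact hMdeg _ _
  have hdet0 : M.det ≠ 0 := by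
    intro h0
    rw [h0, coeff_zero] at hcoeff
    have h1 : (Matrix.of fun i l => (M i l).coeff (K - 1)) =
        (Matrix.of fun i (l : I) => (α ^ ((l : Fin L) : ℕ)) ^ (σ i : ℕ)) *
          Matrix.diagonal (fun l : I => (P l).leadingCoeff) := by
      ext i l
      rw [Matrix.mul_diagonal, Matrix.of_apply, hMcoeff, Matrix.of_apply, pow_mul, mul_comm]
    rw [h1, Matrix.det_mul, Matrix.det_diagonal] at hcoeff
    rcases mul_eq_zero.mp hcoeff.symm with h2 | h2
    · have h3 : (Matrix.of fun i (l : I) => (α ^ ((l : Fin L) : ℕ)) ^ (σ i : ℕ)).det =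
          (Matrix.vandermonde fun j : Fin N => α ^ ((σ.symm j : Fin L) : ℕ)).det := by
        rw [← Matrix.det_transpose, ← Matrix.det_submatrix_equiv_self σ]
        congr 1
        ext i j
        simp [Matrix.vandermonde_apply]
      rw [h3] at h2
      refine (Matrix.det_vandermonde_ne_zero_iff.mpr ?_) h2
      intro i j hij
      have h4 : ((σ.symm i : Fin L) : ℕ) = ((σ.symm j : Fin L) : ℕ) :=
        (pow_right_strictMono₀ hα).injective hij
      exact σ.symm.injective (Subtype.ext (Fin.ext h4))
    · obtain ⟨l, _, hl⟩ := Finset.prod_eq_zero_iff.mp h2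
      exact l.2 (leadingCoeff_eq_zero.mp hl)
  have hdeg : M.det.natDegree ≤ N * (K - 1) := by
    rw [Matrix.det_apply]
    refine natDegree_sum_le_of_forall_le _ _ fun τ _ => ?_
    refine (natDegree_smul_le _ _).trans ((natDegree_prod_le _ _).trans ?_)
    refine (Finset.sum_le_card_nsmul _ _ (K - 1) fun i _ => hMdeg _ _).trans ?_
    simp [hN]
  have hroots : ∀ p ∈ range R ×ˢ range S₀, M.det.eval ((p.1 + p.2 * S : ℕ) : ℝ) = 0 := by
    rintro ⟨r, s⟩ hp
    simp only [mem_product, mem_range] at hp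
    rw [eval_comp_det]
    set x : ℝ := ((r + s * S : ℕ) : ℝ) with hx
    have h1 : M.map (eval x) =
        (Matrix.of fun i (l : I) => (P l).eval (x + (σ i : ℕ)) * α ^ ((l : Fin L) * (σ i : ℕ))) *
          Matrix.diagonal (fun l : I => x ^ (K - 1 - (P l).natDegree)) := by
      ext i l
      rw [Matrix.mul_diagonal, Matrix.map_apply, Matrix.of_apply]
      simp only [M, eval_mul, eval_pow, eval_X, eval_C, eval_comp, eval_add]
      ring
    rw [h1, Matrix.det_mul]
    refine mul_eq_zero_of_left (Matrix.exists_mulVec_eq_zero_iff.mp ⟨fun l : I =>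
      α ^ ((l : Fin L) * r) * β ^ ((l : Fin L) * s), ?_, ?_⟩) _
    · have : Nonempty I := Fintype.card_pos_iff.mp hNpos
      obtain ⟨l⟩ := this
      refine Function.ne_iff.mpr ⟨l, ?_⟩
      have : α ≠ 0 := by positivity
      exact mul_ne_zero (pow_ne_zero _ this) (pow_ne_zero _ hβ)
    · ext i
      have h2 := h (r + (σ i : ℕ)) (by have := (σ i).2; omega) s hp.2
      have h3 : ∀ l : Fin L, P l = 0 → (P l).eval ((r + (σ i : ℕ) + s * S : ℕ) : ℝ) *
          α ^ ((l : ℕ) * (r + (σ i : ℕ))) * β ^ ((l : ℕ) * s) = 0 := by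
        intro l hl; simp [hl]
      rw [← Finset.sum_subset (Finset.subset_univ (univ.filter fun l => P l ≠ 0))
        (fun l _ hl => h3 l (by simpa using hl)), Finset.sum_subtype (p := fun l => P l ≠ 0) _
        (by simp)] at h2
      rw [Matrix.mulVec, Pi.zero_apply, dotProduct, ← h2]
      refine Finset.sum_congr rfl fun l _ => ?_
      rw [Matrix.of_apply, hx]
      push_cast
      rw [show (r : ℝ) + (σ i : ℕ) + s * S = r + s * S + (σ i : ℕ) by ring]
      ring
  have := Polynomial.card_le_degree_of_subset_roots (p := M.det)
    (Z := (range R ×ˢ range S₀).image fun p => ((p.1 + p.2 * S : ℕ) : ℝ)) ?_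
  · rw [Finset.card_image_of_injOn] at this
    · rw [card_product, card_range, card_range] at this
      have h2 : N * (K - 1) ≤ (K - 1) * L := by rw [mul_comm]; exact Nat.mul_le_mul_left _ hNL
      omega
    · rintro ⟨r, s⟩ hp ⟨r', s'⟩ hp' hh
      simp only [coe_product, coe_range, Set.mem_prod, Set.mem_Iio] at hp hp'
      simp only [Nat.cast_inj] at hh
      have h1 : r < S := by omega
      have h2 : r' < S := by omega
      have h3 : r = r' := by
        have := congrArg (· % S) hh
        simpa [Nat.add_mul_mod_self_right, Nat.mod_eq_of_lt h1, Nat.mod_eq_of_lt h2] using this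
      subst h3
      have h4 : s * S = s' * S := by omega
      rw [Nat.eq_of_mul_eq_mul_right (by omega) h4]
  · intro x hx
    obtain ⟨p, hp, rfl⟩ := Finset.mem_image.mp hx
    rw [mem_roots hdet0]
    exact hroots p hp

theorem Matrix.exists_submatrix_det_ne_zero {m n : Type*} [Fintype m] [DecidableEq m] [Fintype n]
    (A : Matrix m n ℝ) (h : LinearIndependent ℝ A.row) :
    ∃ f : m → n, (A.submatrix id f).det ≠ 0 := by
  have h1 := h.rank_matrix
  rw [Matrix.rank_eq_finrank_span_cols] at h1
  obtain ⟨g, hg, -, hg2⟩ := Submodule.exists_fun_fin_finrank_span_eq ℝ (Set.range A.col)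
  choose c hc using hg
  let e : m ≃ Fin (Module.finrank ℝ (Submodule.span ℝ (Set.range A.col))) :=
    Fintype.equivFinOfCardEq h1.symm
  refine ⟨fun i => c (e i), ?_⟩
  rw [← Matrix.det_transpose]
  have h2 : LinearIndependent ℝ ((A.submatrix id fun i => c (e i)).transpose).row := by
    have : ((A.submatrix id fun i => c (e i)).transpose).row = g ∘ e := by
      ext i j
      exact congrFun (hc (e i)) j
    rw [this]
    exact hg2.comp _ e.injective
  rw [Matrix.linearIndependent_rows_iff_isUnit, Matrix.isUnit_iff_isUnit_det] at h2
  exact h2.ne_zero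

/-- The rows of the interpolation matrix are independent. -/
theorem linearIndependent_interpolation (K L R S S₀ : ℕ) (α v w : ℝ) (hα : 1 < α) (hv : v ≠ 0)
    (hw : w ≠ 0) (hRS : R ≤ S) (hcard : (K - 1) * L < R * S₀) :
    LinearIndependent ℝ (Matrix.of fun (i : Fin K × Fin L) (j : Fin (R + L) × Fin S₀) =>
      (((j.1 + j.2 * S : ℕ).descFactorial i.1 : ℕ) : ℝ) * α ^ ((i.2 : ℕ) * j.1) *
        v ^ ((i.2 : ℕ) * j.2) * w ^ ((L - 1 - i.2) * j.2 : ℕ)).row := by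
  rw [Fintype.linearIndependent_iff]
  intro c hc
  let P : Fin L → ℝ[X] := fun l => ∑ k : Fin K, C (c (k, l)) * descPochhammer ℝ k
  have hP : P = 0 := by
    refine eq_zero_of_expPoly_eq_zero K L R S S₀ α (v / w) hα (div_ne_zero hv hw) hRS hcard P ?_ ?_
    · intro l
      refine natDegree_sum_le_of_forall_le _ _ fun k _ => (natDegree_C_mul_le _ _).trans ?_
      rw [descPochhammer_natDegree]; omega
    · intro r hr s hs
      have h1 := congrFun hc (⟨r, hr⟩, ⟨s, hs⟩)
      rw [Finset.sum_apply, Fintype.sum_prod_type_right, Pi.zero_apply] at h1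
      have h2 : w ^ ((L - 1) * s) ≠ 0 := pow_ne_zero _ hw
      refine (mul_eq_zero_iff_right h2).mp ?_
      rw [← h1, Finset.sum_mul]
      refine Finset.sum_congr rfl fun l _ => ?_
      simp only [P, eval_finsetSum, Finset.sum_mul]
      refine Finset.sum_congr rfl fun k _ => ?_
      have h3 : w ^ ((L - 1) * s) = w ^ ((l : ℕ) * s) * w ^ ((L - 1 - l) * s) := by
        rw [← pow_add, ← add_mul]; congr 2; have := l.2; omega
      simp only [eval_mul, eval_C, descPochhammer_eval_eq_descFactorial, Matrix.row_def,
        Matrix.of_apply, Pi.smul_apply, smul_eq_mul]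
      rw [h3, div_pow]
      have : w ^ ((l : ℕ) * s) ≠ 0 := pow_ne_zero _ hw
      field_simp
  rintro ⟨k, l⟩
  have h1 : ∑ k : Fin K, C (c (k, l)) * descPochhammer ℝ k = 0 := congrFun hP l
  have h2 : LinearIndependent ℝ (fun k : Fin K => descPochhammer ℝ k) := by
    have h3 : LinearIndependent ℝ (fun k : ℕ => descPochhammer ℝ k) := by
      let T : Polynomial.Sequence ℝ := ⟨descPochhammer ℝ, fun i => by
        rw [degree_eq_natDegree (monic_descPochhammer ℝ i).ne_zero, descPochhammer_natDegree]⟩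
      exact T.linearIndependent
    exact h3.comp _ Fin.val_injective
  rw [Fintype.linearIndependent_iff] at h2
  exact h2 (fun k => c (k, l)) (by simpa [smul_eq_C_mul] using h1) k

/-- Arithmetic size of the interpolation determinant. -/
theorem pow_dvd_interpolation_det {O : Type*} [CommRing O] (q A U V : O) (K L R S S₀ m : ℕ)
    (hA : q ∣ A - 1) (hUV : q ^ m ∣ V - A ^ S * U) (hm : K * L ≤ m)
    (f : Fin K × Fin L → Fin R × Fin S₀) :
    q ^ (K * L * (K * L - 1) / 2 - K * L * K) ∣
      (Matrix.of fun (i j : Fin K × Fin L) =>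
      (((((f j).1 : ℕ) + (f j).2 * S : ℕ).descFactorial i.1 : ℕ) : O) * A ^ ((i.2 : ℕ) * (f j).1) *
        V ^ ((i.2 : ℕ) * (f j).2) * U ^ ((L - 1 - i.2) * (f j).2 : ℕ)).det := by
  classical
  have hV : ∀ t : ℕ, ∃ y, V ^ t = (A ^ S * U) ^ t + q ^ m * y := by
    intro t
    obtain ⟨y, hy⟩ := hUV.trans (sub_dvd_pow_sub_pow V (A ^ S * U) t)
    exact ⟨y, by rw [← hy]; ring⟩
  choose y hy using hV
  have hd := fun (i : Fin K × Fin L) (j : ℕ) => pow_dvd_fwdDiff_iter q (A ^ (i.2 : ℕ))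
    (hA.trans (by simpa using sub_dvd_pow_sub_pow A 1 i.2)) j i.1 0
  choose D hD using fun i j => (pow_dvd_pow q (Nat.sub_le_sub_left i.1.2.le j)).trans (hd i j)
  let Z := R + S₀ * S
  let e : Fin Z ⊕ (Fin K × Fin L) → ℕ := Sum.elim (fun j => j - K) (fun _ => m)
  refine pow_dvd_det_of_sum q _ e
    (fun i => Sum.elim (fun j => D i j) (fun c =>
      (((((f c).1 : ℕ) + (f c).2 * S : ℕ).descFactorial i.1 : ℕ) : O) * A ^ ((i.2 : ℕ) * (f c).1) *
        y ((i.2 : ℕ) * (f c).2) * U ^ ((L - 1 - i.2) * (f c).2 : ℕ)))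
    (Sum.elim (fun j c => ((((f c).1 : ℕ) + (f c).2 * S).choose j : O) * U ^ ((L - 1) * (f c).2))
      (fun c c' => if c = c' then 1 else 0)) ?_ _ ?_
  · intro σ hσ
    have h1 := le_sum_of_injective Z K e (fun j => rfl) (fun c => by simpa [e] using hm) σ hσ
    simpa using h1
  · intro i c
    rw [Fintype.sum_sum_type]
    simp only [Sum.elim_inl, Sum.elim_inr, Matrix.of_apply, e]
    rw [Finset.sum_eq_single c (fun c' _ h => by simp [h]) (by simp)]
    rw [if_pos rfl, hy]
    set ζ := (((f c).1 : ℕ) + (f c).2 * S : ℕ) with hζ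
    have hZ : ζ < Z := by
      have h1 := (f c).1.2
      have h2 : (f c).2 * S ≤ S₀ * S := Nat.mul_le_mul_right _ (f c).2.2.le
      omega
    have hN : ((ζ.descFactorial i.1 : ℕ) : O) * (A ^ (i.2 : ℕ)) ^ ζ =
        ∑ j : Fin Z, D i j * (q ^ ((j : ℕ) - K) * (ζ.choose j : O)) := by
      have h1 := shift_eq_sum_fwdDiff_iter (1 : ℕ)
        (fun z : ℕ => (z.descFactorial i.1 : O) * (A ^ (i.2 : ℕ)) ^ z) ζ 0
      simp only [smul_eq_mul, mul_one, zero_add] at h1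
      rw [h1, Fin.sum_univ_eq_sum_range
        (fun j => D i j * (q ^ (j - K) * (ζ.choose j : O))) Z]
      refine (Finset.sum_subset (Finset.range_subset_range.mpr hZ) ?_).trans ?_
      · intro j _ hj
        rw [mem_range, not_lt] at hj
        rw [Nat.choose_eq_zero_of_lt (by omega), zero_smul]
      · refine Finset.sum_congr rfl fun j _ => ?_
        rw [hD, nsmul_eq_mul]; ring
    have hU : U ^ ((L - 1) * (f c).2 : ℕ) =
        U ^ ((i.2 : ℕ) * (f c).2) * U ^ ((L - 1 - i.2) * (f c).2 : ℕ) := by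
      rw [← pow_add, ← add_mul]; congr 2; have := i.2.2; omega
    have hA2 : (A ^ (i.2 : ℕ)) ^ ζ =
        A ^ ((i.2 : ℕ) * (f c).1) * A ^ (S * ((i.2 : ℕ) * (f c).2)) := by
      rw [← pow_mul, ← pow_add, hζ]; congr 1; ring
    have : ∑ j : Fin Z, D i j * (q ^ ((j : ℕ) - K) * ((ζ.choose j : O) *
        U ^ ((L - 1) * (f c).2 : ℕ))) =
        ((ζ.descFactorial i.1 : ℕ) : O) * (A ^ (i.2 : ℕ)) ^ ζ * U ^ ((L - 1) * (f c).2 : ℕ) := by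
      rw [hN, Finset.sum_mul]
      exact Finset.sum_congr rfl fun j _ => by ring
    rw [this, hU, hA2, mul_pow, ← pow_mul A]
    ring

theorem abs_det_le_factorial_mul_prod {n : Type*} [Fintype n] [DecidableEq n] (M : Matrix n n ℝ)
    (b : n → ℝ) (hb : ∀ i j, |M i j| ≤ b i) :
    |M.det| ≤ (Fintype.card n).factorial * ∏ i, b i := by
  rw [← Matrix.det_transpose, Matrix.det_apply]
  refine (Finset.abs_sum_le_sum_abs _ _).trans ?_
  have : ∀ σ ∈ (univ : Finset (Equiv.Perm n)),
      |Equiv.Perm.sign σ • ∏ i, M.transpose (σ i) i| ≤ ∏ i, b i := by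
    intro σ _
    have h1 : |Equiv.Perm.sign σ • ∏ i, M.transpose (σ i) i| = |∏ i, M.transpose (σ i) i| := by
      rcases Int.units_eq_one_or (Equiv.Perm.sign σ) with h | h <;> simp [h]
    rw [h1, Finset.abs_prod]
    exact Finset.prod_le_prod (fun i _ => abs_nonneg _) fun i _ => hb _ _
  refine (Finset.sum_le_card_nsmul _ _ _ this).trans_eq ?_
  rw [nsmul_eq_mul, Finset.card_univ, Fintype.card_perm]

theorem sum_fin_prod_linear (K L : ℕ) (x y w : ℝ) :
    ∑ i : Fin K × Fin L, ((i.1 : ℕ) * x + (i.2 : ℕ) * y + w) =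
      K * L * ((K - 1) / 2 * x + (L - 1) / 2 * y + w) := by
  have h : ∀ n : ℕ, ∑ i : Fin n, ((i : ℕ) : ℝ) = n * (n - 1) / 2 := by
    intro n
    induction n with
    | zero => simp
    | succ n ih => rw [Fin.sum_univ_castSucc]; simp [ih]; ring
  rw [Fintype.sum_prod_type]
  simp only [Finset.sum_add_distrib, ← Finset.sum_mul, h, Finset.sum_const, Finset.card_univ,
    Fintype.card_fin, nsmul_eq_mul, ← Finset.mul_sum]
  ring

/-- The inequality furnished by a `q`-adic interpolation determinant. -/
theorem interpolation_inequality {O : Type*} [CommRing O] (ι ι' : O →+* ℝ)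
    (hnorm : ∀ x : O, x ≠ 0 → 1 ≤ |ι x| * |ι' x|) (q : ℕ) (hq : 1 ≤ q) (A U V : O)
    (K L R S S₀ m : ℕ) (u : ℝ) (hu : 0 ≤ u)
    (hA : (q : O) ∣ A - 1) (hUV : (q : O) ^ m ∣ V - A ^ S * U) (hA1 : 1 < ι A) (hA' : |ι' A| ≤ 1)
    (hU : |ι U| ≤ Real.exp u) (hU' : |ι' U| ≤ Real.exp u) (hV : |ι V| ≤ Real.exp u)
    (hV' : |ι' V| ≤ Real.exp u) (hU0 : ι U ≠ 0) (hV0 : ι V ≠ 0) (hRS : R ≤ S)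
    (hcard : (K - 1) * L < R * S₀) (hm : K * L ≤ m) (hK : 1 ≤ K) (hL : 1 ≤ L) :
    Real.log q * (K * L - 1 - 2 * K) ≤ 2 * Real.log (K * L) +
      (K - 1) * Real.log (R + L + S₀ * S) + (L - 1) / 2 * (R + L) * Real.log (ι A) +
      2 * (L - 1) * S₀ * u := by
  classical
  obtain ⟨f, hf⟩ := Matrix.exists_submatrix_det_ne_zero _
    (linearIndependent_interpolation K L R S S₀ (ι A) (ι V) (ι U) hA1 hV0 hU0 hRS hcard)
  set M : Matrix (Fin K × Fin L) (Fin K × Fin L) O := Matrix.of fun i j =>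
      (((((f j).1 : ℕ) + (f j).2 * S : ℕ).descFactorial i.1 : ℕ) : O) * A ^ ((i.2 : ℕ) * (f j).1) *
        V ^ ((i.2 : ℕ) * (f j).2) * U ^ ((L - 1 - i.2) * (f j).2 : ℕ) with hM
  have hdvd := pow_dvd_interpolation_det (q : O) A U V K L (R + L) S S₀ m hA hUV hm f
  rw [← hM] at hdvd
  have hne : ι M.det ≠ 0 := by
    rw [RingHom.map_det]
    convert hf using 2
    ext i j
    simp [hM]
  set N := K * L with hN
  set Z : ℝ := R + L + S₀ * S with hZ
  have hZ1 : 1 ≤ Z := by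
    have : (1 : ℝ) ≤ L := by exact_mod_cast hL
    have : (0 : ℝ) ≤ R + S₀ * S := by positivity
    rw [hZ]; linarith
  have hcardN : Fintype.card (Fin K × Fin L) = N := by simp [hN]
  set W : ℝ := Real.exp (u * ((L - 1) * S₀)) with hW
  have hUVpow : ∀ a b : ℝ, |a| ≤ Real.exp u → |b| ≤ Real.exp u → ∀ (l : Fin L) (s : Fin S₀),
      |a| ^ ((l : ℕ) * s) * |b| ^ ((L - 1 - l) * s : ℕ) ≤ W := by
    intro a b ha hb l s
    calc |a| ^ ((l : ℕ) * s) * |b| ^ ((L - 1 - l) * s : ℕ)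
        ≤ Real.exp u ^ ((l : ℕ) * s) * Real.exp u ^ ((L - 1 - l) * s : ℕ) := by gcongr
      _ = Real.exp (u * ((L - 1) * s)) := by
        rw [← pow_add, ← add_mul, ← Real.exp_nat_mul,
          show (l : ℕ) + (L - 1 - l) = L - 1 by have := l.2; omega]
        push_cast [Nat.cast_sub hL]
        congr 1; ring
      _ ≤ W := by
        rw [hW]
        have h1 : (0 : ℝ) ≤ L - 1 := by
          have : (1 : ℝ) ≤ L := by exact_mod_cast hL
          linarith
        have h2 : ((s : ℕ) : ℝ) ≤ S₀ := by exact_mod_cast s.2.le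
        gcongr
  have hdesc : ∀ (i j : Fin K × Fin L),
      (((((f j).1 : ℕ) + (f j).2 * S : ℕ).descFactorial i.1 : ℕ) : ℝ) ≤ Z ^ (i.1 : ℕ) := by
    intro i j
    have h1 : (((f j).1 : ℕ) : ℝ) ≤ R + L := by exact_mod_cast (f j).1.2.le
    have h2 : (((f j).2 : ℕ) : ℝ) ≤ S₀ := by exact_mod_cast (f j).2.2.le
    calc _ ≤ (((((f j).1 : ℕ) + (f j).2 * S : ℕ) ^ (i.1 : ℕ) : ℕ) : ℝ) := by
          exact_mod_cast Nat.descFactorial_le_pow _ _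
      _ ≤ _ := by
        push_cast
        rw [hZ]
        gcongr
  have hrow : ∀ i j, |(M.map ι) i j| ≤ Z ^ (i.1 : ℕ) * (ι A ^ (R + L)) ^ (i.2 : ℕ) * W := by
    intro i j
    simp only [hM, Matrix.map_apply, Matrix.of_apply, map_mul, map_pow, map_natCast, abs_mul,
      abs_pow, Nat.abs_cast]
    rw [mul_assoc (_ * _), abs_of_pos (by linarith : 0 < ι A)]
    have h1 : ι A ^ ((i.2 : ℕ) * (f j).1) ≤ (ι A ^ (R + L)) ^ (i.2 : ℕ) := by
      rw [← pow_mul, mul_comm]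
      exact pow_le_pow_right₀ hA1.le (Nat.mul_le_mul_right _ (f j).1.2.le)
    have h2 := hUVpow _ _ hV hU i.2 (f j).2
    have h3 := hdesc i j
    gcongr
  have hrow' : ∀ i j, |(M.map ι') i j| ≤ Z ^ (i.1 : ℕ) * W := by
    intro i j
    simp only [hM, Matrix.map_apply, Matrix.of_apply, map_mul, map_pow, map_natCast, abs_mul,
      abs_pow, Nat.abs_cast]
    rw [mul_assoc (_ * _)]
    have h1 : |ι' A| ^ ((i.2 : ℕ) * (f j).1) ≤ 1 := pow_le_one₀ (abs_nonneg _) hA'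
    have h2 := hUVpow _ _ hV' hU' i.2 (f j).2
    have h3 := hdesc i j
    calc _ ≤ (Z ^ (i.1 : ℕ) * 1) * W := by gcongr
      _ = _ := by ring
  have hb := abs_det_le_factorial_mul_prod _ _ hrow
  have hb' := abs_det_le_factorial_mul_prod _ _ hrow'
  have hA0 : 0 < ι A := by linarith
  have hW0 : 0 < W := Real.exp_pos _
  have hZ0 : 0 < Z := by linarith
  have hprod : Real.log (∏ i : Fin K × Fin L, Z ^ (i.1 : ℕ) * (ι A ^ (R + L)) ^ (i.2 : ℕ) * W) =
      N * ((K - 1) / 2 * Real.log Z + (L - 1) / 2 * (R + L) * Real.log (ι A) +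
        u * ((L - 1) * S₀)) := by
    have hsum := sum_fin_prod_linear K L (Real.log Z) ((R + L) * Real.log (ι A))
      (u * ((L - 1) * S₀))
    rw [Real.log_prod (fun i _ => by positivity), hN]
    push_cast
    refine Eq.trans (Finset.sum_congr rfl fun i _ => ?_) (hsum.trans (by ring))
    rw [Real.log_mul (by positivity) hW0.ne', Real.log_mul (by positivity) (by positivity), hW,
      Real.log_exp, Real.log_pow, Real.log_pow, Real.log_pow]
    push_cast
    rfl
  have hprod' : Real.log (∏ i : Fin K × Fin L, Z ^ (i.1 : ℕ) * W) =
      N * ((K - 1) / 2 * Real.log Z + u * ((L - 1) * S₀)) := by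
    have hsum := sum_fin_prod_linear K L (Real.log Z) 0 (u * ((L - 1) * S₀))
    rw [Real.log_prod (fun i _ => by positivity), hN]
    push_cast
    refine Eq.trans (Finset.sum_congr rfl fun i _ => ?_) (hsum.trans (by ring))
    rw [Real.log_mul (by positivity) hW0.ne', hW, Real.log_exp, Real.log_pow, mul_zero, add_zero]
  obtain ⟨y, hy⟩ := hdvd
  have hlow : (q : ℝ) ^ (2 * (N * (N - 1) / 2 - N * K)) ≤ |ι M.det| * |ι' M.det| := by
    rw [hy]
    have hy0 : y ≠ 0 := by
      rintro rfl
      rw [hy] at hne; simp at hne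
    have := hnorm y hy0
    simp only [map_mul, map_pow, map_natCast, abs_mul, abs_pow, Nat.abs_cast]
    have h1 : (0 : ℝ) ≤ (q : ℝ) ^ (2 * (N * (N - 1) / 2 - N * K)) := by positivity
    calc _ = (q : ℝ) ^ (2 * (N * (N - 1) / 2 - N * K)) * 1 := by ring
      _ ≤ (q : ℝ) ^ (2 * (N * (N - 1) / 2 - N * K)) * (|ι y| * |ι' y|) := by gcongr
      _ = _ := by rw [two_mul, pow_add]; ring
  have hN1 : 1 ≤ N := Nat.mul_pos hK hL
  have hq1 : (1 : ℝ) ≤ q := by exact_mod_cast hq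
  have hfact : Real.log (N.factorial : ℝ) ≤ N * Real.log N := by
    have h1 : (N.factorial : ℝ) ≤ (N : ℝ) ^ N := by exact_mod_cast Nat.factorial_le_pow N
    calc _ ≤ Real.log ((N : ℝ) ^ N) := Real.log_le_log (by positivity) h1
      _ = _ := Real.log_pow _ _
  rw [hcardN] at hb hb'
  change |(ι.mapMatrix M).det| ≤ _ at hb
  change |(ι'.mapMatrix M).det| ≤ _ at hb'
  rw [← RingHom.map_det] at hb hb'
  have hmain : Real.log ((q : ℝ) ^ (2 * (N * (N - 1) / 2 - N * K))) ≤
      Real.log (N.factorial * ∏ i : Fin K × Fin L, Z ^ (i.1 : ℕ) * (ι A ^ (R + L)) ^ (i.2 : ℕ) * W)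
      + Real.log (N.factorial * ∏ i : Fin K × Fin L, Z ^ (i.1 : ℕ) * W) := by
    rw [← Real.log_mul (by positivity) (by positivity)]
    refine Real.log_le_log (by positivity) (hlow.trans ?_)
    gcongr
  rw [Real.log_mul (by positivity) (by positivity), Real.log_mul (by positivity) (by positivity),
    hprod, hprod', Real.log_pow] at hmain
  have hG : (N : ℝ) * (N - 1 - 2 * K) ≤ ((2 * (N * (N - 1) / 2 - N * K) : ℕ) : ℝ) := by
    have h1 : 2 * (N * (N - 1) / 2) = N * (N - 1) :=
      Nat.mul_div_cancel' (Nat.even_mul_pred_self N).two_dvd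
    have h2 : N * (N - 1) ≤ 2 * (N * (N - 1) / 2 - N * K) + 2 * (N * K) := by omega
    have h3 : (N : ℝ) * (N - 1) ≤ ((2 * (N * (N - 1) / 2 - N * K) : ℕ) : ℝ) + 2 * (N * K) := by
      have := (Nat.cast_le (α := ℝ)).mpr h2
      push_cast [Nat.cast_sub hN1] at this ⊢
      linarith
    linarith
  have hq0 : 0 ≤ Real.log q := Real.log_nonneg hq1
  have hNpos : (0 : ℝ) < N := by exact_mod_cast hN1
  have hKL : ((K : ℝ) * L) = N := by rw [hN]; push_cast; ring
  rw [hKL]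
  refine le_of_mul_le_mul_left ?_ hNpos
  calc (N : ℝ) * (Real.log q * (N - 1 - 2 * K)) = (N : ℝ) * (N - 1 - 2 * K) * Real.log q := by ring
    _ ≤ _ := mul_le_mul_of_nonneg_right hG hq0
    _ ≤ _ := hmain
    _ ≤ _ := by linarith

theorem lucas_eq_pow_add_pow {O : Type*} [CommRing O] (a b : O) (hab : a + b = 1)
    (hm : a * b = -1) (n : ℕ) : (lucas n : O) = a ^ n + b ^ n := by
  have ha : a ^ 2 = a + 1 := by linear_combination a * hab - hm
  have hb : b ^ 2 = b + 1 := by linear_combination b * hab - hm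
  induction n using Nat.twoStepInduction with
  | zero => norm_num [lucas]
  | one => simp [lucas, hab]
  | more n h1 h2 =>
    rw [lucas, Int.cast_add, h1, h2]
    linear_combination (-a ^ n) * ha - b ^ n * hb

theorem log_goldenRatio_lt : Real.log Real.goldenRatio < 0.4814 := by
  have h : Real.goldenRatio ^ 36 < 2 ^ 25 := by
    have h5 : Real.sqrt 5 < 2.23607 := by
      rw [Real.sqrt_lt' (by norm_num)]; norm_num
    calc Real.goldenRatio ^ 36 < 1.618035 ^ 36 := by
          apply pow_lt_pow_left₀ _ Real.goldenRatio_pos.le (by norm_num)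
          rw [Real.goldenRatio]; linarith
      _ < _ := by norm_num
  have h1 := Real.log_lt_log (by have := Real.goldenRatio_pos; positivity) h
  rw [Real.log_pow, Real.log_pow] at h1
  have := Real.log_two_lt_d9
  push_cast at h1
  linarith

theorem log_goldenRatio_gt : 0.4798 < Real.log Real.goldenRatio := by
  have h : 2 ^ 9 < Real.goldenRatio ^ 13 := by
    have h5 : 2.236 < Real.sqrt 5 := by
      rw [Real.lt_sqrt (by norm_num)]; norm_num
    calc (2 : ℝ) ^ 9 < 1.618 ^ 13 := by norm_num
      _ < _ := by
        apply pow_lt_pow_left₀ _ (by norm_num) (by norm_num)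
        rw [Real.goldenRatio]; linarith
  have h1 := Real.log_lt_log (by norm_num) h
  rw [Real.log_pow, Real.log_pow] at h1
  have := Real.log_two_gt_d9
  push_cast at h1
  linarith

/-- The ring of integers of `ℚ(√5)`. -/
abbrev GoldenInt := QuadraticAlgebra ℤ 1 1

namespace GoldenInt

open QuadraticAlgebra Real

/-- The two real embeddings of the golden ring, sending `ω` to a root of `X ^ 2 - X - 1`. -/
noncomputable def toReal (u : ℝ) (hu : u ^ 2 = u + 1) : GoldenInt →+* ℝ :=
  (lift (R := ℤ) (a := 1) (b := 1) ⟨u, by simp [← sq, hu, add_comm]⟩ : GoldenInt →ₐ[ℤ] ℝ)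

theorem toReal_apply (u : ℝ) (hu : u ^ 2 = u + 1) (z : GoldenInt) :
    toReal u hu z = z.re + z.im * u := by
  simp [toReal]

theorem one_le_abs_mul_abs (z : GoldenInt) (hz : z ≠ 0) :
    1 ≤ |toReal goldenRatio goldenRatio_sq z| * |toReal goldenConj goldenConj_sq z| := by
  have hmul : toReal goldenRatio goldenRatio_sq z * toReal goldenConj goldenConj_sq z =
      ((z.re ^ 2 + z.re * z.im - z.im ^ 2 : ℤ) : ℝ) := by
    rw [toReal_apply, toReal_apply]
    push_cast
    linear_combination (z.re * z.im : ℝ) * goldenRatio_add_goldenConj +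
      (z.im ^ 2 : ℝ) * goldenRatio_mul_goldenConj
  have hirr : ∀ u : ℝ, Irrational u → (z.re : ℝ) + z.im * u ≠ 0 := by
    intro u hu h0
    by_cases him : z.im = 0
    · rw [him] at h0
      refine hz (QuadraticAlgebra.ext ?_ him)
      simpa using h0
    · exact (hu.intCast_mul him).intCast_add z.re |>.ne_zero h0
  have hne : (z.re ^ 2 + z.re * z.im - z.im ^ 2 : ℤ) ≠ 0 := by
    intro h0
    rw [h0, Int.cast_zero, toReal_apply, toReal_apply] at hmul
    rcases mul_eq_zero.mp hmul with h | h
    · exact hirr _ goldenRatio_irrational h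
    · exact hirr _ goldenConj_irrational h
  rw [← abs_mul, hmul]
  exact_mod_cast Int.one_le_abs hne

end GoldenInt

/-- The parameters chosen in `lt_of_pow_dvd_lucas_sub` violate the interpolation inequality. -/
theorem interpolation_parameters (D k a b H v : ℝ) (hk : 56 ≤ k) (hD : 2 ≤ D)
    (hDk : 64 * D * k ≤ 2 * a) (hab : a ≤ b) (hlog : Real.log b ≤ k) (hH : 2.19 ≤ H)
    (hv0 : 0 ≤ v) (hv : v ≤ 0.4814) :
    2 * Real.log (512 * D * k * (2 * k)) +
      (512 * D * k - 1) * Real.log (64 * D * k + 2 * k + 16 * k * (2 * a)) +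
      (2 * k - 1) / 2 * (64 * D * k + 2 * k) * (24 * v) +
      2 * (2 * k - 1) * (16 * k) * (24 * D * v) <
    H * (512 * D * k * (2 * k) - 1 - 2 * (512 * D * k)) := by
  have ha : 0 < a := by nlinarith
  have hZ : Real.log (64 * D * k + 2 * k + 16 * k * (2 * a)) ≤ 1.14 * k := by
    have h1 : Real.log (36 * k) ≤ 0.14 * k := by
      have h2 : (36 : ℝ) * k = 2016 * (k / 56) := by ring
      have h3 := Real.log_le_sub_one_of_pos (show (0 : ℝ) < k / 56 by positivity)
      have h4 : Real.log 2016 ≤ Real.log (2 ^ 11) := Real.log_le_log (by norm_num) (by norm_num)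
      rw [Real.log_pow] at h4
      have := Real.log_two_lt_d9
      rw [h2, Real.log_mul (by norm_num) (by positivity)]
      push_cast at h4
      linarith
    have h2 : 0 < b := by linarith
    calc _ ≤ Real.log (36 * k * b) := by
          refine Real.log_le_log (by positivity) ?_
          have h5 : k * a ≤ k * b := by gcongr
          have h6 : 2 * k ≤ 64 * D * k := by nlinarith
          have h7 : a * 56 ≤ a * k := by gcongr
          linarith
      _ = Real.log (36 * k) + Real.log b := Real.log_mul (by positivity) h2.ne'
      _ ≤ _ := by linarith
  have hKL : Real.log (512 * D * k * (2 * k)) ≤ 1.14 * k := by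
    refine le_trans (Real.log_le_log (by positivity) ?_) hZ
    have : (0 : ℝ) ≤ 64 * D * k + 2 * k := by positivity
    have h5 : (16 * k : ℝ) * (64 * D * k) ≤ 16 * k * (2 * a) := by gcongr
    linarith
  set x : ℝ := D * k ^ 2 with hx
  have hkk : D * k * 56 ≤ x := by rw [hx, sq, ← mul_assoc]; gcongr
  have hkk2 : 2 * k ≤ D * k := by gcongr
  have hDkk : D * k * k = x := by rw [hx]; ring
  have t1 : 2.19 * (1024 * x - 1 - 1024 * (D * k)) ≤
      H * (512 * D * k * (2 * k) - 1 - 2 * (512 * D * k)) := by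
    have h1 : 512 * D * k * (2 * k) - 1 - 2 * (512 * D * k) = 1024 * x - 1 - 1024 * (D * k) := by
      rw [hx]; ring
    rw [h1]
    exact mul_le_mul_of_nonneg_right hH (by linarith)
  have t2 : (512 * D * k - 1) * Real.log (64 * D * k + 2 * k + 16 * k * (2 * a)) ≤
      512 * 1.14 * x := by
    calc _ ≤ (512 * D * k - 1) * (1.14 * k) := mul_le_mul_of_nonneg_left hZ (by linarith)
      _ ≤ _ := by rw [hx]; linarith
  have hk2 : 2 * k ^ 2 ≤ x := by rw [hx]; gcongr
  have t3 : (2 * k - 1) / 2 * (64 * D * k + 2 * k) * (24 * v) ≤ 65 * 24 * 0.4814 * x := by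
    have h1 : (2 * k - 1) / 2 * (64 * D * k + 2 * k) ≤ 65 * x := by
      calc _ ≤ (2 * k) / 2 * (64 * D * k + 2 * k) := by gcongr; linarith
        _ = 64 * x + 2 * k ^ 2 := by rw [hx]; ring
        _ ≤ _ := by linarith
    calc _ ≤ (65 * x) * (24 * 0.4814) := by gcongr
      _ = _ := by ring
  have t4 : 2 * (2 * k - 1) * (16 * k) * (24 * D * v) ≤ 64 * 24 * 0.4814 * x := by
    calc _ ≤ (2 * (2 * k) * (16 * k)) * (24 * D * 0.4814) := by gcongr; linarith
      _ = _ := by rw [hx]; ring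
  linarith

open GoldenInt QuadraticAlgebra in
/-- If `p ^ m` divides `L_n - L_{n₁}` (with `p = 2` or `p = 3`), then `m` is bounded in terms of
`n - n₁` and `log n`. -/
theorem lt_of_pow_dvd_lucas_sub (p : ℕ) (hp : p = 2 ∨ p = 3) (n n₁ m k : ℕ) (hn : n₁ < n)
    (h : (p : ℤ) ^ m ∣ lucas n - lucas n₁) (hk : 56 ≤ k) (hlog : Real.log n ≤ k)
    (hk2 : 64 * (n - n₁ + 1) * k ≤ 2 * n₁) : m < 4096 * (n - n₁ + 1) * k ^ 2 + 4 := by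
  obtain ⟨e, he, he4, hA, hlogq⟩ : ∃ e : ℕ, 0 < e ∧ e ≤ 4 ∧
      ((p ^ e : ℕ) : GoldenInt) ∣ ω ^ 24 - 1 ∧ 2.19 ≤ Real.log (p ^ e : ℕ) := by
    have hω : (ω : GoldenInt) ^ 24 - 1 = ⟨28656, 46368⟩ := by
      have h2 : (ω : GoldenInt) ^ 3 = ⟨1, 2⟩ := by ext <;> simp [pow_succ]
      have h3 : (ω : GoldenInt) ^ 6 = ⟨5, 8⟩ := by
        rw [show 6 = 3 * 2 by norm_num, pow_mul, h2]; ext <;> simp [pow_succ]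
      have h4 : (ω : GoldenInt) ^ 12 = ⟨89, 144⟩ := by
        rw [show 12 = 6 * 2 by norm_num, pow_mul, h3]; ext <;> simp [pow_succ]
      rw [show 24 = 12 * 2 by norm_num, pow_mul, h4]; ext <;> simp [pow_succ]
    rcases hp with rfl | rfl
    · refine ⟨4, by norm_num, by norm_num, ⟨⟨1791, 2898⟩, ?_⟩, ?_⟩
      · rw [hω]; ext <;> norm_num [QuadraticAlgebra.re_natCast]
      · rw [Nat.cast_pow, Real.log_pow]; have := Real.log_two_gt_d9; push_cast; linarith
    · refine ⟨2, by norm_num, by norm_num, ⟨⟨3184, 5152⟩, ?_⟩, ?_⟩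
      · rw [hω]; ext <;> norm_num
      · rw [Nat.cast_pow, Real.log_pow]; have := Real.log_three_gt_d9; push_cast; linarith
  by_contra hlt
  rw [not_lt] at hlt
  obtain ⟨d, hd1, rfl⟩ : ∃ d, 1 ≤ d ∧ n = n₁ + d := ⟨n - n₁, by omega, by omega⟩
  rw [Nat.add_sub_cancel_left] at hlt hk2
  set D := d + 1 with hD
  set ψ : GoldenInt := 1 - ω with hψ
  have hωω : (ω : GoldenInt) * ω = ω + 1 := by ext <;> simp
  have hωψ : ω * ψ = -1 := by rw [hψ]; linear_combination -hωω
  have hlucas := lucas_eq_pow_add_pow ω ψ (by rw [hψ]; ring) hωψ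
  have hdvd : ((p ^ e : ℕ) : GoldenInt) ^ (m / e) ∣
      (ψ ^ d - 1) ^ 24 - (ω ^ 24) ^ (2 * n₁) * (ω ^ d - 1) ^ 24 := by
    have h1 : ((p ^ e : ℕ) : GoldenInt) ^ (m / e) ∣ (p : GoldenInt) ^ m := by
      rw [Nat.cast_pow, ← pow_mul]
      exact pow_dvd_pow _ (Nat.mul_div_le m e)
    have h2 : (p : GoldenInt) ^ m ∣ ω ^ (2 * n₁) * (ω ^ d - 1) + (-1) ^ n₁ * (ψ ^ d - 1) := by
      have h3 : (p : GoldenInt) ^ m ∣ (lucas (n₁ + d) : GoldenInt) - lucas n₁ := by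
        have := (Int.castRingHom GoldenInt).map_dvd h
        simpa using this
      rw [hlucas, hlucas] at h3
      have h4 := h3.mul_left (ω ^ n₁)
      have h5 : (ω * ψ) ^ n₁ = (-1) ^ n₁ := by rw [hωψ]
      rw [mul_pow] at h5
      convert h4 using 1
      linear_combination (-(ψ ^ d - 1)) * h5
    have h3 : ω ^ (2 * n₁) * (ω ^ d - 1) + (-1) ^ n₁ * (ψ ^ d - 1) ∣
        (ψ ^ d - 1) ^ 24 - (ω ^ 24) ^ (2 * n₁) * (ω ^ d - 1) ^ 24 := by
      have h4 := sub_dvd_pow_sub_pow (ω ^ (2 * n₁) * (ω ^ d - 1)) (-((-1) ^ n₁ * (ψ ^ d - 1))) 24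
      rw [sub_neg_eq_add] at h4
      rw [← dvd_neg]
      convert h4 using 1
      have h5 : ((-1 : GoldenInt) ^ n₁) ^ 24 = 1 := by
        rw [← pow_mul, mul_comm, pow_mul]; norm_num
      linear_combination (ψ ^ d - 1) ^ 24 * h5
    exact (h1.trans h2).trans h3
  set φ := Real.goldenRatio with hφ
  have hφ1 : 1 < φ := Real.one_lt_goldenRatio
  have hφsq : φ ^ 2 = φ + 1 := Real.goldenRatio_sq
  have hψ1 : |Real.goldenConj| < 1 := by
    rw [abs_lt]; exact ⟨Real.neg_one_lt_goldenConj, by linarith [Real.goldenConj_neg]⟩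
  have hιω : toReal φ Real.goldenRatio_sq ω = φ := by simp [toReal_apply]
  have hιω' : toReal Real.goldenConj Real.goldenConj_sq ω = Real.goldenConj := by
    simp [toReal_apply]
  have hιψ : toReal φ Real.goldenRatio_sq ψ = Real.goldenConj := by
    rw [hψ, map_sub, map_one, hιω, Real.one_sub_goldenConj]
  have hιψ' : toReal Real.goldenConj Real.goldenConj_sq ψ = φ := by
    rw [hψ, map_sub, map_one, hιω', Real.one_sub_goldenRatio]
  have hexp : Real.exp (24 * D * Real.log φ) = (φ ^ D) ^ 24 := by
    rw [show (24 : ℝ) * D * Real.log φ = ((D * 24 : ℕ) : ℝ) * Real.log φ by push_cast; ring,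
      ← Real.log_pow, Real.exp_log (by positivity), pow_mul]
  have hφd : 1 < φ ^ d := one_lt_pow₀ hφ1 (by omega)
  have hb1 : |(φ ^ d - 1) ^ 24| ≤ Real.exp (24 * D * Real.log φ) := by
    rw [hexp, abs_pow, abs_of_pos (by linarith)]
    refine pow_le_pow_left₀ (by linarith) ?_ _
    have : φ ^ d ≤ φ ^ D := pow_le_pow_right₀ hφ1.le (by omega)
    linarith
  have hψd : |Real.goldenConj ^ d| < 1 := by
    rw [abs_pow]; exact pow_lt_one₀ (abs_nonneg _) hψ1 (by omega)
  have hb2 : |(Real.goldenConj ^ d - 1) ^ 24| ≤ Real.exp (24 * D * Real.log φ) := by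
    rw [hexp, abs_pow]
    refine pow_le_pow_left₀ (abs_nonneg _) ?_ _
    have h1 : φ ^ 2 ≤ φ ^ D := pow_le_pow_right₀ hφ1.le (by omega)
    rw [abs_lt] at hψd
    rw [abs_le]
    constructor <;> linarith
  have hM : 512 * D * k * (2 * k) ≤ m / e := by
    rw [Nat.le_div_iff_mul_le he]
    calc 512 * D * k * (2 * k) * e ≤ 512 * D * k * (2 * k) * 4 := by gcongr
      _ ≤ m := by linarith
  have hcard : (512 * D * k - 1) * (2 * k) < 64 * D * k * (16 * k) := by
    have h1 : 0 < 512 * D * k := by positivity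
    calc (512 * D * k - 1) * (2 * k) < 512 * D * k * (2 * k) := by
          apply Nat.mul_lt_mul_of_pos_right <;> omega
      _ = _ := by ring
  have key := interpolation_inequality (toReal φ Real.goldenRatio_sq)
    (toReal Real.goldenConj Real.goldenConj_sq) one_le_abs_mul_abs (p ^ e)
    (Nat.one_le_pow _ _ (by omega)) (ω ^ 24) ((ω ^ d - 1) ^ 24) ((ψ ^ d - 1) ^ 24)
    (512 * D * k) (2 * k) (64 * D * k) (2 * n₁) (16 * k) (m / e) (24 * D * Real.log φ)
    (by have := Real.log_pos hφ1; positivity) hA hdvd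
    (by rw [map_pow, hιω]; exact one_lt_pow₀ hφ1 (by norm_num))
    (by rw [map_pow, hιω', abs_pow]; exact pow_le_one₀ (abs_nonneg _) hψ1.le)
    (by simpa only [map_pow, map_sub, map_one, hιω] using hb1)
    (by simpa only [map_pow, map_sub, map_one, hιω'] using hb2)
    (by simpa only [map_pow, map_sub, map_one, hιψ] using hb2)
    (by simpa only [map_pow, map_sub, map_one, hιψ'] using hb1)
    (by simp only [map_pow, map_sub, map_one, hιω]; exact pow_ne_zero _ (by linarith))
    (by
      simp only [map_pow, map_sub, map_one, hιψ]
      rw [abs_lt] at hψd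
      exact pow_ne_zero _ (by linarith))
    hk2 hcard hM (Nat.mul_pos (by omega) (by omega)) (by omega)
  rw [map_pow, hιω, Real.log_pow] at key
  have hn1 : (n₁ : ℝ) ≤ (n₁ + d : ℕ) := by exact_mod_cast Nat.le_add_right _ _
  have hpar := interpolation_parameters D k n₁ (n₁ + d : ℕ) (Real.log (p ^ e : ℕ)) (Real.log φ)
    (by exact_mod_cast hk) (by exact_mod_cast (by omega : 2 ≤ D)) (by exact_mod_cast hk2) hn1 hlog
    hlogq (Real.log_nonneg hφ1.le) log_goldenRatio_lt.le
  simp only [Nat.cast_mul, Nat.cast_ofNat] at key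
  exact absurd key (not_le.mpr hpar)

end

/-- The quadratic extension `K(r)` of a real field. -/
def quadExt (K : Subfield ℝ) (r : ℝ) (hr : r ^ 2 ∈ K) : Subfield ℝ where
  carrier := {z | ∃ x ∈ K, ∃ y ∈ K, z = x + y * r}
  mul_mem' := by
    rintro _ _ ⟨x, hx, y, hy, rfl⟩ ⟨x', hx', y', hy', rfl⟩
    exact ⟨x * x' + y * y' * r ^ 2, add_mem (mul_mem hx hx') (mul_mem (mul_mem hy hy') hr),
      x * y' + y * x', add_mem (mul_mem hx hy') (mul_mem hy hx'), by ring⟩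
  one_mem' := ⟨1, one_mem _, 0, zero_mem _, by ring⟩
  add_mem' := by
    rintro _ _ ⟨x, hx, y, hy, rfl⟩ ⟨x', hx', y', hy', rfl⟩
    exact ⟨x + x', add_mem hx hx', y + y', add_mem hy hy', by ring⟩
  zero_mem' := ⟨0, zero_mem _, 0, zero_mem _, by ring⟩
  neg_mem' := by
    rintro _ ⟨x, hx, y, hy, rfl⟩
    exact ⟨-x, neg_mem hx, -y, neg_mem hy, by ring⟩
  inv_mem' := by
    rintro _ ⟨x, hx, y, hy, rfl⟩
    by_cases h : x - y * r = 0
    · have h1 : x + y * r = 2 * x := by linarith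
      exact ⟨(2 * x)⁻¹, inv_mem (mul_mem (ofNat_mem _ _) hx), 0, zero_mem _,
        by rw [h1]; ring⟩
    · have hd : x ^ 2 - y ^ 2 * r ^ 2 ∈ K :=
        sub_mem (pow_mem hx 2) (mul_mem (pow_mem hy 2) hr)
      refine ⟨x * (x ^ 2 - y ^ 2 * r ^ 2)⁻¹, mul_mem hx (inv_mem hd),
        -y * (x ^ 2 - y ^ 2 * r ^ 2)⁻¹, mul_mem (neg_mem hy) (inv_mem hd), ?_⟩
      rw [show x ^ 2 - y ^ 2 * r ^ 2 = (x + y * r) * (x - y * r) by ring]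
      by_cases h' : x + y * r = 0
      · simp [h']
      · field_simp
        ring

theorem le_quadExt {K : Subfield ℝ} {r : ℝ} (hr : r ^ 2 ∈ K) {z : ℝ} (hz : z ∈ K) :
    z ∈ quadExt K r hr := ⟨z, hz, 0, zero_mem _, by ring⟩

theorem eq_zero_of_add_mul_eq_zero {K : Subfield ℝ} {r x y : ℝ} (hr : r ∉ K) (hx : x ∈ K)
    (hy : y ∈ K) (h : x + y * r = 0) : x = 0 ∧ y = 0 := by
  have hy0 : y = 0 := by
    by_contra hne
    have : r = -x * y⁻¹ := by field_simp; linarith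
    exact hr (this ▸ mul_mem (neg_mem hx) (inv_mem hy))
  subst hy0
  exact ⟨by simpa using h, rfl⟩

/-- A square root of an element of `K` lying in `K(r)` lies in `K` or in `K r`. -/
theorem mem_or_eq_mul_of_sq_mem {K : Subfield ℝ} {r z : ℝ} {hr : r ^ 2 ∈ K} (hrK : r ∉ K)
    (hz : z ∈ quadExt K r hr) (hz2 : z ^ 2 ∈ K) : z ∈ K ∨ ∃ y ∈ K, z = y * r := by
  obtain ⟨x, hx, y, hy, rfl⟩ := hz
  have h2 : (2 : ℝ) ∈ K := ofNat_mem _ _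
  have h1 := eq_zero_of_add_mul_eq_zero hrK
    (x := x ^ 2 + y ^ 2 * r ^ 2 - (x + y * r) ^ 2) (y := 2 * x * y)
    (sub_mem (add_mem (pow_mem hx 2) (mul_mem (pow_mem hy 2) hr)) hz2)
    (mul_mem (mul_mem h2 hx) hy) (by ring)
  rcases mul_eq_zero.mp h1.2 with h | h
  · right
    have : x = 0 := by simpa using h
    exact ⟨y, hy, by rw [this]; ring⟩
  · left
    rw [h]; simpa using hx

/-- The rational numbers inside the reals. -/
noncomputable abbrev ratReal : Subfield ℝ := (algebraMap ℚ ℝ).fieldRange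

theorem mem_ratReal {x : ℝ} : x ∈ ratReal ↔ ∃ q : ℚ, (q : ℝ) = x := by
  simp [RingHom.mem_fieldRange]

theorem natCast_mem_sq_sqrt (K : Subfield ℝ) (n : ℕ) : √(n : ℝ) ^ 2 ∈ K := by
  rw [Real.sq_sqrt (Nat.cast_nonneg n)]; exact natCast_mem K n

/-- `ℚ(√5)` -/
noncomputable def field5 : Subfield ℝ := quadExt ratReal √(5 : ℕ) (natCast_mem_sq_sqrt _ 5)
/-- `ℚ(√5, √2)` -/
noncomputable def field52 : Subfield ℝ := quadExt field5 √(2 : ℕ) (natCast_mem_sq_sqrt _ 2)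
/-- `ℚ(√5, √2, √3)` -/
noncomputable def field523 : Subfield ℝ := quadExt field52 √(3 : ℕ) (natCast_mem_sq_sqrt _ 3)

theorem sqrt_notMem_ratReal {n : ℕ} (hn : ¬ IsSquare n) : √(n : ℝ) ∉ ratReal := by
  rw [mem_ratReal]
  exact irrational_sqrt_natCast_iff.mpr hn

theorem sqrt_notMem_field5 {n : ℕ} (hn : ¬ IsSquare n) (hn5 : ¬ IsSquare (n * 5)) :
    √(n : ℝ) ∉ field5 := by
  intro h
  have h5 : ¬ IsSquare 5 := by decide +kernel
  rcases mem_or_eq_mul_of_sq_mem (sqrt_notMem_ratReal h5) h (natCast_mem_sq_sqrt _ n) with h | h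
  · exact sqrt_notMem_ratReal hn h
  · obtain ⟨y, hy, h⟩ := h
    refine sqrt_notMem_ratReal hn5 ?_
    rw [Nat.cast_mul, Real.sqrt_mul (Nat.cast_nonneg n), h, mul_assoc, ← sq]
    exact mul_mem hy (natCast_mem_sq_sqrt _ 5)

theorem sqrt_two_notMem : √((2 : ℕ) : ℝ) ∉ field5 :=
  sqrt_notMem_field5 (by decide +kernel) (by decide +kernel)

theorem sqrt_three_notMem : √((3 : ℕ) : ℝ) ∉ field52 := by
  intro h
  rcases mem_or_eq_mul_of_sq_mem sqrt_two_notMem h (natCast_mem_sq_sqrt _ 3) with h | h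
  · exact sqrt_notMem_field5 (by decide +kernel) (by decide +kernel) h
  · obtain ⟨y, hy, h⟩ := h
    refine sqrt_notMem_field5 (n := 3 * 2) (by decide +kernel) (by decide +kernel) ?_
    rw [Nat.cast_mul, Real.sqrt_mul (Nat.cast_nonneg 3), h, mul_assoc, ← sq]
    exact mul_mem hy (natCast_mem_sq_sqrt _ 2)

theorem goldenRatio_mem_field5 : Real.goldenRatio ∈ field5 := by
  refine ⟨((1 / 2 : ℚ) : ℝ), mem_ratReal.mpr ⟨_, rfl⟩, ((1 / 2 : ℚ) : ℝ),
    mem_ratReal.mpr ⟨_, rfl⟩, ?_⟩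
  rw [Real.goldenRatio]; push_cast; ring

theorem natCast_mul_sq_ne_goldenRatio {k : ℕ} {z : ℝ} (hz : z ∈ field5) :
    z ^ 2 * k ≠ Real.goldenRatio := by
  obtain ⟨x, hx, y, hy, rfl⟩ := hz
  intro h
  have h5 : ¬ IsSquare 5 := by decide +kernel
  have hk : (k : ℝ) ∈ ratReal := natCast_mem ratReal k
  have hhalf : (1 / 2 : ℝ) ∈ ratReal := mem_ratReal.mpr ⟨1 / 2, by norm_num⟩
  have hs : √((5 : ℕ) : ℝ) ^ 2 = 5 := by rw [Real.sq_sqrt] <;> norm_num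
  have h2 : (2 : ℝ) ∈ ratReal := ofNat_mem _ _
  have h5m : (5 : ℝ) ∈ ratReal := ofNat_mem _ _
  have h1 := eq_zero_of_add_mul_eq_zero (sqrt_notMem_ratReal h5)
    (x := (x ^ 2 + 5 * y ^ 2) * k - 1 / 2) (y := 2 * x * y * k - 1 / 2)
    (sub_mem (mul_mem (add_mem (pow_mem hx 2) (mul_mem h5m (pow_mem hy 2))) hk) hhalf)
    (sub_mem (mul_mem (mul_mem (mul_mem h2 hx) hy) hk) hhalf) (by
      rw [Real.goldenRatio] at h
      push_cast at h hs ⊢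
      linear_combination h - (y ^ 2 * k) * hs)
  have e1 : (x ^ 2 + 5 * y ^ 2) * k = 1 / 2 := by linarith [h1.1]
  have e2 : 2 * x * y * k = 1 / 2 := by linarith [h1.2]
  have : ((x ^ 2 - 5 * y ^ 2) * k) ^ 2 = -1 := by
    linear_combination ((x ^ 2 + 5 * y ^ 2) * k + 1 / 2) * e1 - 5 * (2 * x * y * k + 1 / 2) * e2
  nlinarith [sq_nonneg ((x ^ 2 - 5 * y ^ 2) * k)]

theorem sqrt_goldenRatio_notMem : √Real.goldenRatio ∉ field523 := by
  have key : ∀ (k : ℕ) (z : ℝ), z ^ 2 * k = Real.goldenRatio → 0 < k → z ∉ field52 := by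
    intro k z hz hk h
    have hz2 : z ^ 2 ∈ field5 := by
      have : z ^ 2 = Real.goldenRatio * (k : ℝ)⁻¹ := by
        rw [← hz]; field_simp
      rw [this]
      exact mul_mem goldenRatio_mem_field5 (inv_mem (natCast_mem field5 k))
    rcases mem_or_eq_mul_of_sq_mem sqrt_two_notMem h hz2 with h | ⟨y, hy, h⟩
    · exact natCast_mul_sq_ne_goldenRatio h hz
    · refine natCast_mul_sq_ne_goldenRatio (k := 2 * k) hy ?_
      rw [← hz, h, mul_pow, Real.sq_sqrt (by positivity)]
      push_cast; ring
  intro h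
  have h0 : √Real.goldenRatio ^ 2 = Real.goldenRatio := Real.sq_sqrt Real.goldenRatio_pos.le
  rcases mem_or_eq_mul_of_sq_mem sqrt_three_notMem h
    (by rw [h0]; exact le_quadExt _ goldenRatio_mem_field5) with h | ⟨y, hy, h⟩
  · exact key 1 _ (by rw [h0]; simp) one_pos h
  · refine key 3 y ?_ (by norm_num) hy
    rw [← h0, h, mul_pow, Real.sq_sqrt (by positivity)]

/-- Kummer independence of the square roots of `2`, `3` and the golden ratio over `ℚ(√5)`. -/
theorem kummer_independence (C : Fin 2 → Fin 2 → Fin 2 → ℝ) (hC : ∀ i j k, C i j k ∈ field5)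
    (h : ∑ i, ∑ j, ∑ k, C i j k * (√2 ^ (i : ℕ) * √3 ^ (j : ℕ) * √Real.goldenRatio ^ (k : ℕ)) = 0)
    (i j k : Fin 2) : C i j k = 0 := by
  have h2 : √(2 : ℝ) = √((2 : ℕ) : ℝ) := by norm_num
  have h3 : √(3 : ℝ) = √((3 : ℕ) : ℝ) := by norm_num
  rw [h2, h3] at h
  have hmem : ∀ j k, (C 0 j k + C 1 j k * √((2 : ℕ) : ℝ)) ∈ field52 := fun j k =>
    ⟨_, hC _ _ _, _, hC _ _ _, rfl⟩
  have hmem2 : ∀ k, (C 0 0 k + C 1 0 k * √((2 : ℕ) : ℝ)) +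
      (C 0 1 k + C 1 1 k * √((2 : ℕ) : ℝ)) * √((3 : ℕ) : ℝ) ∈ field523 := fun k =>
    ⟨_, hmem _ _, _, hmem _ _, rfl⟩
  have e := eq_zero_of_add_mul_eq_zero sqrt_goldenRatio_notMem (hmem2 0) (hmem2 1) (by
    rw [← h]
    simp only [Fin.sum_univ_two, Fin.isValue, Fin.val_zero, Fin.val_one, pow_zero, pow_one]
    ring)
  have e0 := eq_zero_of_add_mul_eq_zero sqrt_three_notMem (hmem _ _) (hmem _ _) e.1
  have e1 := eq_zero_of_add_mul_eq_zero sqrt_three_notMem (hmem _ _) (hmem _ _) e.2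
  have f1 := eq_zero_of_add_mul_eq_zero sqrt_two_notMem (hC _ _ _) (hC _ _ _) e0.1
  have f2 := eq_zero_of_add_mul_eq_zero sqrt_two_notMem (hC _ _ _) (hC _ _ _) e0.2
  have f3 := eq_zero_of_add_mul_eq_zero sqrt_two_notMem (hC _ _ _) (hC _ _ _) e1.1
  have f4 := eq_zero_of_add_mul_eq_zero sqrt_two_notMem (hC _ _ _) (hC _ _ _) e1.2
  fin_cases i <;> fin_cases j <;> fin_cases k <;> simp [f1, f2, f3, f4]

open IntermediateField in
/-- The Liouville inequality for integral combinations of monomials in `√2`, `√3`, `√φ`. -/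
theorem one_le_abs_mul_pow {I : Type*} (s : Finset I) (q : I → ℤ) (k₂ k₃ k : I → ℕ) (M : ℝ)
    (hM : ∑ i ∈ s, |(q i : ℝ)| * (√2 ^ k₂ i * √3 ^ k₃ i * √Real.goldenRatio ^ k i) ≤ M)
    (hM1 : 1 ≤ M)
    (h0 : ∑ i ∈ s, (q i : ℝ) * (√2 ^ k₂ i * √3 ^ k₃ i * √Real.goldenRatio ^ k i) ≠ 0) :
    1 ≤ |∑ i ∈ s, (q i : ℝ) * (√2 ^ k₂ i * √3 ^ k₃ i * √Real.goldenRatio ^ k i)| * M ^ 15 := by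
  set φ := Real.goldenRatio with hφ
  have hφ0 : 0 < φ := Real.goldenRatio_pos
  have s2 : √(2 : ℝ) ^ 2 = 2 := Real.sq_sqrt (by norm_num)
  have s3 : √(3 : ℝ) ^ 2 = 3 := Real.sq_sqrt (by norm_num)
  have sφ : √φ ^ 2 = φ := Real.sq_sqrt hφ0.le
  have sφ4 : √φ ^ 4 = √φ ^ 2 + 1 := by
    rw [show √φ ^ 4 = (√φ ^ 2) ^ 2 by ring, sφ, hφ, Real.goldenRatio_sq]
  have i2 : IsIntegral ℤ √(2 : ℝ) :=
    ⟨Polynomial.X ^ 2 - Polynomial.C 2, by monicity!, by simp⟩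
  have i3 : IsIntegral ℤ √(3 : ℝ) :=
    ⟨Polynomial.X ^ 2 - Polynomial.C 3, by monicity!, by simp⟩
  have iφ : IsIntegral ℤ √φ :=
    ⟨Polynomial.X ^ 4 - Polynomial.X ^ 2 - 1, by monicity!, by simp [sφ4]⟩
  have d2 : Module.finrank ℚ ℚ⟮√(2 : ℝ)⟯ ≤ 2 := by
    rw [adjoin.finrank i2.tower_top]
    refine (Polynomial.natDegree_le_of_dvd (minpoly.dvd ℚ _
      (p := Polynomial.X ^ 2 - Polynomial.C 2) (by simp)) ?_).trans (by compute_degree!)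
    exact Polynomial.X_pow_sub_C_ne_zero (by norm_num) _
  have d3 : Module.finrank ℚ ℚ⟮√(3 : ℝ)⟯ ≤ 2 := by
    rw [adjoin.finrank i3.tower_top]
    refine (Polynomial.natDegree_le_of_dvd (minpoly.dvd ℚ _
      (p := Polynomial.X ^ 2 - Polynomial.C 3) (by simp)) ?_).trans (by compute_degree!)
    exact Polynomial.X_pow_sub_C_ne_zero (by norm_num) _
  have dφ : Module.finrank ℚ ℚ⟮√φ⟯ ≤ 4 := by
    rw [adjoin.finrank iφ.tower_top]
    refine (Polynomial.natDegree_le_of_dvd (minpoly.dvd ℚ _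
      (p := Polynomial.X ^ 4 - Polynomial.X ^ 2 - 1) (by simp [sφ4])) ?_).trans (by compute_degree!)
    have : (Polynomial.X ^ 4 - Polynomial.X ^ 2 - 1 : Polynomial ℚ).Monic := by monicity!
    exact this.ne_zero
  have : FiniteDimensional ℚ ℚ⟮√(2 : ℝ)⟯ := adjoin.finiteDimensional i2.tower_top
  have : FiniteDimensional ℚ ℚ⟮√(3 : ℝ)⟯ := adjoin.finiteDimensional i3.tower_top
  have : FiniteDimensional ℚ ℚ⟮√φ⟯ := adjoin.finiteDimensional iφ.tower_top
  set E := ℚ⟮√(2 : ℝ)⟯ ⊔ ℚ⟮√(3 : ℝ)⟯ ⊔ ℚ⟮√φ⟯ with hE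
  have hfin : FiniteDimensional ℚ E := by rw [hE]; infer_instance
  have hrank : Module.finrank ℚ E ≤ 16 := by
    calc _ ≤ Module.finrank ℚ (ℚ⟮√(2 : ℝ)⟯ ⊔ ℚ⟮√(3 : ℝ)⟯ : IntermediateField ℚ ℝ) *
        Module.finrank ℚ ℚ⟮√φ⟯ := finrank_sup_le _ _
      _ ≤ (Module.finrank ℚ ℚ⟮√(2 : ℝ)⟯ * Module.finrank ℚ ℚ⟮√(3 : ℝ)⟯) * 4 := by
        gcongr
        exact finrank_sup_le _ _
      _ ≤ (2 * 2) * 4 := by gcongr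
      _ = 16 := by norm_num
  have m2 : √(2 : ℝ) ∈ E := le_sup_left.trans le_sup_left (a := ℚ⟮√(2 : ℝ)⟯)
    (mem_adjoin_simple_self ℚ _)
  have m3 : √(3 : ℝ) ∈ E := le_sup_right.trans le_sup_left (a := ℚ⟮√(3 : ℝ)⟯)
    (mem_adjoin_simple_self ℚ _)
  have mφ : √φ ∈ E := (le_sup_right : ℚ⟮√φ⟯ ≤ E) (mem_adjoin_simple_self ℚ _)
  set x : E := ∑ i ∈ s, (q i : E) * ((⟨_, m2⟩ : E) ^ k₂ i * (⟨_, m3⟩ : E) ^ k₃ i *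
    (⟨_, mφ⟩ : E) ^ k i) with hx
  have hxval : (x : ℝ) = ∑ i ∈ s, (q i : ℝ) * (√2 ^ k₂ i * √3 ^ k₃ i * √φ ^ k i) := by
    rw [hx]
    push_cast
    rfl
  have hx0 : x ≠ 0 := by
    intro h
    rw [h] at hxval
    exact h0 hxval.symm
  have hxint : IsIntegral ℤ x := by
    have h1 : IsIntegral ℤ (x : ℝ) := by
      rw [hxval]
      exact IsIntegral.sum _ fun i _ => (isIntegral_algebraMap (R := ℤ) (x := q i)).mul
        (((i2.pow _).mul (i3.pow _)).mul (iφ.pow _))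
    exact (isIntegral_algebraMap_iff (algebraMap E ℝ).injective).mp h1
  obtain ⟨z, hz⟩ := IsIntegrallyClosed.isIntegral_iff.mp (Algebra.isIntegral_norm ℚ hxint)
  have hz0 : z ≠ 0 := by
    rintro rfl
    exact (Algebra.norm_ne_zero_iff.mpr hx0) (by rw [← hz]; simp)
  have hbound : ∀ σ : E →ₐ[ℚ] ℂ, ‖σ x‖ ≤ M := by
    intro σ
    have b2 : ‖σ ⟨_, m2⟩‖ = √2 := by
      have : (σ ⟨_, m2⟩) ^ 2 = 2 := by
        rw [← map_pow, show (⟨√2, m2⟩ : E) ^ 2 = 2 from Subtype.ext s2, map_ofNat]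
      have h := congrArg norm this
      rw [norm_pow, Complex.norm_ofNat] at h
      have h' := Real.sqrt_sq (norm_nonneg (σ ⟨√2, m2⟩))
      rw [h] at h'
      exact h'.symm
    have b3 : ‖σ ⟨_, m3⟩‖ = √3 := by
      have : (σ ⟨_, m3⟩) ^ 2 = 3 := by
        rw [← map_pow, show (⟨√3, m3⟩ : E) ^ 2 = 3 from Subtype.ext s3, map_ofNat]
      have h := congrArg norm this
      rw [norm_pow, Complex.norm_ofNat] at h
      have h' := Real.sqrt_sq (norm_nonneg (σ ⟨√3, m3⟩))
      rw [h] at h'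
      exact h'.symm
    have bφ : ‖σ ⟨_, mφ⟩‖ ≤ √φ := by
      set w := σ ⟨_, mφ⟩ with hw
      have h1 : w ^ 4 = w ^ 2 + 1 := by
        rw [hw, ← map_pow, ← map_pow, show (⟨√φ, mφ⟩ : E) ^ 4 = ⟨√φ, mφ⟩ ^ 2 + 1 from
          Subtype.ext sφ4, map_add, map_one]
      have h2 : (w ^ 2 - (φ : ℂ)) * (w ^ 2 - (Real.goldenConj : ℂ)) = 0 := by
        have e1 : (φ : ℂ) + Real.goldenConj = 1 := by
          exact_mod_cast Real.goldenRatio_add_goldenConj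
        have e2 : (φ : ℂ) * Real.goldenConj = -1 := by
          exact_mod_cast Real.goldenRatio_mul_goldenConj
        linear_combination h1 - w ^ 2 * e1 + e2
      have h3 : ‖w‖ ^ 2 ≤ φ := by
        rw [← norm_pow]
        rcases mul_eq_zero.mp h2 with h | h
        · rw [sub_eq_zero.mp h, Complex.norm_real, Real.norm_of_nonneg hφ0.le]
        · rw [sub_eq_zero.mp h, Complex.norm_real, Real.norm_eq_abs, abs_le]
          have := Real.neg_one_lt_goldenConj
          have := Real.goldenConj_neg
          have := Real.one_lt_goldenRatio
          constructor <;> linarith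
      exact Real.le_sqrt_of_sq_le h3
    rw [hx, map_sum]
    refine (norm_sum_le _ _).trans (le_trans (Finset.sum_le_sum fun i _ => ?_) hM)
    rw [map_mul, map_mul, map_mul, map_pow, map_pow, map_pow, map_intCast, norm_mul, norm_mul,
      norm_mul, norm_pow, norm_pow, norm_pow, b2, b3, Complex.norm_intCast]
    gcongr
  have hnorm := Algebra.norm_eq_prod_embeddings ℚ ℂ x
  let σ₀ : E →ₐ[ℚ] ℂ := (Complex.ofRealAm.restrictScalars ℚ).comp E.val
  have hσ₀ : ‖σ₀ x‖ = |(x : ℝ)| := by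
    change ‖((x : ℝ) : ℂ)‖ = |(x : ℝ)|
    rw [Complex.norm_real, Real.norm_eq_abs]
  classical
  have hcard : (Finset.univ.erase σ₀).card ≤ 15 := by
    rw [Finset.card_erase_of_mem (Finset.mem_univ _), Finset.card_univ, AlgHom.card]
    omega
  rw [← Finset.mul_prod_erase _ _ (Finset.mem_univ σ₀)] at hnorm
  rw [← hxval]
  calc (1 : ℝ) ≤ |(z : ℝ)| := by exact_mod_cast Int.one_le_abs hz0
    _ = ‖(algebraMap ℚ ℂ) (Algebra.norm ℚ x)‖ := by rw [← hz]; simp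
    _ = ‖σ₀ x‖ * ∏ σ ∈ Finset.univ.erase σ₀, ‖σ x‖ := by rw [hnorm, norm_mul, norm_prod]
    _ ≤ ‖σ₀ x‖ * M ^ 15 := by
      gcongr
      calc _ ≤ ∏ _σ ∈ Finset.univ.erase σ₀, M :=
            Finset.prod_le_prod (fun _ _ => norm_nonneg _) fun σ _ => hbound σ
        _ ≤ _ := by rw [Finset.prod_const]; exact pow_le_pow_right₀ hM1 hcard
    _ = _ := by rw [hσ₀]

open Filter Topology in
theorem exists_eq_pow_mul_of_le_analyticOrderAt (s : ℂ) (τ : ℕ) {g : ℂ → ℂ}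
    (hg : Differentiable ℂ g) (h : (τ : ℕ∞) ≤ analyticOrderAt g s) :
    ∃ h : ℂ → ℂ, Differentiable ℂ h ∧ ∀ z, g z = (z - s) ^ τ * h z := by
  induction τ generalizing g with
  | zero => exact ⟨g, hg, by simp⟩
  | succ τ ih =>
    have hs : g s = 0 := by
      by_contra hne
      rw [analyticOrderAt_eq_zero.mpr (.inr hne)] at h
      simp at h
    have hd : Differentiable ℂ (dslope g s) := by
      rw [← differentiableOn_univ, Complex.differentiableOn_dslope univ_mem]
      exact hg.differentiableOn
    have heq : g = (fun z => z - s) * dslope g s := by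
      ext z
      have := sub_smul_dslope g s z
      rw [hs, sub_zero, smul_eq_mul] at this
      exact this.symm
    have h1 : analyticOrderAt (fun z => z - s) s = 1 := by
      exact (analyticAt_id (𝕜 := ℂ) (z := s)).analyticOrderAt_sub_eq_one_of_deriv_ne_zero
        (by simp)
    have hord : (τ : ℕ∞) ≤ analyticOrderAt (dslope g s) s := by
      rw [heq, analyticOrderAt_mul (by fun_prop) (hd.analyticAt s), h1, add_comm] at h
      push_cast at h
      exact (ENat.add_le_add_iff_left (by simp)).mp h
    obtain ⟨k, hk, hkeq⟩ := ih hd hord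
    refine ⟨k, hk, fun z => ?_⟩
    rw [congrFun heq z, Pi.mul_apply, hkeq z]
    ring

theorem exists_eq_prod_pow_mul {I : Type*} [DecidableEq I] (N : Finset I) (p : I → ℂ)
    (hp : Set.InjOn p N) (τ : ℕ) {g : ℂ → ℂ}
    (hg : Differentiable ℂ g) (h : ∀ i ∈ N, (τ : ℕ∞) ≤ analyticOrderAt g (p i)) :
    ∃ h : ℂ → ℂ, Differentiable ℂ h ∧ ∀ z, g z = (∏ i ∈ N, (z - p i) ^ τ) * h z := by
  induction N using Finset.induction_on generalizing g with
  | empty => exact ⟨g, hg, by simp⟩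
  | insert a N ha ih =>
    obtain ⟨k, hk, hkeq⟩ := exists_eq_pow_mul_of_le_analyticOrderAt (p a) τ hg
      (h a (Finset.mem_insert_self _ _))
    obtain ⟨k', hk', hkeq'⟩ := ih (hp.mono (by simp)) hk fun i hi => by
      have hne : p i ≠ p a := fun he => ha (by
        rwa [← hp (Finset.mem_insert_of_mem hi) (Finset.mem_insert_self _ _) he])
      have h0 : analyticOrderAt (fun z => (z - p a) ^ τ) (p i) = 0 :=
        analyticOrderAt_eq_zero.mpr (.inr (pow_ne_zero _ (sub_ne_zero.mpr hne)))
      have := h i (Finset.mem_insert_of_mem hi)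
      rwa [show g = (fun z => (z - p a) ^ τ) * k from funext hkeq,
        analyticOrderAt_mul (by fun_prop) (hk.analyticAt _), h0, zero_add] at this
    refine ⟨k', hk', fun z => ?_⟩
    rw [hkeq z, hkeq' z, Finset.prod_insert ha]
    ring

theorem prod_erase_abs_sub (i m : ℕ) :
    ∏ k ∈ (Finset.range (i + 1 + m)).erase i, |(i : ℝ) - k| = i.factorial * m.factorial := by
  induction m with
  | zero =>
    rw [add_zero, Finset.range_add_one, Finset.erase_insert (by simp)]
    rw [← Finset.prod_range_reflect, ← Finset.prod_range_add_one_eq_factorial]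
    push_cast
    rw [Nat.factorial_zero, Nat.cast_one, mul_one]
    refine Finset.prod_congr rfl fun k hk => ?_
    have hk := Finset.mem_range.mp hk
    have : ((i - 1 - k : ℕ) : ℝ) = i - 1 - k := by
      rw [Nat.cast_sub (by omega), Nat.cast_sub (by omega)]; simp
    rw [this, abs_of_nonneg] <;> [ring; skip]
    ring_nf
    positivity
  | succ m ih =>
    rw [← add_assoc, Finset.range_add_one, Finset.erase_insert_of_ne (by omega),
      Finset.prod_insert (by simp), ih, Nat.factorial_succ]
    push_cast
    rw [abs_of_nonpos (by linarith)]
    ring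

theorem factorial_le_prod_erase (S i : ℕ) (hi : i < S) :
    ((S - 1).factorial : ℝ) ≤ ∏ k ∈ (Finset.range S).erase i, |2 * ((i : ℝ) - k)| := by
  obtain ⟨m, rfl⟩ := Nat.exists_eq_add_of_le (Nat.succ_le_of_lt hi)
  simp_rw [abs_mul]
  rw [Finset.prod_mul_distrib, Finset.prod_const, Nat.succ_eq_add_one, prod_erase_abs_sub,
    Finset.card_erase_of_mem (Finset.mem_range.mpr (by omega)), Finset.card_range, abs_two,
    show i + 1 + m - 1 = i + m by omega]
  have h1 := Nat.add_choose_mul_factorial_mul_factorial i m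
  have h2 := Nat.choose_le_two_pow (i + m) m
  rw [← h1]
  push_cast
  rw [mul_assoc]
  gcongr
  exact_mod_cast h2

open Filter Topology Finset in
theorem exists_hermite_piece {f : ℂ → ℂ} (hf : Differentiable ℂ f) (S τ i : ℕ) (hi : i < S)
    (ε : ℝ) (hε0 : 0 ≤ ε) (hε : ∀ j < τ, ‖iteratedDeriv j f (2 * i + 1)‖ ≤ ε) :
    ∃ H : ℂ → ℂ, Differentiable ℂ H ∧ (τ : ℕ∞) ≤ analyticOrderAt (f - H) (2 * i + 1) ∧
      (∀ k < S, k ≠ i → (τ : ℕ∞) ≤ analyticOrderAt H (2 * k + 1)) ∧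
      ∀ z : ℂ, (∀ k : ℕ, k < S → ‖z - (2 * k + 1)‖ ≤ 21 * S) →
        ‖H z‖ ≤ τ ^ 2 * ε * ((42 * S) ^ S / (S - 1).factorial) ^ τ := by
  have hS : (1 : ℝ) ≤ S := by exact_mod_cast (by omega : 1 ≤ S)
  set s : ℂ := 2 * i + 1 with hs
  set N := (range S).erase i with hN
  set Q : ℂ → ℂ := fun z => ∏ k ∈ N, ((z - (2 * k + 1)) / (2 * (i - k))) ^ τ with hQ
  have hNmem : ∀ k ∈ N, k < S ∧ k ≠ i := fun k hk => by
    rw [hN, mem_erase, mem_range] at hk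
    exact ⟨hk.2, hk.1⟩
  have hcard : N.card = S - 1 := by
    rw [hN, card_erase_of_mem (mem_range.mpr hi), card_range]
  have hdiff : ∀ k ∈ N, (1 : ℝ) ≤ |(i : ℝ) - k| := fun k hk => by
    have : (1 : ℤ) ≤ |(i : ℤ) - k| := Int.one_le_abs (by have := (hNmem k hk).2; omega)
    exact_mod_cast this
  have hnorm : ∀ k : ℕ, ‖(2 * ((i : ℂ) - k))‖ = 2 * |(i : ℝ) - k| := fun k => by
    rw [norm_mul, Complex.norm_ofNat]
    congr 1
    rw [← Real.norm_eq_abs, ← Complex.norm_real]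
    push_cast
    rfl
  have hQd : Differentiable ℂ Q := by
    rw [hQ]
    fun_prop
  -- `Q` is bounded below on the closed unit disc about `s`
  have hlow : ∀ z ∈ Metric.closedBall s 1, ((1 / 2 : ℝ) ^ τ) ^ S ≤ ‖Q z‖ := by
    intro z hz
    rw [mem_closedBall_iff_norm] at hz
    rw [hQ]
    simp only [norm_prod, norm_pow]
    calc ((1 / 2 : ℝ) ^ τ) ^ S ≤ ((1 / 2 : ℝ) ^ τ) ^ N.card :=
          pow_le_pow_of_le_one (by positivity) (pow_le_one₀ (by norm_num) (by norm_num))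
            (by omega)
      _ = ∏ _k ∈ N, (1 / 2 : ℝ) ^ τ := by rw [prod_const]
      _ ≤ _ := by
        refine prod_le_prod (fun _ _ => by positivity) fun k hk => ?_
        gcongr
        rw [norm_div, hnorm]
        have h1 := hdiff k hk
        rw [le_div_iff₀ (by positivity)]
        have h2 : ‖(2 * ((i : ℂ) - k))‖ ≤ ‖z - (2 * k + 1)‖ + ‖z - s‖ := by
          rw [show (2 * ((i : ℂ) - k)) = (z - (2 * k + 1)) - (z - s) by rw [hs]; ring]
          exact norm_sub_le _ _
        rw [hnorm] at h2
        linarith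
  have hne : ∀ z ∈ Metric.closedBall s 1, Q z ≠ 0 := fun z hz h0 => by
    have := hlow z hz
    rw [h0, norm_zero] at this
    have : (0 : ℝ) < ((1 / 2 : ℝ) ^ τ) ^ S := by positivity
    linarith
  have hss : s ∈ Metric.closedBall s 1 := Metric.mem_closedBall_self (by norm_num)
  have hQinv : AnalyticAt ℂ Q⁻¹ s := (hQd.analyticAt s).inv (hne s hss)
  have hcauchy : ∀ j, ‖iteratedDeriv j Q⁻¹ s‖ ≤ j.factorial * (2 ^ τ) ^ S := by
    intro j
    have := Complex.norm_iteratedDeriv_le_of_forall_mem_sphere_norm_le (c := s) (R := 1)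
      (C := (2 ^ τ) ^ S) (f := Q⁻¹) j one_pos ?_ ?_
    · simpa using this
    · refine DifferentiableOn.diffContOnCl ?_
      rw [closure_ball _ one_ne_zero]
      exact hQd.differentiableOn.inv hne
    · intro z hz
      have h1 := hlow z (Metric.sphere_subset_closedBall hz)
      rw [Pi.inv_apply, norm_inv]
      refine (inv_anti₀ (by positivity) h1).trans (le_of_eq ?_)
      simp
  set u : ℂ → ℂ := f * Q⁻¹ with hu
  have hua : AnalyticAt ℂ u s := (hf.analyticAt s).mul hQinv
  have hcoef : ∀ j < τ, ‖iteratedDeriv j u s / j.factorial‖ ≤ τ * (ε * (2 ^ τ) ^ S) := by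
    intro j hj
    rw [hu, iteratedDeriv_mul hf.contDiff.contDiffAt hQinv.contDiffAt, norm_div,
      Complex.norm_natCast, div_le_iff₀ (by positivity)]
    have hterm : ∀ a ∈ range (j + 1), ‖(j.choose a : ℂ) * iteratedDeriv a f s *
        iteratedDeriv (j - a) Q⁻¹ s‖ ≤ ε * (2 ^ τ) ^ S * j.factorial := by
      intro a ha
      have ha : a ≤ j := by simpa [Nat.lt_succ_iff] using ha
      rw [norm_mul, norm_mul, Complex.norm_natCast]
      have h1 : (j.choose a * (j - a).factorial : ℝ) ≤ j.factorial := by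
        rw [← Nat.choose_mul_factorial_mul_factorial ha]
        exact_mod_cast Nat.mul_le_mul_right _ (Nat.le_mul_of_pos_right _ a.factorial_pos)
      calc (j.choose a : ℝ) * ‖iteratedDeriv a f s‖ * ‖iteratedDeriv (j - a) Q⁻¹ s‖
          ≤ j.choose a * ε * ((j - a).factorial * (2 ^ τ) ^ S) := by
            gcongr
            · exact hε a (by omega)
            · exact hcauchy _
        _ = ε * (2 ^ τ) ^ S * (j.choose a * (j - a).factorial) := by ring
        _ ≤ _ := by gcongr
    calc _ ≤ ∑ a ∈ range (j + 1), ε * (2 ^ τ) ^ S * j.factorial :=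
          norm_sum_le_of_le _ hterm
      _ = (j + 1 : ℕ) * (ε * (2 ^ τ) ^ S) * j.factorial := by
          rw [sum_const, card_range, nsmul_eq_mul]; ring
      _ ≤ _ := by gcongr; omega
  set R : ℂ → ℂ := fun z => ∑ j ∈ range τ, (iteratedDeriv j u s / j.factorial) * (z - s) ^ j
    with hR
  have hRd : Differentiable ℂ R := by
    rw [hR]
    fun_prop
  have hRprod : Differentiable ℂ (Q * R) := hQd.mul hRd
  refine ⟨Q * R, hRprod, ?_, ?_, ?_⟩
  · -- Taylor expansion of `u` at `s`
    have hu0 : AnalyticAt ℂ (fun w => u (w + s)) 0 := by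
      refine AnalyticAt.fun_comp (g := u) (by simpa using hua) (by fun_prop)
    obtain ⟨F, hF, hFeq⟩ := hu0.exists_eventuallyEq_sum_add_pow_mul τ
    have hD : ∀ j, iteratedDeriv j (fun w => u (w + s)) 0 = iteratedDeriv j u s := fun j => by
      rw [iteratedDeriv_comp_add_const]; simp
    rw [natCast_le_analyticOrderAt ((hf.sub hRprod).analyticAt s)]
    refine ⟨fun z => Q z * F (z - s), ?_, ?_⟩
    · refine (hQd.analyticAt s).mul (AnalyticAt.fun_comp (g := F) (by simpa using hF) (by fun_prop))
    · have ht : Tendsto (fun z => z - s) (𝓝 s) (𝓝 0) := by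
        have : ContinuousAt (fun z : ℂ => z - s) s := by fun_prop
        simpa using this.tendsto
      have hQne : ∀ᶠ z in 𝓝 s, Q z ≠ 0 :=
        hQd.continuous.continuousAt.eventually_ne (hne s hss)
      filter_upwards [ht.eventually hFeq, hQne] with z hz hz0
      simp only [sub_add_cancel, hD] at hz
      have hfz : f z = Q z * u z := by
        rw [hu, Pi.mul_apply, Pi.inv_apply]
        field_simp
      rw [Pi.sub_apply, Pi.mul_apply, hfz, hz, hR]
      simp only [smul_eq_mul]
      rw [show ∑ j ∈ range τ, (z - s) ^ j / j.factorial * iteratedDeriv j u s =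
        ∑ j ∈ range τ, (iteratedDeriv j u s / j.factorial) * (z - s) ^ j from
        sum_congr rfl fun j _ => by ring]
      ring
  · intro k hk hki
    have hkN : k ∈ N := by rw [hN, mem_erase, mem_range]; exact ⟨hki, hk⟩
    rw [natCast_le_analyticOrderAt (hRprod.analyticAt _)]
    refine ⟨fun z => (2 * ((i : ℂ) - k))⁻¹ ^ τ * (∏ l ∈ N.erase k,
      ((z - (2 * l + 1)) / (2 * (i - l))) ^ τ) * R z, ?_, Eventually.of_forall fun z => ?_⟩
    · refine Differentiable.analyticAt ?_ _
      fun_prop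
    · rw [Pi.mul_apply, hQ]
      simp only [smul_eq_mul]
      rw [← mul_prod_erase _ _ hkN, div_eq_mul_inv, mul_pow]
      ring
  · intro z hz
    have hz0 : (1 : ℝ) ≤ 21 * S := by linarith
    have hQz : ‖Q z‖ ≤ ((21 * S) ^ (S - 1) / (S - 1).factorial) ^ τ := by
      rw [hQ]
      simp only
      rw [prod_pow, norm_pow, prod_div_distrib, norm_div]
      gcongr
      · rw [norm_prod, ← hcard, ← prod_const]
        exact prod_le_prod (fun _ _ => norm_nonneg _) fun k hk => hz k (hNmem k hk).1
      · rw [norm_prod]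
        refine (factorial_le_prod_erase S i hi).trans (le_of_eq (prod_congr rfl fun k _ => ?_))
        rw [hnorm, abs_mul, abs_two]
    have hRz : ‖R z‖ ≤ τ * (τ * (ε * (2 ^ τ) ^ S)) * (21 * S) ^ τ := by
      rw [hR]
      simp only
      calc _ ≤ ∑ j ∈ range τ, (τ * (ε * (2 ^ τ) ^ S)) * (21 * S) ^ τ := by
            refine norm_sum_le_of_le _ fun j hj => ?_
            have hj := mem_range.mp hj
            rw [norm_mul, norm_pow]
            gcongr
            · exact hcoef j hj
            · exact (pow_le_pow_left₀ (norm_nonneg _) (hz i hi) j).trans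
                (pow_le_pow_right₀ hz0 hj.le)
        _ = _ := by rw [sum_const, card_range, nsmul_eq_mul]; ring
    rw [Pi.mul_apply, norm_mul]
    refine (mul_le_mul hQz hRz (norm_nonneg _) (by positivity)).trans (le_of_eq ?_)
    have e1 : (21 * (S : ℝ)) ^ (S - 1) * (21 * S) = (21 * S) ^ S := by
      rw [← pow_succ, Nat.sub_add_cancel (by omega)]
    rw [show (42 * (S : ℝ)) = 2 * (21 * S) by ring, mul_pow 2 (21 * (S : ℝ)) S, ← e1]
    rw [← pow_mul, mul_comm τ S, pow_mul]
    rw [div_pow, div_pow, mul_pow, mul_pow]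
    ring

open Filter Topology Finset in
/-- An approximate Schwarz lemma: an entire function whose derivatives are small at the first odd
integers is small nearby. -/
theorem norm_le_of_iteratedDeriv_le {f : ℂ → ℂ} (hf : Differentiable ℂ f) (S τ : ℕ) (hS : 1 ≤ S)
    (hτ : 1 ≤ τ) (M ε : ℝ) (hε0 : 0 ≤ ε)
    (hM : ∀ z ∈ Metric.sphere (S : ℂ) (20 * S), ‖f z‖ ≤ M)
    (hε : ∀ i < S, ∀ j < τ, ‖iteratedDeriv j f (2 * i + 1)‖ ≤ ε)
    (x : ℂ) (hx : ‖x - S‖ ≤ S) :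
    ‖f x‖ ≤ Real.exp (-2 * (S * τ)) * M + 2 * (ε * Real.exp (7 * (S * τ))) := by
  have hS1 : (1 : ℝ) ≤ S := by exact_mod_cast hS
  choose! H hHd hHi hHk hHb using fun i (hi : i < S) => exists_hermite_piece hf S τ i hi ε hε0
    (hε i hi)
  set D := ε * Real.exp (7 * (S * τ)) with hD
  set b : ℝ := τ ^ 2 * ε * ((42 * S) ^ S / (S - 1).factorial) ^ τ with hb
  have hbD : S * b ≤ D := by
    have h1 : ((42 * S) ^ S / (S - 1).factorial : ℝ) ≤ Real.exp (5.5 * S) := by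
      have e1 : ((42 * S) ^ S / (S - 1).factorial : ℝ) =
          42 ^ S * S * (S ^ S / S.factorial) := by
        rw [← Nat.mul_factorial_pred (by omega : S ≠ 0), mul_pow]
        push_cast
        field_simp
      have e2 : (S : ℝ) ^ S / S.factorial ≤ Real.exp 1 ^ S := by
        rw [Real.exp_one_pow]
        exact Real.pow_div_factorial_le_exp _ (by positivity) _
      have e3 : (S : ℝ) ≤ 2 ^ S := by exact_mod_cast Nat.lt_two_pow_self.le
      rw [e1, mul_comm 5.5, Real.exp_nat_mul]
      calc (42 : ℝ) ^ S * S * (S ^ S / S.factorial) ≤ 42 ^ S * 2 ^ S * Real.exp 1 ^ S := by gcongr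
        _ = (84 * Real.exp 1) ^ S := by rw [mul_pow, ← mul_pow]; norm_num
        _ ≤ _ := by
          gcongr
          rw [show (5.5 : ℝ) = 1 + 4.5 by norm_num, Real.exp_add, mul_comm]
          gcongr
          rw [show (4.5 : ℝ) = (9 : ℕ) * 0.5 by norm_num, Real.exp_nat_mul]
          calc (84 : ℝ) ≤ 1.645 ^ 9 := by norm_num
            _ ≤ _ := by
              gcongr
              have := Real.sum_le_exp_of_nonneg (x := 0.5) (by norm_num) 4
              norm_num [Finset.sum_range_succ, Nat.factorial] at this ⊢
              linarith
    have h2 : (S : ℝ) * τ ^ 2 ≤ Real.exp (1.5 * (S * τ)) := by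
      have h3 : (S : ℝ) * τ ≤ 2 ^ (S * τ) := by exact_mod_cast Nat.lt_two_pow_self.le
      have hτ1 : (1 : ℝ) ≤ τ := by exact_mod_cast hτ
      calc (S : ℝ) * τ ^ 2 ≤ (S * τ) * (S * τ) := by
            nlinarith [mul_nonneg (sub_nonneg.mpr hS1) (by positivity : (0 : ℝ) ≤ S * τ ^ 2)]
        _ ≤ 2 ^ (S * τ) * 2 ^ (S * τ) := by gcongr
        _ = 4 ^ (S * τ) := by rw [← mul_pow]; norm_num
        _ ≤ Real.exp 1.5 ^ (S * τ) := by
          gcongr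
          have := Real.sum_le_exp_of_nonneg (x := 1.5) (by norm_num) 5
          norm_num [Finset.sum_range_succ, Nat.factorial] at this ⊢
          linarith
        _ = _ := by rw [← Real.exp_nat_mul]; push_cast; ring_nf
    calc (S : ℝ) * b = ε * ((S * τ ^ 2) * ((42 * S) ^ S / (S - 1).factorial) ^ τ) := by
          rw [hb]; ring
      _ ≤ ε * (Real.exp (1.5 * (S * τ)) * Real.exp (5.5 * S) ^ τ) := by gcongr
      _ = D := by rw [hD, ← Real.exp_nat_mul, ← Real.exp_add]; ring_nf
  have hHsum : ∀ z : ℂ, (∀ k : ℕ, k < S → ‖z - (2 * k + 1)‖ ≤ 21 * S) →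
      ‖∑ i ∈ range S, H i z‖ ≤ D :=
    fun z hz => by
      calc _ ≤ ∑ i ∈ range S, b :=
            norm_sum_le_of_le _ fun i hi => hHb i (mem_range.mp hi) z hz
        _ ≤ D := by rw [sum_const, card_range, nsmul_eq_mul]; exact hbD
  have hnode : ∀ k : ℕ, k < S → ‖((2 * k + 1 : ℂ) - S)‖ ≤ S := fun k hk => by
    have : ((2 * k + 1 : ℂ) - S) = ((2 * k + 1 - S : ℤ) : ℂ) := by push_cast; ring
    rw [this, Complex.norm_intCast]
    have h1 : |(2 * k + 1 - S : ℤ)| ≤ S := by rw [abs_le]; omega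
    exact_mod_cast h1
  have hnodeDist : ∀ (z : ℂ) (r : ℝ), ‖z - S‖ ≤ r → ∀ k : ℕ, k < S →
      ‖z - (2 * k + 1)‖ ≤ r + S := fun z r hz k hk => by
    rw [show z - (2 * k + 1 : ℂ) = (z - S) - ((2 * k + 1 : ℂ) - S) by ring]
    exact (norm_sub_le _ _).trans (add_le_add hz (hnode k hk))
  set g : ℂ → ℂ := fun z => f z - ∑ i ∈ range S, H i z with hg
  have hgd : Differentiable ℂ g :=
    hf.sub (Differentiable.fun_sum fun i hi => hHd i (mem_range.mp hi))
  have hgord : ∀ i ∈ range S, (τ : ℕ∞) ≤ analyticOrderAt g (2 * i + 1) := by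
    intro i hi
    have hgi : g = (f - H i) - fun z => ∑ k ∈ (range S).erase i, H k z := by
      ext z
      simp only [Pi.sub_apply, hg]
      rw [← add_sum_erase _ (fun k => H k z) hi]
      ring
    rw [hgi]
    refine le_trans (le_min (hHi i (mem_range.mp hi)) ?_) le_analyticOrderAt_sub
    rw [natCast_le_analyticOrderAt_iff_iteratedDeriv_eq_zero]
    · intro j hj
      rw [iteratedDeriv_fun_sum fun k hk => ((hHd k (by
        exact mem_range.mp (mem_of_mem_erase hk))).contDiff.contDiffAt)]
      refine sum_eq_zero fun k hk => ?_
      have hkS := mem_range.mp (mem_of_mem_erase hk)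
      exact (natCast_le_analyticOrderAt_iff_iteratedDeriv_eq_zero
        ((hHd k hkS).analyticAt _)).mp (hHk k hkS i (mem_range.mp hi) (ne_of_mem_erase hk).symm)
        j hj
    · exact (Differentiable.fun_sum fun k hk =>
        hHd k (mem_range.mp (mem_of_mem_erase hk))).analyticAt _
  obtain ⟨h, hhd, hh⟩ := exists_eq_prod_pow_mul (range S) (fun i : ℕ => (2 * i + 1 : ℂ))
    (fun a _ b _ hab => by simpa using hab) τ hgd hgord
  have hhb : ∀ z ∈ Metric.sphere (S : ℂ) (20 * S), ‖h z‖ ≤ (M + D) / ((19 * S) ^ τ) ^ S := by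
    intro z hz
    have hzn := mem_sphere_iff_norm.mp hz
    rw [le_div_iff₀ (by positivity)]
    have h1 : ((19 * S : ℝ) ^ τ) ^ S ≤ ‖∏ i ∈ range S, (z - (2 * i + 1 : ℂ)) ^ τ‖ := by
      rw [norm_prod]
      calc ((19 * S : ℝ) ^ τ) ^ S = ∏ _i ∈ range S, (19 * S : ℝ) ^ τ := by
            rw [prod_const, card_range]
        _ ≤ _ := by
          refine prod_le_prod (fun _ _ => by positivity) fun i hi => ?_
          rw [norm_pow]
          gcongr
          have h2 := norm_sub_le (z - (2 * i + 1 : ℂ)) (-((2 * i + 1 : ℂ) - S))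
          rw [norm_neg, show z - (2 * i + 1 : ℂ) - -((2 * i + 1 : ℂ) - S) = z - S by ring,
            hzn] at h2
          linarith [hnode i (mem_range.mp hi)]
    calc ‖h z‖ * ((19 * S : ℝ) ^ τ) ^ S ≤ ‖h z‖ * ‖∏ i ∈ range S, (z - (2 * i + 1 : ℂ)) ^ τ‖ := by
          gcongr
      _ = ‖g z‖ := by rw [hh z, norm_mul, mul_comm]
      _ ≤ ‖f z‖ + ‖∑ i ∈ range S, H i z‖ := norm_sub_le _ _
      _ ≤ M + D := add_le_add (hM z hz) (hHsum z fun k hk => by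
          have := hnodeDist z _ hzn.le k hk
          linarith)
  have hhx : ‖h x‖ ≤ (M + D) / ((19 * S) ^ τ) ^ S := by
    refine Complex.norm_le_of_forall_mem_frontier_norm_le
      (U := Metric.ball (S : ℂ) (20 * S)) Metric.isBounded_ball hhd.diffContOnCl (fun z hz => ?_) ?_
    · rw [frontier_ball _ (by positivity)] at hz
      exact hhb z hz
    · refine subset_closure (mem_ball_iff_norm.mpr (lt_of_le_of_lt hx (by linarith)))
  have hMD : 0 ≤ M + D := by
    have h1 : (0 : ℝ) < ((19 * S) ^ τ) ^ S := by positivity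
    by_contra hlt
    have := div_neg_of_neg_of_pos (not_le.mp hlt) h1
    linarith [norm_nonneg (h x)]
  have hgx : ‖g x‖ ≤ Real.exp (-2 * (S * τ)) * (M + D) := by
    rw [hh x, norm_mul]
    have h1 : ‖∏ i ∈ range S, (x - (2 * i + 1 : ℂ)) ^ τ‖ ≤ ((2 * S) ^ τ) ^ S := by
      rw [norm_prod]
      calc _ ≤ ∏ _i ∈ range S, (2 * S : ℝ) ^ τ := by
            refine prod_le_prod (fun _ _ => norm_nonneg _) fun i hi => ?_
            rw [norm_pow]
            gcongr
            linarith [hnodeDist x _ hx i (mem_range.mp hi)]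
        _ = _ := by rw [prod_const, card_range]
    calc _ ≤ ((2 * S) ^ τ) ^ S * ((M + D) / ((19 * S) ^ τ) ^ S) := by gcongr
      _ = ((2 / 19 : ℝ) ^ τ) ^ S * (M + D) := by
        rw [mul_pow, mul_pow, mul_pow, mul_pow, div_pow, div_pow]
        field_simp
      _ ≤ _ := by
        gcongr
        rw [show (-2 * (S * τ) : ℝ) = (τ * S : ℕ) * (-2) by push_cast; ring, Real.exp_nat_mul,
          ← pow_mul]
        gcongr
        rw [Real.exp_neg, show (2 / 19 : ℝ) = (9.5)⁻¹ by norm_num]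
        refine inv_anti₀ (by positivity) ?_
        have := Real.exp_one_lt_d9
        rw [show (2 : ℝ) = 1 + 1 by norm_num, Real.exp_add]
        nlinarith [Real.exp_pos 1]
  have hexp : Real.exp (-2 * (S * τ)) ≤ 1 := Real.exp_le_one_iff.mpr (by
    have : (0 : ℝ) ≤ S * τ := by positivity
    linarith)
  have hD0 : 0 ≤ D := by positivity
  calc ‖f x‖ = ‖g x + ∑ i ∈ range S, H i x‖ := by rw [hg]; simp
    _ ≤ ‖g x‖ + ‖∑ i ∈ range S, H i x‖ := norm_add_le _ _
    _ ≤ Real.exp (-2 * (S * τ)) * (M + D) + D := add_le_add hgx (hHsum x fun k hk => by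
        have := hnodeDist x _ hx k hk
        linarith)
    _ ≤ _ := by nlinarith

/-- The exponent vectors with all coordinates below `L`. -/
def expBox (L : ℕ) : Finset (Fin 3 → ℕ) := Fintype.piFinset fun _ => Finset.range L

theorem mem_expBox {L : ℕ} {v : Fin 3 → ℕ} : v ∈ expBox L ↔ ∀ j, v j < L := by
  simp [expBox]

theorem card_expBox (L : ℕ) : (expBox L).card = L ^ 3 := by
  simp [expBox]

theorem sum_expBox_two_mul {M : Type*} [AddCommMonoid M] (L : ℕ) (F : (Fin 3 → ℕ) → M) :
    ∑ v ∈ expBox (2 * L), F v = ∑ m ∈ expBox 2, ∑ v ∈ expBox L, F (2 • v + m) := by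
  rw [← Finset.sum_product']
  refine Finset.sum_nbij' (fun v => (fun j => v j % 2, fun j => v j / 2)) (fun w => 2 • w.2 + w.1)
    ?_ ?_ ?_ ?_ ?_
  · intro v hv
    rw [mem_expBox] at hv
    rw [Finset.mem_product, mem_expBox, mem_expBox]
    exact ⟨fun j => Nat.mod_lt _ two_pos, fun j => Nat.div_lt_of_lt_mul (hv j)⟩
  · intro w hw
    rw [Finset.mem_product, mem_expBox, mem_expBox] at hw
    rw [mem_expBox]
    intro j
    have h1 := hw.1 j
    have h2 := hw.2 j
    simp only [Pi.add_apply, Pi.smul_apply, smul_eq_mul]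
    omega
  · intro v _
    ext j
    simp only [Pi.add_apply, Pi.smul_apply, smul_eq_mul]
    omega
  · intro w hw
    rw [Finset.mem_product, mem_expBox, mem_expBox] at hw
    refine Prod.ext (funext fun j => ?_) (funext fun j => ?_) <;>
    · have h1 := hw.1 j
      simp only [Pi.add_apply, Pi.smul_apply, smul_eq_mul]
      omega
  · intro v _
    congr 1
    ext j
    simp only [Pi.add_apply, Pi.smul_apply, smul_eq_mul]
    omega

/-- The logarithm of `2 ^ v 0 * 3 ^ v 1 * φ ^ v 2`. -/
noncomputable def logWeight (v : Fin 3 → ℕ) : ℝ :=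
  v 0 * Real.log 2 + v 1 * Real.log 3 + v 2 * Real.log Real.goldenRatio

theorem logWeight_nonneg (v : Fin 3 → ℕ) : 0 ≤ logWeight v := by
  have h2 : 0 ≤ Real.log 2 := Real.log_nonneg (by norm_num)
  have h3 : 0 ≤ Real.log 3 := Real.log_nonneg (by norm_num)
  have hφ : 0 ≤ Real.log Real.goldenRatio := Real.log_nonneg Real.one_lt_goldenRatio.le
  rw [logWeight]
  positivity

theorem logWeight_two_smul_add (v m : Fin 3 → ℕ) :
    logWeight (2 • v + m) = 2 * logWeight v + logWeight m := by
  simp only [logWeight, Pi.add_apply, Pi.smul_apply, smul_eq_mul]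
  push_cast
  ring

theorem exp_logWeight_mul (v : Fin 3 → ℕ) (m : ℕ) :
    Real.exp (logWeight v * m) =
      2 ^ (v 0 * m) * 3 ^ (v 1 * m) * Real.goldenRatio ^ (v 2 * m) := by
  rw [logWeight, show (v 0 * Real.log 2 + v 1 * Real.log 3 + v 2 * Real.log Real.goldenRatio) * m
    = (v 0 * m : ℕ) * Real.log 2 + (v 1 * m : ℕ) * Real.log 3 +
      (v 2 * m : ℕ) * Real.log Real.goldenRatio by push_cast; ring, Real.exp_add, Real.exp_add,
    Real.exp_nat_mul, Real.exp_nat_mul, Real.exp_nat_mul, Real.exp_log two_pos,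
    Real.exp_log three_pos, Real.exp_log Real.goldenRatio_pos]

theorem exp_logWeight_half (v : Fin 3 → ℕ) (m : ℕ) :
    Real.exp (logWeight v * (m / 2)) =
      √2 ^ (v 0 * m) * √3 ^ (v 1 * m) * √Real.goldenRatio ^ (v 2 * m) := by
  have h0 : ∀ x : ℝ, 0 < x → ∀ k : ℕ, √x ^ k = Real.exp (k * (Real.log x / 2)) := by
    intro x hx k
    rw [Real.exp_nat_mul, ← Real.log_sqrt hx.le, Real.exp_log (Real.sqrt_pos.mpr hx)]
  rw [h0 2 two_pos, h0 3 three_pos, h0 _ Real.goldenRatio_pos, ← Real.exp_add, ← Real.exp_add,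
    logWeight]
  congr 1
  push_cast
  ring

section

theorem logWeight_le {L : ℕ} {v : Fin 3 → ℕ} (hv : v ∈ expBox L) : logWeight v ≤ 2.28 * L := by
  rw [mem_expBox] at hv
  have h : ∀ j, (v j : ℝ) ≤ L := fun j => by exact_mod_cast (hv j).le
  have h2 := Real.log_two_lt_d9
  have h3 : Real.log 3 ≤ 1.1 := by
    rw [Real.log_le_iff_le_exp three_pos]
    have := Real.sum_le_exp_of_nonneg (x := 1.1) (by norm_num) 7
    norm_num [Finset.sum_range_succ, Nat.factorial] at this ⊢
    linarith
  have hφ := log_goldenRatio_lt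
  have h20 : 0 ≤ Real.log 2 := Real.log_nonneg (by norm_num)
  have h30 : 0 ≤ Real.log 3 := Real.log_nonneg (by norm_num)
  have hφ0 : 0 ≤ Real.log Real.goldenRatio := Real.log_nonneg Real.one_lt_goldenRatio.le
  have hL : (0 : ℝ) ≤ L := by positivity
  have e0 := mul_le_mul_of_nonneg_right (h 0) h20
  have e1 := mul_le_mul_of_nonneg_right (h 1) h30
  have e2 := mul_le_mul_of_nonneg_right (h 2) hφ0
  rw [logWeight]
  nlinarith

section

variable (γ₁ γ₂ p : (Fin 3 → ℕ) → ℤ)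

/-- The auxiliary exponential sum. -/
noncomputable def auxSum (L t₁ t₂ : ℕ) (x : ℝ) : ℝ :=
  ∑ v ∈ expBox L, (p v * γ₁ v ^ t₁ * γ₂ v ^ t₂ : ℤ) * Real.exp (logWeight v * x)

/-- The auxiliary sums with parameters below `T` vanish at the first `S` odd integers. -/
def AuxVanishes (L T S : ℕ) : Prop :=
  ∀ t₁ t₂ i : ℕ, t₁ + t₂ < T → i < S → auxSum γ₁ γ₂ p L t₁ t₂ (2 * i + 1) = 0

end

variable {γ₁ γ₂ p : (Fin 3 → ℕ) → ℤ}

theorem AuxVanishes.sum_linear_pow_eq_zero {L T S : ℕ} (h : AuxVanishes γ₁ γ₂ p L T S)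
    (c₁ c₂ : ℝ) {t₁ t₂ i j : ℕ} (ht : t₁ + t₂ + j < T) (hi : i < S) :
    ∑ v ∈ expBox L, ((p v * γ₁ v ^ t₁ * γ₂ v ^ t₂ : ℤ) : ℝ) * (c₁ * γ₁ v + c₂ * γ₂ v) ^ j *
      Real.exp (logWeight v * (2 * i + 1)) = 0 := by
  calc _ = ∑ v ∈ expBox L, ∑ k ∈ Finset.range (j + 1), (c₁ ^ k * c₂ ^ (j - k) * j.choose k) *
        ((p v * γ₁ v ^ (t₁ + k) * γ₂ v ^ (t₂ + (j - k)) : ℤ) *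
          Real.exp (logWeight v * (2 * i + 1))) := by
        refine Finset.sum_congr rfl fun v _ => ?_
        rw [add_pow, Finset.mul_sum, Finset.sum_mul]
        refine Finset.sum_congr rfl fun k _ => ?_
        push_cast
        ring
    _ = ∑ k ∈ Finset.range (j + 1), (c₁ ^ k * c₂ ^ (j - k) * j.choose k) *
        auxSum γ₁ γ₂ p L (t₁ + k) (t₂ + (j - k)) (2 * i + 1) := by
        rw [Finset.sum_comm]
        simp_rw [auxSum, Finset.mul_sum]
    _ = 0 := by
        refine Finset.sum_eq_zero fun k hk => ?_
        have hk := Finset.mem_range.mp hk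
        rw [h _ _ _ (by omega) hi, mul_zero]

/-- The entire function interpolating the auxiliary sums. -/
noncomputable def auxFun (γ₁ γ₂ p : (Fin 3 → ℕ) → ℤ) (L t₁ t₂ : ℕ) (z : ℂ) : ℂ :=
  ∑ v ∈ expBox L, (p v * γ₁ v ^ t₁ * γ₂ v ^ t₂ : ℤ) * Complex.exp ((logWeight v : ℝ) * z)

theorem auxFun_ofReal (L t₁ t₂ : ℕ) (x : ℝ) :
    auxFun γ₁ γ₂ p L t₁ t₂ x = (auxSum γ₁ γ₂ p L t₁ t₂ x : ℝ) := by
  rw [auxFun, auxSum]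
  push_cast
  rfl

theorem differentiable_auxFun (L t₁ t₂ : ℕ) : Differentiable ℂ (auxFun γ₁ γ₂ p L t₁ t₂) := by
  unfold auxFun
  fun_prop

theorem iteratedDeriv_auxFun (L t₁ t₂ j : ℕ) (x : ℝ) :
    iteratedDeriv j (auxFun γ₁ γ₂ p L t₁ t₂) x =
      ((∑ v ∈ expBox L, ((p v * γ₁ v ^ t₁ * γ₂ v ^ t₂ : ℤ) : ℝ) * logWeight v ^ j *
        Real.exp (logWeight v * x) : ℝ) : ℂ) := by
  unfold auxFun
  rw [iteratedDeriv_fun_sum fun v _ => ContDiff.contDiffAt (by fun_prop)]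
  push_cast
  refine Finset.sum_congr rfl fun v _ => ?_
  rw [iteratedDeriv_const_mul_field, iteratedDeriv_cexp_const_mul]
  ring

theorem AuxVanishes.norm_iteratedDeriv_le {L T S : ℕ} (h : AuxVanishes γ₁ γ₂ p L T S)
    {c₁ c₂ η A : ℝ} {t₁ t₂ i j : ℕ} (ht : t₁ + t₂ + j < T) (hi : i < S) (hη1 : η ≤ 1) (hL : 2 ≤ L)
    (hη : ∀ v ∈ expBox L, |logWeight v - (c₁ * γ₁ v + c₂ * γ₂ v)| ≤ η)
    (hA : ∑ v ∈ expBox L, |((p v * γ₁ v ^ t₁ * γ₂ v ^ t₂ : ℤ) : ℝ)| ≤ A) :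
    ‖iteratedDeriv j (auxFun γ₁ γ₂ p L t₁ t₂) (2 * i + 1)‖ ≤
      A * (η * j * (3 * L) ^ (j - 1) * Real.exp (4.56 * (L * S))) := by
  have hL0 : (2 : ℝ) ≤ L := by exact_mod_cast hL
  have hi' : (i : ℝ) + 1 ≤ S := by exact_mod_cast hi
  have := iteratedDeriv_auxFun (γ₁ := γ₁) (γ₂ := γ₂) (p := p) L t₁ t₂ j (2 * i + 1)
  push_cast at this
  rw [this]
  clear this
  norm_cast
  have h0 := h.sum_linear_pow_eq_zero c₁ c₂ ht hi
  push_cast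
  rw [Real.norm_eq_abs, ← sub_zero (Finset.sum _ _), ← h0, ← Finset.sum_sub_distrib]
  refine (Finset.abs_sum_le_sum_abs _ _).trans ?_
  have hη0 : 0 ≤ η := (abs_nonneg _).trans (hη 0 (by rw [mem_expBox]; intro j; simp; omega))
  refine le_trans ?_ (mul_le_mul_of_nonneg_right hA (by positivity))
  rw [Finset.sum_mul]
  refine Finset.sum_le_sum fun v hv => ?_
  have hw0 := logWeight_nonneg v
  have hw := logWeight_le hv
  have hd := hη v hv
  set y := c₁ * γ₁ v + c₂ * γ₂ v with hy
  have hdiff : |logWeight v ^ j - y ^ j| ≤ η * j * (3 * L) ^ (j - 1) := by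
    refine (abs_pow_sub_pow_le _ _ _).trans ?_
    gcongr
    refine max_le ?_ ?_
    · rw [abs_of_nonneg hw0]; linarith
    · rw [abs_le] at hd ⊢
      constructor <;> linarith
  have hexp : Real.exp (logWeight v * (2 * i + 1)) ≤ Real.exp (4.56 * (L * S)) := by
    refine Real.exp_le_exp.mpr ?_
    calc logWeight v * (2 * i + 1) ≤ 2.28 * L * (2 * S) := by
          gcongr
          linarith
      _ = _ := by ring
  push_cast
  rw [show ∀ a b c d e : ℝ, a * b * c * d ^ j * e - a * b * c * y ^ j * e =
    (a * b * c) * ((d ^ j - y ^ j) * e) by intros; ring, abs_mul,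
    abs_mul (_ - _), Real.abs_exp]
  gcongr

theorem norm_auxFun_le {L t₁ t₂ : ℕ} {A r : ℝ} {z : ℂ} (hz : ‖z‖ ≤ r)
    (hA : ∑ v ∈ expBox L, |((p v * γ₁ v ^ t₁ * γ₂ v ^ t₂ : ℤ) : ℝ)| ≤ A) :
    ‖auxFun γ₁ γ₂ p L t₁ t₂ z‖ ≤ A * Real.exp (2.28 * L * r) := by
  have hr : 0 ≤ r := (norm_nonneg z).trans hz
  refine (norm_sum_le _ _).trans ?_
  refine le_trans ?_ (mul_le_mul_of_nonneg_right hA (by positivity))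
  rw [Finset.sum_mul]
  refine Finset.sum_le_sum fun v hv => ?_
  have hw0 := logWeight_nonneg v
  have hw := logWeight_le hv
  rw [norm_mul, Complex.norm_intCast]
  gcongr
  rw [Complex.norm_exp]
  gcongr
  refine (Complex.re_le_norm _).trans ?_
  rw [norm_mul, Complex.norm_real, Real.norm_of_nonneg hw0]
  gcongr

theorem one_le_abs_auxSum_half_mul_pow {L S t₁ t₂ m : ℕ} {A : ℝ} (hA1 : 1 ≤ A)
    (hA : ∑ v ∈ expBox L, |((p v * γ₁ v ^ t₁ * γ₂ v ^ t₂ : ℤ) : ℝ)| ≤ A) (hm : m ≤ 4 * S)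
    (h0 : auxSum γ₁ γ₂ p L t₁ t₂ (m / 2) ≠ 0) :
    1 ≤ |auxSum γ₁ γ₂ p L t₁ t₂ (m / 2)| * (A * Real.exp (4.56 * (L * S))) ^ 15 := by
  have hm' : (m : ℝ) ≤ 4 * S := by exact_mod_cast hm
  have e : auxSum γ₁ γ₂ p L t₁ t₂ (m / 2) = ∑ v ∈ expBox L,
      ((p v * γ₁ v ^ t₁ * γ₂ v ^ t₂ : ℤ) : ℝ) *
        (√2 ^ (v 0 * m) * √3 ^ (v 1 * m) * √Real.goldenRatio ^ (v 2 * m)) := by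
    simp_rw [← exp_logWeight_half]
    rfl
  rw [e] at h0 ⊢
  refine one_le_abs_mul_pow _ _ _ _ _ _ ?_ ?_ h0
  · refine le_trans ?_ (mul_le_mul_of_nonneg_right hA (Real.exp_pos _).le)
    rw [Finset.sum_mul]
    refine Finset.sum_le_sum fun v hv => ?_
    rw [← exp_logWeight_half]
    refine mul_le_mul_of_nonneg_left (Real.exp_le_exp.mpr ?_) (abs_nonneg _)
    calc logWeight v * (m / 2) ≤ 2.28 * L * (4 * S / 2) := by
          gcongr
          exact logWeight_le hv
      _ = _ := by ring
  · exact one_le_mul_of_one_le_of_one_le hA1 (Real.one_le_exp (by positivity))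

theorem AuxVanishes.auxSum_half_eq_zero {L S : ℕ} (h : AuxVanishes γ₁ γ₂ p L (256 * L) S)
    {c₁ c₂ η : ℝ} {t₁ t₂ m : ℕ} (ht : t₁ + t₂ < 128 * L) (hm : m ≤ 4 * S) (hL : 2 ≤ L)
    (hS : 64 ≤ S) (hη : ∀ v ∈ expBox L, |logWeight v - (c₁ * γ₁ v + c₂ * γ₂ v)| ≤ η)
    (hηW : η ≤ Real.exp (-(1100 * (L * S))))
    (hA : ∑ v ∈ expBox L, |((p v * γ₁ v ^ t₁ * γ₂ v ^ t₂ : ℤ) : ℝ)| ≤ Real.exp (7 * (L * S)))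
    (hLW : (3 * L : ℝ) ^ (128 * L) ≤ Real.exp (7 * (L * S))) :
    auxSum γ₁ γ₂ p L t₁ t₂ (m / 2) = 0 := by
  by_contra h0
  have hL' : (2 : ℝ) ≤ L := by exact_mod_cast hL
  have hS' : (64 : ℝ) ≤ S := by exact_mod_cast hS
  have hm' : (m : ℝ) ≤ 4 * S := by exact_mod_cast hm
  have hLS : 64 * (L : ℝ) ≤ L * S := by nlinarith
  set W : ℝ := L * S with hW
  have hη0 : 0 ≤ η := (abs_nonneg _).trans (hη 0 (by rw [mem_expBox]; intro j; simp; omega))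
  have hη1 : η ≤ 1 := hηW.trans (Real.exp_le_one_iff.mpr (by linarith))
  have hτ : (128 * L : ℝ) ≤ Real.exp W := by
    have := Real.quadratic_le_exp_of_nonneg (x := W) (by linarith)
    nlinarith
  have hlow := one_le_abs_auxSum_half_mul_pow (Real.one_le_exp (by linarith)) hA hm h0
  have hup := norm_le_of_iteratedDeriv_le (differentiable_auxFun (γ₁ := γ₁) (γ₂ := γ₂) (p := p)
    L t₁ t₂) S (128 * L) (by omega) (by omega)
    (Real.exp (7 * W) * Real.exp (2.28 * L * (21 * S)))
    (Real.exp (7 * W) * (η * Real.exp W * Real.exp (7 * W) * Real.exp (4.56 * W)))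
    (by positivity) (fun z hz => norm_auxFun_le ?_ hA) (fun i hi j hj => ?_) ((m / 2 : ℝ) : ℂ) ?_
  · rw [auxFun_ofReal, Complex.norm_real, Real.norm_eq_abs] at hup
    have hup' : |auxSum γ₁ γ₂ p L t₁ t₂ (m / 2)| ≤ Real.exp (-(201.12 * W)) +
        2 * Real.exp (-(184.44 * W)) := by
      refine hup.trans ?_
      push_cast
      rw [show (S : ℝ) * (128 * L) = 128 * W by rw [hW]; ring,
        show 2.28 * (L : ℝ) * (21 * S) = 47.88 * W by rw [hW]; ring]
      gcongr ?_ + 2 * ?_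
      · rw [← Real.exp_add, ← Real.exp_add]
        exact Real.exp_le_exp.mpr (by linarith)
      · refine (mul_le_mul_of_nonneg_right (mul_le_mul_of_nonneg_left (mul_le_mul_of_nonneg_right
          (mul_le_mul_of_nonneg_right (mul_le_mul_of_nonneg_right hηW (by positivity))
          (by positivity)) (by positivity)) (by positivity)) (by positivity)).trans ?_
        simp only [← Real.exp_add]
        exact Real.exp_le_exp.mpr (by linarith)
    rw [← Real.exp_add, ← Real.exp_nat_mul] at hlow
    have := hlow.trans (mul_le_mul_of_nonneg_right hup' (Real.exp_pos _).le)
    rw [add_mul, mul_assoc, ← Real.exp_add, ← Real.exp_add] at this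
    have e1 : Real.exp (-(201.12 * W) + (15 : ℕ) * (7 * W + 4.56 * W)) ≤ Real.exp (-2) :=
      Real.exp_le_exp.mpr (by push_cast; linarith)
    have e2 : Real.exp (-(184.44 * W) + (15 : ℕ) * (7 * W + 4.56 * W)) ≤ Real.exp (-2) :=
      Real.exp_le_exp.mpr (by push_cast; linarith)
    have e3 : Real.exp (-2) < 1 / 3 := by
      rw [Real.exp_neg, inv_lt_comm₀ (Real.exp_pos _) (by norm_num)]
      have := Real.quadratic_le_exp_of_nonneg (x := 2) (by norm_num)
      norm_num at this ⊢
      linarith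
    linarith
  · rw [mem_sphere_iff_norm] at hz
    have := norm_add_le (z - S) (S : ℂ)
    rw [sub_add_cancel, hz, Complex.norm_natCast] at this
    linarith
  · refine (h.norm_iteratedDeriv_le (by omega) hi hη1 hL hη hA).trans ?_
    have hj' : (j : ℝ) ≤ 128 * L := by exact_mod_cast hj.le
    gcongr
    · exact hj'.trans hτ
    · exact (pow_le_pow_right₀ (by linarith) (by omega)).trans hLW
  · rw [← Complex.ofReal_natCast S, ← Complex.ofReal_sub, Complex.norm_real, Real.norm_eq_abs,
      abs_le]
    constructor <;> linarith [(Nat.cast_nonneg m : (0 : ℝ) ≤ m)]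

theorem sum_expBox_two {M : Type*} [AddCommMonoid M] (F : (Fin 3 → ℕ) → M) :
    ∑ m ∈ expBox 2, F m = ∑ i : Fin 2, ∑ j : Fin 2, ∑ k : Fin 2, F ![(i : ℕ), j, k] := by
  have e : expBox 2 = {![0, 0, 0], ![0, 0, 1], ![0, 1, 0], ![0, 1, 1], ![1, 0, 0], ![1, 0, 1],
      ![1, 1, 0], ![1, 1, 1]} := by decide
  rw [e]
  simp [Finset.sum_insert, Fin.sum_univ_two, add_assoc]

theorem exp_logWeight_mul_mem_field5 (v : Fin 3 → ℕ) (m : ℕ) :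
    Real.exp (logWeight v * m) ∈ field5 := by
  rw [exp_logWeight_mul]
  exact mul_mem (mul_mem (pow_mem (ofNat_mem _ 2) _) (pow_mem (ofNat_mem _ 3) _))
    (pow_mem goldenRatio_mem_field5 _)

theorem sum_shifted_eq_zero_of_auxSum_half {L t₁ t₂ i : ℕ}
    (h : auxSum γ₁ γ₂ p (2 * L) t₁ t₂ ((2 * i + 1 : ℕ) / 2) = 0)
    {m : Fin 3 → ℕ} (hm : m ∈ expBox 2) :
    ∑ v ∈ expBox L, ((p (2 • v + m) * γ₁ (2 • v + m) ^ t₁ * γ₂ (2 • v + m) ^ t₂ : ℤ) : ℝ) *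
      Real.exp (logWeight v * (2 * i + 1)) = 0 := by
  set G : (Fin 3 → ℕ) → ℝ := fun m => ∑ v ∈ expBox L,
    ((p (2 • v + m) * γ₁ (2 • v + m) ^ t₁ * γ₂ (2 • v + m) ^ t₂ : ℤ) : ℝ) *
      Real.exp (logWeight v * (2 * i + 1)) with hG
  have hmem : ∀ m, G m ∈ field5 := fun m => sum_mem fun v _ => mul_mem (intCast_mem _ _) (by
    have := exp_logWeight_mul_mem_field5 v (2 * i + 1)
    push_cast at this
    exact this)
  have hsum : ∑ m ∈ expBox 2, Real.exp (logWeight m * i) * G m *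
      Real.exp (logWeight m * ((1 : ℕ) / 2)) = 0 := by
    rw [← h, auxSum, sum_expBox_two_mul]
    refine Finset.sum_congr rfl fun m _ => ?_
    rw [hG, Finset.mul_sum, Finset.sum_mul]
    refine Finset.sum_congr rfl fun v _ => ?_
    rw [show logWeight (2 • v + m) * ((2 * i + 1 : ℕ) / 2) = logWeight m * i +
      logWeight v * (2 * i + 1) + logWeight m * ((1 : ℕ) / 2) by
        rw [logWeight_two_smul_add]; push_cast; ring, Real.exp_add, Real.exp_add]
    ring
  rw [sum_expBox_two] at hsum
  have hz := kummer_independence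
    (fun a b c => Real.exp (logWeight ![(a : ℕ), b, c] * i) * G ![(a : ℕ), b, c])
    (fun a b c => mul_mem (exp_logWeight_mul_mem_field5 _ _) (hmem _)) (by
      rw [← hsum]
      refine Finset.sum_congr rfl fun a _ => Finset.sum_congr rfl fun b _ =>
        Finset.sum_congr rfl fun c _ => ?_
      rw [exp_logWeight_half]
      simp)
  rw [mem_expBox] at hm
  have := hz ⟨m 0, hm 0⟩ ⟨m 1, hm 1⟩ ⟨m 2, hm 2⟩
  have e : ![m 0, m 1, m 2] = m := by ext j; fin_cases j <;> rfl
  simp only [e] at this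
  exact (mul_eq_zero.mp this).resolve_left (Real.exp_ne_zero _)

theorem auxVanishes_of_auxSum_half {L T S : ℕ}
    (h : ∀ t₁ t₂ i, t₁ + t₂ < T → i < S →
      auxSum γ₁ γ₂ p (2 * L) t₁ t₂ ((2 * i + 1 : ℕ) / 2) = 0)
    {m : Fin 3 → ℕ} (hm : m ∈ expBox 2)
    (hγ₁ : ∀ v, γ₁ (2 • v + m) = 2 * γ₁ v + γ₁ m) (hγ₂ : ∀ v, γ₂ (2 • v + m) = 2 * γ₂ v + γ₂ m) :
    AuxVanishes γ₁ γ₂ (fun v => p (2 • v + m)) L T S := by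
  intro t₁ t₂ i ht hi
  have hpow : ∀ (γ : (Fin 3 → ℕ) → ℤ) (_ : ∀ v, γ (2 • v + m) = 2 * γ v + γ m) (t : ℕ) v,
      (γ v : ℝ) ^ t = ∑ k ∈ Finset.range (t + 1),
        (1 / 2) ^ t * (-(γ m : ℝ)) ^ (t - k) * t.choose k * (γ (2 • v + m) : ℝ) ^ k := by
    intro γ hγ t v
    rw [show (γ v : ℝ) = 1 / 2 * ((γ (2 • v + m) : ℝ) + -(γ m : ℝ)) by rw [hγ]; push_cast; ring,
      mul_pow, add_pow, Finset.mul_sum]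
    exact Finset.sum_congr rfl fun k _ => by ring
  calc auxSum γ₁ γ₂ (fun v => p (2 • v + m)) L t₁ t₂ (2 * i + 1)
      = ∑ v ∈ expBox L, ∑ k ∈ Finset.range (t₁ + 1), ∑ l ∈ Finset.range (t₂ + 1),
        ((1 / 2) ^ t₁ * (-(γ₁ m : ℝ)) ^ (t₁ - k) * t₁.choose k) *
        ((1 / 2) ^ t₂ * (-(γ₂ m : ℝ)) ^ (t₂ - l) * t₂.choose l) *
        (((p (2 • v + m) * γ₁ (2 • v + m) ^ k * γ₂ (2 • v + m) ^ l : ℤ) : ℝ) *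
          Real.exp (logWeight v * (2 * i + 1))) := by
        refine Finset.sum_congr rfl fun v _ => ?_
        push_cast
        rw [hpow γ₁ hγ₁, hpow γ₂ hγ₂, mul_assoc (p (2 • v + m) : ℝ), Finset.sum_mul_sum,
          Finset.mul_sum, Finset.sum_mul]
        refine Finset.sum_congr rfl fun k _ => ?_
        rw [Finset.mul_sum, Finset.sum_mul]
        exact Finset.sum_congr rfl fun l _ => by ring
    _ = 0 := by
        rw [Finset.sum_comm]
        refine Finset.sum_eq_zero fun k hk => ?_
        rw [Finset.sum_comm]
        refine Finset.sum_eq_zero fun l hl => ?_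
        rw [← Finset.mul_sum, sum_shifted_eq_zero_of_auxSum_half (h k l i ?_ hi) hm, mul_zero]
        rw [Finset.mem_range] at hk hl
        omega

end

theorem expBox_mono {L L' : ℕ} (h : L ≤ L') : expBox L ⊆ expBox L' := fun v hv => by
  rw [mem_expBox] at hv ⊢
  exact fun j => (hv j).trans_le h

theorem sum_abs_mul_pow_le {γ₁ γ₂ p : (Fin 3 → ℕ) → ℤ} {L t₁ t₂ t : ℕ} {P G : ℝ} (hG : 1 ≤ G)
    (hP0 : 0 ≤ P) (hγ₁ : ∀ v ∈ expBox L, |(γ₁ v : ℝ)| ≤ G) (hγ₂ : ∀ v ∈ expBox L, |(γ₂ v : ℝ)| ≤ G)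
    (hP : ∀ v ∈ expBox L, |(p v : ℝ)| ≤ P) (ht : t₁ + t₂ ≤ t) :
    ∑ v ∈ expBox L, |((p v * γ₁ v ^ t₁ * γ₂ v ^ t₂ : ℤ) : ℝ)| ≤ L ^ 3 * P * G ^ t := by
  calc _ ≤ ∑ _v ∈ expBox L, P * G ^ t := by
        refine Finset.sum_le_sum fun v hv => ?_
        push_cast
        rw [abs_mul, abs_mul, abs_pow, abs_pow]
        calc |(p v : ℝ)| * |(γ₁ v : ℝ)| ^ t₁ * |(γ₂ v : ℝ)| ^ t₂ ≤ P * G ^ t₁ * G ^ t₂ := by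
              gcongr
              exacts [hP v hv, hγ₁ v hv, hγ₂ v hv]
          _ = P * G ^ (t₁ + t₂) := by ring
          _ ≤ _ := by gcongr
    _ = _ := by rw [Finset.sum_const, card_expBox]; push_cast [nsmul_eq_mul]; ring

theorem AuxVanishes.coeff_eq_zero {γ₁ γ₂ : (Fin 3 → ℕ) → ℤ} {L₀ W : ℕ} {c₁ c₂ η P G : ℝ}
    (hγ₁ : ∀ v m, γ₁ (2 • v + m) = 2 * γ₁ v + γ₁ m) (hγ₂ : ∀ v m, γ₂ (2 • v + m) = 2 * γ₂ v + γ₂ m)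
    (hη : ∀ v ∈ expBox L₀, |logWeight v - (c₁ * γ₁ v + c₂ * γ₂ v)| ≤ η)
    (hηW : η ≤ Real.exp (-(1100 * W))) (hG : 1 ≤ G) (hP0 : 0 ≤ P)
    (hγ₁G : ∀ v ∈ expBox L₀, |(γ₁ v : ℝ)| ≤ G) (hγ₂G : ∀ v ∈ expBox L₀, |(γ₂ v : ℝ)| ≤ G)
    (hPG : L₀ ^ 3 * P * G ^ (128 * L₀) ≤ Real.exp (7 * W))
    (hLW : (3 * L₀ : ℝ) ^ (128 * L₀) ≤ Real.exp (7 * W)) (J : ℕ) :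
    ∀ (S : ℕ) (p : (Fin 3 → ℕ) → ℤ), 64 ≤ S → 2 ^ J * S = W → 2 ^ J ≤ L₀ →
      (∀ v ∈ expBox (2 ^ J), |(p v : ℝ)| ≤ P) →
      AuxVanishes γ₁ γ₂ p (2 ^ J) (256 * 2 ^ J) S → ∀ v ∈ expBox (2 ^ J), p v = 0 := by
  induction J with
  | zero =>
    intro S p hS _ _ _ h v hv
    have e : expBox (2 ^ 0) = {0} := by decide
    rw [e, Finset.mem_singleton] at hv
    have := h 0 0 0 (by norm_num) (by omega)
    rw [auxSum, e] at this
    simpa [hv] using this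
  | succ J ih =>
    intro S p hS hW hJ hP h v hv
    have hsub := expBox_mono hJ
    have hW' : (W : ℝ) = (2 ^ (J + 1) : ℕ) * S := by exact_mod_cast hW.symm
    have hL2 : 2 ≤ 2 ^ (J + 1) := by rw [pow_succ]; have := Nat.one_le_two_pow (n := J); omega
    have hL2' : (2 : ℝ) ≤ (2 ^ (J + 1) : ℕ) := by exact_mod_cast hL2
    have hJ' : ((2 ^ (J + 1) : ℕ) : ℝ) ≤ L₀ := by exact_mod_cast hJ
    have hhalf : ∀ t₁ t₂ i, t₁ + t₂ < 256 * 2 ^ J → i < 2 * S →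
        auxSum γ₁ γ₂ p (2 * 2 ^ J) t₁ t₂ ((2 * i + 1 : ℕ) / 2) = 0 := by
      intro t₁ t₂ i ht hi
      rw [← pow_succ']
      refine h.auxSum_half_eq_zero (by rw [pow_succ]; omega) (by omega) hL2 hS
        (fun v hv => hη v (hsub hv)) (by rwa [← hW']) ?_ ?_
      · rw [← hW']
        refine (sum_abs_mul_pow_le hG hP0 (fun v hv => hγ₁G v (hsub hv))
          (fun v hv => hγ₂G v (hsub hv)) hP (t := 128 * L₀) (by rw [pow_succ] at hJ; omega)).trans
          (le_trans ?_ hPG)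
        gcongr
      · rw [← hW']
        refine le_trans ?_ hLW
        calc (3 * (2 ^ (J + 1) : ℕ) : ℝ) ^ (128 * 2 ^ (J + 1))
            ≤ (3 * L₀) ^ (128 * 2 ^ (J + 1)) := by gcongr
          _ ≤ _ := pow_le_pow_right₀ (by linarith) (by omega)
    set m : Fin 3 → ℕ := fun j => v j % 2
    set w : Fin 3 → ℕ := fun j => v j / 2
    have hm : m ∈ expBox 2 := by
      rw [mem_expBox]
      exact fun j => Nat.mod_lt _ two_pos
    rw [mem_expBox] at hv
    have hw : w ∈ expBox (2 ^ J) := by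
      rw [mem_expBox]
      intro j
      have := hv j
      rw [pow_succ] at this
      exact Nat.div_lt_of_lt_mul (by omega)
    have hvw : v = 2 • w + m := by
      ext j
      simp only [Pi.add_apply, Pi.smul_apply, smul_eq_mul, w, m]
      omega
    rw [hvw]
    refine ih (2 * S) (fun v => p (2 • v + m)) (by omega) (by rw [← hW]; ring)
      (by rw [pow_succ] at hJ; omega) (fun u hu => hP _ ?_)
      (auxVanishes_of_auxSum_half hhalf hm (fun v => hγ₁ v m) (fun v => hγ₂ v m)) w hw
    rw [mem_expBox] at hu hm ⊢
    intro j
    have := hu j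
    have := hm j
    rw [pow_succ]
    simp only [Pi.add_apply, Pi.smul_apply, smul_eq_mul]
    omega

theorem fib_succ_le_goldenRatio_pow (k : ℕ) : (Nat.fib (k + 1) : ℝ) ≤ Real.goldenRatio ^ k := by
  have := Real.goldenRatio_mul_fib_succ_add_fib k
  rw [pow_succ'] at this
  exact le_of_mul_le_mul_left (by linarith [(Nat.cast_nonneg (Nat.fib k) : (0 : ℝ) ≤ _)])
    Real.goldenRatio_pos

theorem exists_auxVanishes (γ₁ γ₂ : (Fin 3 → ℕ) → ℤ) {L S : ℕ} {G : ℝ} (hG : 1 ≤ G)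
    (hγ₁ : ∀ v ∈ expBox L, |(γ₁ v : ℝ)| ≤ G) (hγ₂ : ∀ v ∈ expBox L, |(γ₂ v : ℝ)| ≤ G)
    (hS : 1 ≤ S) (hLS : 2 ^ 19 * S ≤ L) :
    ∃ p : (Fin 3 → ℕ) → ℤ, (∃ v ∈ expBox L, p v ≠ 0) ∧ AuxVanishes γ₁ γ₂ p L (256 * L) S ∧
      ∀ v ∈ expBox L, |(p v : ℝ)| ≤
        (L ^ 3 * (G ^ (256 * L) * Real.exp (4.56 * (L * S)))) ^ (1 / 3 : ℝ) := by
  have hL : 1 ≤ L := by omega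
  have hL' : (1 : ℝ) ≤ L := by exact_mod_cast hL
  set R : ℝ := G ^ (256 * L) * Real.exp (4.56 * (L * S)) with hR
  have hR1 : 1 ≤ R := one_le_mul_of_one_le_of_one_le (one_le_pow₀ hG)
    (Real.one_le_exp (by positivity))
  let A : Matrix (Fin (256 * L) × Fin (256 * L) × Fin S × Fin 2) (expBox L) ℤ := fun q v =>
    if (q.1 : ℕ) + q.2.1 < 256 * L then
      γ₁ v ^ (q.1 : ℕ) * γ₂ v ^ (q.2.1 : ℕ) * (2 ^ (v.1 0 * (2 * q.2.2.1 + 1)) *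
        3 ^ (v.1 1 * (2 * q.2.2.1 + 1)) * Nat.fib (v.1 2 * (2 * q.2.2.1 + 1) + q.2.2.2)) else 0
  let _ : SeminormedAddCommGroup
    (Matrix (Fin (256 * L) × Fin (256 * L) × Fin S × Fin 2) (expBox L) ℤ) :=
    Matrix.seminormedAddCommGroup
  have hAn : ‖A‖ ≤ R := by
    refine (Matrix.norm_le_iff (by linarith)).mpr fun q v => ?_
    obtain ⟨t₁, t₂, i, c⟩ := q
    obtain ⟨v, hv⟩ := v
    simp only [A]
    split_ifs with ht
    · rw [Int.norm_eq_abs]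
      push_cast
      have hi : (i : ℝ) + 1 ≤ S := by exact_mod_cast i.2
      have hf : (Nat.fib (v 2 * (2 * i + 1) + c) : ℝ) ≤
          Real.goldenRatio ^ (v 2 * (2 * (i : ℕ) + 1)) := by
        refine le_trans ?_ (fib_succ_le_goldenRatio_pow _)
        exact_mod_cast Nat.fib_mono (by omega)
      have he : (2 : ℝ) ^ (v 0 * (2 * (i : ℕ) + 1)) * 3 ^ (v 1 * (2 * (i : ℕ) + 1)) *
          Real.goldenRatio ^ (v 2 * (2 * (i : ℕ) + 1)) ≤ Real.exp (4.56 * (L * S)) := by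
        rw [← exp_logWeight_mul]
        refine Real.exp_le_exp.mpr ?_
        push_cast
        calc logWeight v * (2 * i + 1) ≤ 2.28 * L * (2 * S) := by
              gcongr
              · exact logWeight_le hv
              · linarith
          _ = _ := by ring
      rw [abs_mul, abs_mul, abs_pow, abs_pow, abs_of_nonneg (a := _ * (Nat.fib _ : ℝ))
        (by positivity)]
      refine mul_le_mul ?_ (le_trans ?_ he) (by positivity) (by positivity)
      · calc |(γ₁ v : ℝ)| ^ (t₁ : ℕ) * |(γ₂ v : ℝ)| ^ (t₂ : ℕ) ≤ G ^ (t₁ : ℕ) * G ^ (t₂ : ℕ) := by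
              gcongr
              exacts [hγ₁ v hv, hγ₂ v hv]
          _ = G ^ ((t₁ : ℕ) + t₂) := by ring
          _ ≤ _ := pow_le_pow_right₀ hG ht.le
      · gcongr
    · rw [norm_zero]
      linarith
  have hcard : Fintype.card (expBox L) = L ^ 3 := by rw [Fintype.card_coe, card_expBox]
  have hcard' : Fintype.card (Fin (256 * L) × Fin (256 * L) × Fin S × Fin 2) =
      131072 * L ^ 2 * S := by
    simp only [Fintype.card_prod, Fintype.card_fin]
    ring
  have h4 : 4 * (131072 * L ^ 2 * S) ≤ L ^ 3 := by
    calc 4 * (131072 * L ^ 2 * S) = L ^ 2 * (2 ^ 19 * S) := by ring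
      _ ≤ L ^ 2 * L := by gcongr
      _ = L ^ 3 := by ring
  have hm : 0 < 131072 * L ^ 2 * S := by positivity
  obtain ⟨t, ht0, ht, hbound⟩ := Int.Matrix.exists_ne_zero_int_vec_norm_le A
    (by rw [hcard, hcard']; omega) (by rw [hcard']; exact hm)
  rw [hcard, hcard'] at hbound
  let p : (Fin 3 → ℕ) → ℤ := fun v => if hv : v ∈ expBox L then t ⟨v, hv⟩ else 0
  have hp : ∀ v : expBox L, p v = t v := fun v => by simp [p]
  refine ⟨p, ?_, ?_, ?_⟩
  · obtain ⟨v, hv⟩ := Function.ne_iff.mp ht0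
    exact ⟨v, v.2, by rwa [hp]⟩
  · intro t₁ t₂ i htt hi
    have hrow : ∀ c : Fin 2, ∑ v ∈ expBox L, ((p v * γ₁ v ^ t₁ * γ₂ v ^ t₂ : ℤ) : ℝ) *
        (2 ^ (v 0 * (2 * i + 1)) * 3 ^ (v 1 * (2 * i + 1)) *
          Nat.fib (v 2 * (2 * i + 1) + c)) = 0 := by
      intro c
      have h := congrFun ht (⟨t₁, by omega⟩, ⟨t₂, by omega⟩, ⟨i, hi⟩, c)
      simp only [Matrix.mulVec, dotProduct, A, if_pos htt, Pi.zero_apply] at h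
      rw [← Finset.sum_coe_sort]
      rw [← Int.cast_zero, ← h]
      push_cast
      refine Finset.sum_congr rfl fun v _ => ?_
      rw [hp]
      ring
    have h0 := hrow 0
    have h1 := hrow 1
    have e : Real.goldenRatio * auxSum γ₁ γ₂ p L t₁ t₂ (2 * i + 1) = 0 := by
      refine Eq.trans ?_ (congrArg₂ (fun x y => Real.goldenRatio * x + y) h1 h0) |>.trans (by simp)
      rw [auxSum, Finset.mul_sum, Finset.mul_sum, ← Finset.sum_add_distrib]
      refine Finset.sum_congr rfl fun v _ => ?_
      have := exp_logWeight_mul v (2 * i + 1)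
      push_cast at this
      rw [this]
      have hφ := Real.goldenRatio_mul_fib_succ_add_fib (v 2 * (2 * i + 1))
      rw [pow_succ] at hφ
      simp only [Fin.val_zero, Fin.val_one, add_zero]
      linear_combination (-((p v * γ₁ v ^ t₁ * γ₂ v ^ t₂ : ℤ) : ℝ) *
        (2 ^ (v 0 * (2 * i + 1)) * 3 ^ (v 1 * (2 * i + 1)))) * hφ
    exact (mul_eq_zero.mp e).resolve_left Real.goldenRatio_ne_zero
  · intro v hv
    have h1 : |(p v : ℝ)| ≤ ‖t‖ := by
      rw [show p v = t ⟨v, hv⟩ from hp ⟨v, hv⟩, ← Int.norm_eq_abs]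
      exact norm_le_pi_norm t _
    refine (h1.trans hbound).trans ?_
    have h4' : 4 * ((131072 * L ^ 2 * S : ℕ) : ℝ) ≤ (L ^ 3 : ℕ) := by exact_mod_cast h4
    have hm' : (0 : ℝ) < (131072 * L ^ 2 * S : ℕ) := by exact_mod_cast hm
    have hn1 : (1 : ℝ) ≤ L ^ 3 := one_le_pow₀ hL'
    have hmax : max 1 ‖A‖ ≤ R := max_le hR1 hAn
    calc _ ≤ ((L : ℝ) ^ 3 * R) ^ (((131072 * L ^ 2 * S : ℕ) : ℝ) /
          (((L ^ 3 : ℕ) : ℝ) - (131072 * L ^ 2 * S : ℕ))) := by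
          refine Real.rpow_le_rpow (by positivity) ?_ (div_nonneg hm'.le (by linarith))
          push_cast
          gcongr
      _ ≤ _ := by
          refine Real.rpow_le_rpow_of_exponent_le (one_le_mul_of_one_le_of_one_le hn1 hR1) ?_
          rw [div_le_div_iff₀ (by linarith) (by norm_num)]
          linarith

theorem two_pow_mul_le_exp {K : ℕ} (hK : 56 ≤ K) : (2 : ℝ) ^ 27 * K ≤ Real.exp (0.45 * K) := by
  have hK' : (56 : ℝ) ≤ K := by exact_mod_cast hK
  have h1 : (2 : ℝ) ^ 27 ≤ Real.exp 19 := by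
    rw [show (19 : ℝ) = (19 : ℕ) * 1 by norm_num, Real.exp_nat_mul]
    calc (2 : ℝ) ^ 27 ≤ 2.7182818283 ^ 19 := by norm_num
      _ ≤ _ := by gcongr; exact Real.exp_one_gt_d9.le
  have h2 : (K : ℝ) ≤ Real.exp (0.1 * K) := by
    set y : ℝ := 0.1 * K with hy
    have hy' : 5.6 ≤ y := by linarith
    have := Real.sum_le_exp_of_nonneg (x := y) (by linarith) 5
    simp only [Finset.sum_range_succ, Finset.sum_range_zero, Nat.factorial] at this
    norm_num at this
    have h3 : 31 * y ≤ y ^ 3 := by nlinarith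
    have h4 : 31 * y ≤ y ^ 4 := by nlinarith
    nlinarith
  calc (2 : ℝ) ^ 27 * K ≤ Real.exp 19 * Real.exp (0.1 * K) := by gcongr
    _ = Real.exp (19 + 0.1 * K) := (Real.exp_add _ _).symm
    _ ≤ _ := Real.exp_le_exp.mpr (by linarith)

theorem logWeight_eq_sum (v : Fin 3 → ℕ) : logWeight v =
    ∑ j, v j * (![Real.log 2, Real.log 3, Real.log Real.goldenRatio] : Fin 3 → ℝ) j := by
  simp [Fin.sum_univ_three, logWeight]

/-- A lower bound for a nonzero integral linear form in `log 2`, `log 3` and `log φ`. -/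
theorem exp_neg_le_abs_linear_form {b : Fin 3 → ℤ} (hb : b ≠ 0) {K : ℕ} (hK : 56 ≤ K)
    (hbK : ∀ j, |(b j : ℝ)| ≤ Real.exp K) :
    Real.exp (-(4.73 * 10 ^ 12 * (K : ℝ) ^ 2)) ≤
      |b 0 * Real.log 2 + b 1 * Real.log 3 + b 2 * Real.log Real.goldenRatio| := by
  by_contra! hΛ
  set l : Fin 3 → ℝ := ![Real.log 2, Real.log 3, Real.log Real.goldenRatio] with hl
  have hsum : b 0 * Real.log 2 + b 1 * Real.log 3 + b 2 * Real.log Real.goldenRatio =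
      ∑ j, b j * l j := by simp [Fin.sum_univ_three, l]
  rw [hsum] at hΛ
  set Λ : ℝ := ∑ j, b j * l j with hΛdef
  obtain ⟨r, hr⟩ := Function.ne_iff.mp hb
  rw [Pi.zero_apply] at hr
  have hr1 : (1 : ℝ) ≤ |(b r : ℝ)| := by exact_mod_cast Int.one_le_abs hr
  have hr0 : (b r : ℝ) ≠ 0 := by exact_mod_cast hr
  have hΛr := Fin.sum_univ_succAbove (fun j => b j * l j) r
  rw [← hΛdef, Fin.sum_univ_two] at hΛr
  let γ : Fin 3 → (Fin 3 → ℕ) → ℤ := fun a v => v a * b r - v r * b a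
  have hK' : (56 : ℝ) ≤ K := by exact_mod_cast hK
  have hexpK := two_pow_mul_le_exp hK
  set J := Nat.log 2 (2 ^ 25 * K) + 1 with hJ
  have hJlow : 2 ^ 25 * K ≤ 2 ^ J := (Nat.lt_pow_succ_log_self (by norm_num) _).le
  have hJup : 2 ^ J ≤ 2 ^ 26 * K := by
    have := Nat.pow_log_le_self 2 (x := 2 ^ 25 * K) (by positivity)
    rw [hJ, pow_succ]
    omega
  set L := 2 ^ J with hL
  have hLlow : (2 : ℝ) ^ 25 * K ≤ L := by exact_mod_cast hJlow
  have hLup : (L : ℝ) ≤ 2 ^ 26 * K := by exact_mod_cast hJup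
  have hLexp : 2 * (L : ℝ) ≤ Real.exp (0.45 * K) := by linarith
  have hL0 : (0 : ℝ) < L := by nlinarith
  set W : ℕ := L * (64 * K) with hW
  have hWeq : (W : ℝ) = 64 * (L * K) := by rw [hW]; push_cast; ring
  have hWlow : (2 : ℝ) ^ 31 * K ^ 2 ≤ W := by rw [hWeq]; nlinarith
  have hWup : (W : ℝ) ≤ 2 ^ 32 * K ^ 2 := by rw [hWeq]; nlinarith
  have hKW : 1000 * (K : ℝ) ≤ W := by nlinarith
  have hlin : ∀ a v m, γ a (2 • v + m) = 2 * γ a v + γ a m := by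
    intro a v m
    simp only [γ, Pi.add_apply, Pi.smul_apply, smul_eq_mul]
    push_cast
    ring
  have hγ : ∀ a, ∀ v ∈ expBox L, |(γ a v : ℝ)| ≤ Real.exp (1.45 * K) := by
    intro a v hv
    rw [mem_expBox] at hv
    simp only [γ]
    push_cast
    refine (abs_sub _ _).trans ?_
    rw [abs_mul, abs_mul, Nat.abs_cast, Nat.abs_cast]
    calc (v a : ℝ) * |(b r : ℝ)| + v r * |(b a : ℝ)| ≤ L * Real.exp K + L * Real.exp K := by
          gcongr
          exacts [(hv a).le, hbK r, (hv r).le, hbK a]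
      _ = 2 * L * Real.exp K := by ring
      _ ≤ Real.exp (0.45 * K) * Real.exp K := by gcongr
      _ = _ := by rw [← Real.exp_add]; congr 1; ring
  have hη : ∀ v ∈ expBox L, |logWeight v - (l (r.succAbove 0) / b r * γ (r.succAbove 0) v +
      l (r.succAbove 1) / b r * γ (r.succAbove 1) v)| ≤ L * |Λ| := by
    intro v hv
    rw [mem_expBox] at hv
    have hv' : (v r : ℝ) ≤ L := by exact_mod_cast (hv r).le
    have e : logWeight v - (l (r.succAbove 0) / b r * γ (r.succAbove 0) v +
        l (r.succAbove 1) / b r * γ (r.succAbove 1) v) = v r * (Λ / b r) := by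
      rw [logWeight_eq_sum, ← hl, Fin.sum_univ_succAbove _ r, Fin.sum_univ_two, hΛr]
      simp only [γ]
      push_cast
      field_simp
      ring
    rw [e, abs_mul, abs_div, Nat.abs_cast]
    gcongr
    exact div_le_self (abs_nonneg _) hr1
  have hηW : L * |Λ| ≤ Real.exp (-(1100 * W)) := by
    calc L * |Λ| ≤ Real.exp (0.45 * K) * Real.exp (-(4.73 * 10 ^ 12 * (K : ℝ) ^ 2)) := by
          gcongr
          linarith
      _ = Real.exp (0.45 * K + -(4.73 * 10 ^ 12 * (K : ℝ) ^ 2)) := (Real.exp_add _ _).symm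
      _ ≤ _ := Real.exp_le_exp.mpr (by nlinarith)
  have hG1 : 1 ≤ Real.exp (1.45 * K) := Real.one_le_exp (by positivity)
  obtain ⟨p, ⟨v, hv, hpv⟩, hvan, hpb⟩ := exists_auxVanishes (γ (r.succAbove 0))
    (γ (r.succAbove 1)) (L := L) (S := 64 * K) hG1 (hγ _) (hγ _) (by omega)
    (by rw [show 2 ^ 19 * (64 * K) = 2 ^ 25 * K by ring]; exact hJlow)
  have hGpow : ∀ k : ℕ, Real.exp (1.45 * K) ^ (k * L) = Real.exp (1.45 * k / 64 * W) := by
    intro k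
    rw [← Real.exp_nat_mul, hWeq]
    congr 1
    push_cast
    ring
  have hL3 : (L : ℝ) ^ 3 ≤ Real.exp (0.1 * W) := by
    calc (L : ℝ) ^ 3 ≤ Real.exp (0.45 * K) ^ 3 := by gcongr; linarith
      _ = Real.exp ((3 : ℕ) * (0.45 * K)) := (Real.exp_nat_mul _ _).symm
      _ ≤ _ := Real.exp_le_exp.mpr (by push_cast; linarith)
  have hP : (L ^ 3 * (Real.exp (1.45 * K) ^ (256 * L) *
      Real.exp (4.56 * (L * (64 * K : ℕ))))) ^ (1 / 3 : ℝ) ≤ Real.exp (3.49 * W) := by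
    rw [show 3.49 * (W : ℝ) = 10.47 * W * (1 / 3) by ring, Real.exp_mul (10.47 * W)]
    refine Real.rpow_le_rpow (by positivity) ?_ (by norm_num)
    rw [hGpow, show (L : ℝ) * (64 * K : ℕ) = W by rw [hW]; push_cast; ring,
      ← Real.exp_add]
    refine (mul_le_mul_of_nonneg_right hL3 (Real.exp_pos _).le).trans ?_
    rw [← Real.exp_add]
    refine Real.exp_le_exp.mpr ?_
    push_cast
    linarith
  refine hpv (AuxVanishes.coeff_eq_zero (L₀ := L) (W := W) (hlin _) (hlin _) hη hηW hG1
    (Real.exp_pos (3.49 * W)).le (hγ _) (hγ _) ?_ ?_ J (64 * K) p (by omega) hW.symm le_rfl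
    (fun v hv => (hpb v hv).trans hP) hvan v hv)
  · rw [hGpow, mul_assoc, ← Real.exp_add]
    refine (mul_le_mul_of_nonneg_right hL3 (Real.exp_pos _).le).trans ?_
    rw [← Real.exp_add]
    refine Real.exp_le_exp.mpr ?_
    push_cast
    linarith
  · calc (3 * L : ℝ) ^ (128 * L) ≤ (Real.exp (1.45 * K)) ^ (128 * L) := by
          refine pow_le_pow_left₀ (by positivity) ?_ _
          have : 2 * Real.exp (0.45 * K) ≤ Real.exp (1.45 * K) := by
            rw [show 1.45 * (K : ℝ) = K + 0.45 * K by ring, Real.exp_add]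
            gcongr
            linarith [Real.add_one_le_exp (K : ℝ)]
          linarith
      _ = _ := hGpow 128
      _ ≤ _ := Real.exp_le_exp.mpr (by push_cast; linarith)

theorem lucas_pos : ∀ n, 0 < lucas n
  | 0 => by norm_num [lucas]
  | 1 => by norm_num [lucas]
  | n + 2 => by
    have h0 := lucas_pos n
    have h1 := lucas_pos (n + 1)
    rw [lucas]
    omega

theorem lucas_lt_lucas {m n : ℕ} (hmn : m < n) (hn : 2 ≤ n) : lucas m < lucas n := by
  have hmono : StrictMono fun k => lucas (k + 1) := strictMono_nat_of_lt_succ fun k => by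
    have := lucas_pos k
    have e : lucas (k + 1 + 1) = lucas (k + 1) + lucas k := by rw [lucas]
    omega
  obtain ⟨k, rfl⟩ := Nat.exists_eq_add_of_le' (show 1 ≤ n by omega)
  rcases m with _ | m
  · have h := hmono.monotone (show 1 ≤ k by omega)
    have h2 : lucas (1 + 1) = 3 := by norm_num [lucas]
    have h0 : lucas 0 = 2 := by norm_num [lucas]
    simp only [h2] at h
    omega
  · exact hmono (by omega)

theorem lucas_succ_le_two_pow : ∀ n, lucas (n + 1) ≤ 2 ^ (n + 1)
  | 0 => by norm_num [lucas]
  | 1 => by norm_num [lucas]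
  | n + 2 => by
    have h0 := lucas_succ_le_two_pow n
    have h1 := lucas_succ_le_two_pow (n + 1)
    rw [lucas, show (2 : ℤ) ^ (n + 2 + 1) = 2 * 2 ^ (n + 1 + 1) from pow_succ' _ _]
    have : (2 : ℤ) ^ (n + 1) ≤ 2 ^ (n + 1 + 1) := pow_le_pow_right₀ (by norm_num) (by omega)
    linarith

theorem abs_lucas_sub_goldenRatio_pow_le (n : ℕ) : |(lucas n : ℝ) - Real.goldenRatio ^ n| ≤ 1 := by
  rw [lucas_eq_pow_add_pow _ _ Real.goldenRatio_add_goldenConj Real.goldenRatio_mul_goldenConj,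
    add_sub_cancel_left, abs_pow]
  refine pow_le_one₀ (abs_nonneg _) (abs_le.mpr ⟨Real.neg_one_lt_goldenConj.le, ?_⟩)
  linarith [Real.goldenConj_neg]

theorem log_two_pow_mul_three_pow (x y : ℕ) :
    Real.log (2 ^ x * 3 ^ y) = x * Real.log 2 + y * Real.log 3 := by
  rw [Real.log_mul (by positivity) (by positivity), Real.log_pow, Real.log_pow]

theorem mul_exp_neg_le_sub {x y x' y' K : ℕ} (hK : 56 ≤ K) (hx : x ≤ Real.exp K)
    (hy : y ≤ Real.exp K) (hx' : x' ≤ Real.exp K) (hy' : y' ≤ Real.exp K)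
    (h : (2 : ℝ) ^ x' * 3 ^ y' < 2 ^ x * 3 ^ y) :
    (2 : ℝ) ^ x' * 3 ^ y' * Real.exp (-(4.73 * 10 ^ 12 * (K : ℝ) ^ 2)) ≤
      2 ^ x * 3 ^ y - 2 ^ x' * 3 ^ y' := by
  set X' : ℝ := 2 ^ x' * 3 ^ y' with hX'
  set X : ℝ := 2 ^ x * 3 ^ y with hX
  have hX'0 : 0 < X' := by positivity
  have hX0 : 0 < X := by positivity
  have hb : (![(x : ℤ) - x', (y : ℤ) - y', 0] : Fin 3 → ℤ) ≠ 0 := by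
    intro h0
    have e0 := congrFun h0 0
    have e1 := congrFun h0 1
    simp only [Matrix.cons_val, Pi.zero_apply] at e0 e1
    obtain rfl : x = x' := by omega
    obtain rfl : y = y' := by omega
    exact h.ne rfl
  have hsub : ∀ {a b : ℕ}, a ≤ Real.exp K → b ≤ Real.exp K → |(a : ℝ) - b| ≤ Real.exp K :=
    fun {a b} ha hb => abs_le.mpr
      ⟨by linarith [(Nat.cast_nonneg a : (0 : ℝ) ≤ a)],
        by linarith [(Nat.cast_nonneg b : (0 : ℝ) ≤ b)]⟩
  have hlow := exp_neg_le_abs_linear_form hb hK (fun j => by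
    fin_cases j
    · simpa using hsub hx hx'
    · simpa using hsub hy hy'
    · simpa using (Real.exp_pos _).le)
  have e : (((![(x : ℤ) - x', (y : ℤ) - y', 0] : Fin 3 → ℤ) 0 : ℤ) : ℝ) * Real.log 2 +
      ((![(x : ℤ) - x', (y : ℤ) - y', 0] : Fin 3 → ℤ) 1 : ℤ) * Real.log 3 +
      ((![(x : ℤ) - x', (y : ℤ) - y', 0] : Fin 3 → ℤ) 2 : ℤ) * Real.log Real.goldenRatio =
      Real.log (X / X') := by
    rw [Real.log_div hX0.ne' hX'0.ne', hX, hX', log_two_pow_mul_three_pow,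
      log_two_pow_mul_three_pow]
    simp only [Matrix.cons_val]
    push_cast
    ring
  rw [e, abs_of_nonneg (Real.log_nonneg ((one_le_div hX'0).mpr h.le))] at hlow
  have := hlow.trans (Real.log_le_sub_one_of_pos (div_pos hX0 hX'0))
  calc _ ≤ X' * (X / X' - 1) := by gcongr
    _ = _ := by field_simp

theorem cube_le_exp {t : ℝ} (ht : 55 ≤ t) : 2 * 10 ^ 15 * (t + 1) ^ 3 ≤ 0.1 * Real.exp t := by
  have h1 : (10 ^ 23 : ℝ) ≤ Real.exp 55 := by
    rw [show (55 : ℝ) = (55 : ℕ) * 1 by norm_num, Real.exp_nat_mul]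
    calc (10 ^ 23 : ℝ) ≤ 2.7 ^ 55 := by norm_num
      _ ≤ _ := by
        gcongr
        linarith [Real.exp_one_gt_d9]
  obtain ⟨s, hs, rfl⟩ : ∃ s, 0 ≤ s ∧ t = 55 + s := ⟨t - 55, by linarith, by ring⟩
  have h2 := Real.sum_le_exp_of_nonneg (x := s) hs 4
  simp only [Finset.sum_range_succ, Finset.sum_range_zero, Nat.factorial] at h2
  norm_num at h2
  rw [Real.exp_add]
  have h3 : (2 * 10 ^ 15 : ℝ) * (55 + s + 1) ^ 3 ≤ 10 ^ 22 * (1 + s + s ^ 2 / 2 + s ^ 3 / 6) := by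
    nlinarith [pow_nonneg hs 2, pow_nonneg hs 3]
  calc _ ≤ _ := h3
    _ ≤ 10 ^ 22 * Real.exp s := by gcongr
    _ ≤ _ := by nlinarith [Real.exp_pos s]

theorem exponents_le_of_sub_le {n x y x' y' : ℕ} (hn : 55 < Real.log n)
    (h : (2 : ℝ) ^ x' * 3 ^ y' < 2 ^ x * 3 ^ y)
    (hsub : (2 : ℝ) ^ x * 3 ^ y - 2 ^ x' * 3 ^ y' ≤ 2 * Real.goldenRatio ^ n) :
    x ≤ n ∧ y ≤ n ∧ x' ≤ n ∧ y' ≤ n := by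
  by_contra hcon
  set M : ℕ := max (max x y) (max x' y') with hM
  have hMn : n < M := by
    by_contra hle
    exact hcon (by omega)
  have hn0 : 0 < n := by
    rcases Nat.eq_zero_or_pos n with rfl | h0
    · norm_num at hn
    · exact h0
  have hMn' : (n : ℝ) < M := by exact_mod_cast hMn
  have hn0' : (0 : ℝ) < n := by exact_mod_cast hn0
  have ht : 55 < Real.log M := hn.trans (Real.log_lt_log hn0' hMn')
  set K : ℕ := ⌈Real.log M⌉₊ with hKdef
  have hK : 56 ≤ K := Nat.lt_ceil.mpr (by exact_mod_cast ht)
  have hK' : (K : ℝ) ≤ Real.log M + 1 := (Nat.ceil_lt_add_one (by linarith)).le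
  have hMK : (M : ℝ) ≤ Real.exp K := by
    rw [← Real.log_le_iff_le_exp (by linarith)]
    exact Nat.le_ceil _
  have hle : ∀ a : ℕ, a ≤ M → (a : ℝ) ≤ Real.exp K := fun a ha =>
    le_trans (by exact_mod_cast ha) hMK
  have hlow := mul_exp_neg_le_sub hK (hle x (by omega)) (hle y (by omega)) (hle x' (by omega))
    (hle y' (by omega)) h
  have hE : 4.73 * 10 ^ 12 * (K : ℝ) ^ 2 ≤ 0.001 * M := by
    have := cube_le_exp ht.le
    rw [Real.exp_log (by linarith)] at this
    have hK2 : (K : ℝ) ^ 2 ≤ (Real.log M + 1) ^ 2 := by gcongr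
    nlinarith [sq_nonneg (Real.log M + 1)]
  set E : ℝ := 4.73 * 10 ^ 12 * (K : ℝ) ^ 2
  have hE0 : 0 ≤ E := by positivity
  have hφ : 0 < Real.goldenRatio ^ n := pow_pos Real.goldenRatio_pos n
  have hX' : (2 : ℝ) ^ x' * 3 ^ y' ≤ 2 * Real.goldenRatio ^ n * Real.exp E := by
    have := hlow.trans hsub
    rwa [Real.exp_neg, ← div_eq_mul_inv, div_le_iff₀ (Real.exp_pos _)] at this
  have hX : (2 : ℝ) ^ x * 3 ^ y ≤ 4 * (Real.goldenRatio ^ n * Real.exp E) := by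
    have : Real.goldenRatio ^ n * 1 ≤ Real.goldenRatio ^ n * Real.exp E := by
      gcongr
      exact Real.one_le_exp hE0
    linarith
  have hlogX : Real.log (2 ^ x * 3 ^ y) ≤ 2 * Real.log 2 + (n * Real.log Real.goldenRatio + E) := by
    have := Real.log_le_log (by positivity) hX
    rwa [Real.log_mul (four_ne_zero) (by positivity), Real.log_mul hφ.ne' (Real.exp_ne_zero _),
      Real.log_exp, Real.log_pow, show (4 : ℝ) = 2 ^ 2 by norm_num, Real.log_pow,
      Nat.cast_ofNat] at this
  have hlogX' : Real.log (2 ^ x' * 3 ^ y') ≤ Real.log (2 ^ x * 3 ^ y) :=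
    Real.log_le_log (by positivity) h.le
  have h2 := Real.log_two_gt_d9
  have h2' := Real.log_two_lt_d9
  have h3 : Real.log 2 ≤ Real.log 3 := Real.log_le_log (by norm_num) (by norm_num)
  have hbig : M * Real.log 2 ≤ Real.log (2 ^ x * 3 ^ y) := by
    have hxy : ∀ a b : ℕ, a * Real.log 2 ≤ a * Real.log 2 + b * Real.log 3 ∧
        b * Real.log 2 ≤ a * Real.log 2 + b * Real.log 3 := fun a b => by
      have ha : 0 ≤ a * Real.log 2 := by positivity
      have hb : b * Real.log 2 ≤ b * Real.log 3 := by gcongr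
      have hb0 : 0 ≤ b * Real.log 2 := by positivity
      constructor <;> linarith
    have hM4 : M = x ∨ M = y ∨ M = x' ∨ M = y' := by omega
    rw [log_two_pow_mul_three_pow] at hlogX' ⊢
    rw [log_two_pow_mul_three_pow] at hlogX'
    rcases hM4 with e | e | e | e <;> rw [e]
    · exact (hxy x y).1
    · exact (hxy x y).2
    · exact (hxy x' y').1.trans hlogX'
    · exact (hxy x' y').2.trans hlogX'
  have hφl := log_goldenRatio_lt
  have hnφ : n * Real.log Real.goldenRatio ≤ M * 0.4814 := by
    have := log_goldenRatio_gt
    gcongr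
  have hM100 : (100 : ℝ) ≤ M := by
    have := cube_le_exp ht.le
    rw [Real.exp_log (by linarith)] at this
    nlinarith [pow_le_pow_left₀ (by norm_num) (show (1 : ℝ) ≤ Real.log M + 1 by linarith) 3]
  nlinarith

theorem sub_mul_log_goldenRatio_le {n n₁ n₂ x x₁ x₂ y y₁ y₂ : ℕ} {C : ℝ} (hC : 1 ≤ C)
    (h1 : (2 : ℝ) ^ x * 3 ^ y = lucas n + C) (h2 : (2 : ℝ) ^ x₁ * 3 ^ y₁ = lucas n₁ + C)
    (h3 : (2 : ℝ) ^ x₂ * 3 ^ y₂ = lucas n₂ + C) (hn₂ : n₂ < n₁) (hn₁ : n₁ < n) (hn₁2 : 2 ≤ n₁)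
    (hn : 55 < Real.log n) {K : ℕ} (hK : 56 ≤ K) (hnK : Real.log n ≤ K) :
    ((n : ℝ) - n₁) * Real.log Real.goldenRatio ≤ 2 * (4.73 * 10 ^ 12 * (K : ℝ) ^ 2) + 2 := by
  have l0 : (0 : ℝ) < lucas n := by exact_mod_cast lucas_pos n
  have l1 : (0 : ℝ) < lucas n₁ := by exact_mod_cast lucas_pos n₁
  have l2 : (0 : ℝ) < lucas n₂ := by exact_mod_cast lucas_pos n₂
  have l01 : (lucas n₁ : ℝ) < lucas n := by exact_mod_cast lucas_lt_lucas hn₁ (by omega)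
  have l12 : (lucas n₂ : ℝ) < lucas n₁ := by exact_mod_cast lucas_lt_lucas hn₂ hn₁2
  have a0 := abs_le.mp (abs_lucas_sub_goldenRatio_pow_le n)
  have a1 := abs_le.mp (abs_lucas_sub_goldenRatio_pow_le n₁)
  have p0 : 1 ≤ Real.goldenRatio ^ n := one_le_pow₀ Real.one_lt_goldenRatio.le
  have p1 : 1 ≤ Real.goldenRatio ^ n₁ := one_le_pow₀ Real.one_lt_goldenRatio.le
  have p01 : Real.goldenRatio ^ n₁ ≤ Real.goldenRatio ^ n :=
    pow_le_pow_right₀ Real.one_lt_goldenRatio.le hn₁.le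
  have hlt : (2 : ℝ) ^ x₁ * 3 ^ y₁ < 2 ^ x * 3 ^ y := by linarith
  have hlt' : (2 : ℝ) ^ x₂ * 3 ^ y₂ < 2 ^ x₁ * 3 ^ y₁ := by linarith
  obtain ⟨hx, hy, hx₁, hy₁⟩ := exponents_le_of_sub_le hn hlt (by linarith)
  obtain ⟨-, -, hx₂, hy₂⟩ := exponents_le_of_sub_le hn hlt' (by linarith)
  have hn0 : (0 : ℝ) < n := by exact_mod_cast (by omega : 0 < n)
  have hexp : ∀ a : ℕ, a ≤ n → (a : ℝ) ≤ Real.exp K := fun a ha =>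
    (by exact_mod_cast ha : (a : ℝ) ≤ n).trans ((Real.log_le_iff_le_exp hn0).mp hnK)
  set E : ℝ := 4.73 * 10 ^ 12 * (K : ℝ) ^ 2 with hE
  have hX := mul_exp_neg_le_sub hK (hexp _ hx₁) (hexp _ hy₁) (hexp _ hx₂) (hexp _ hy₂) hlt'
  rw [← hE] at hX
  have hCE : C * Real.exp (-E) ≤ 2 * Real.goldenRatio ^ n₁ := by
    have : C * Real.exp (-E) ≤ 2 ^ x₂ * 3 ^ y₂ * Real.exp (-E) := by
      gcongr
      linarith
    linarith
  have hb : (![-(x : ℤ), -(y : ℤ), n] : Fin 3 → ℤ) ≠ 0 := by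
    intro h0
    have := congrFun h0 2
    simp only [Matrix.cons_val, Pi.zero_apply] at this
    omega
  have hlow := exp_neg_le_abs_linear_form hb hK (fun j => by
    fin_cases j
    · simpa using hexp x hx
    · simpa using hexp y hy
    · simpa using hexp n le_rfl)
  have e : (((![-(x : ℤ), -(y : ℤ), n] : Fin 3 → ℤ) 0 : ℤ) : ℝ) * Real.log 2 +
      ((![-(x : ℤ), -(y : ℤ), n] : Fin 3 → ℤ) 1 : ℤ) * Real.log 3 +
      ((![-(x : ℤ), -(y : ℤ), n] : Fin 3 → ℤ) 2 : ℤ) * Real.log Real.goldenRatio =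
      -Real.log (2 ^ x * 3 ^ y / Real.goldenRatio ^ n) := by
    rw [Real.log_div (by positivity) (pow_pos Real.goldenRatio_pos n).ne',
      log_two_pow_mul_three_pow, Real.log_pow]
    simp only [Matrix.cons_val]
    push_cast
    ring
  have hp0 : 0 < Real.goldenRatio ^ n := by linarith
  rw [e, abs_neg, abs_of_nonneg (Real.log_nonneg ((one_le_div hp0).mpr (by linarith))), ← hE]
    at hlow
  have hC2 : Real.goldenRatio ^ n * Real.exp (-E) ≤ 2 * C := by
    have := hlow.trans (Real.log_le_sub_one_of_pos (div_pos (by positivity) hp0))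
    calc _ ≤ Real.goldenRatio ^ n * (2 ^ x * 3 ^ y / Real.goldenRatio ^ n - 1) := by gcongr
      _ = 2 ^ x * 3 ^ y - Real.goldenRatio ^ n := by field_simp
      _ ≤ _ := by linarith
  have hfin : Real.goldenRatio ^ n * (Real.exp (-E) * Real.exp (-E)) ≤
      4 * Real.goldenRatio ^ n₁ := by nlinarith [Real.exp_pos (-E)]
  have hlog := Real.log_le_log (by positivity) hfin
  rw [← Real.exp_add, Real.log_mul hp0.ne' (Real.exp_ne_zero _), Real.log_exp, Real.log_pow,
    Real.log_mul four_ne_zero (by linarith), Real.log_pow, show (4 : ℝ) = 2 ^ 2 by norm_num,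
    Real.log_pow] at hlog
  have := Real.log_two_lt_d9
  push_cast at hlog
  linarith

theorem lt_log_pow_of_pow_dvd {n n₁ n₂ x x₁ x₂ y y₁ y₂ : ℕ} {C : ℝ} (hC : 1 ≤ C)
    (h1 : (2 : ℝ) ^ x * 3 ^ y = lucas n + C) (h2 : (2 : ℝ) ^ x₁ * 3 ^ y₁ = lucas n₁ + C)
    (h3 : (2 : ℝ) ^ x₂ * 3 ^ y₂ = lucas n₂ + C) (hn₂ : n₂ < n₁) (hn₁ : n₁ < n) (hn₁2 : 2 ≤ n₁)
    (hn : 55 < Real.log n) {p m : ℕ} (hp : p = 2 ∨ p = 3)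
    (hdvd : (p : ℤ) ^ m ∣ lucas n - lucas n₁) : (m : ℝ) < 2.4 * 10 ^ 17 * Real.log n ^ 4 := by
  set K : ℕ := ⌈Real.log n⌉₊ with hKdef
  have hK : 56 ≤ K := Nat.lt_ceil.mpr (by exact_mod_cast hn)
  have hnK : Real.log n ≤ K := Nat.le_ceil _
  have hK' : (K : ℝ) ≤ Real.log n + 1 := (Nat.ceil_lt_add_one (by linarith)).le
  have hd := sub_mul_log_goldenRatio_le hC h1 h2 h3 hn₂ hn₁ hn₁2 hn hK hnK
  have hφ := log_goldenRatio_gt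
  have hn₁' : (n₁ : ℝ) < n := by exact_mod_cast hn₁
  have hK56 : (56 : ℝ) ≤ K := by exact_mod_cast hK
  have hd' : (n : ℝ) - n₁ + 1 ≤ 2 * 10 ^ 13 * (K : ℝ) ^ 2 := by nlinarith
  have hcast : ((n - n₁ + 1 : ℕ) : ℝ) = n - n₁ + 1 := by
    rw [Nat.cast_add_one, Nat.cast_sub hn₁.le]
  have hgrow := cube_le_exp hn.le
  rw [Real.exp_log (by exact_mod_cast (by omega : 0 < n))] at hgrow
  have hK3 : (K : ℝ) ^ 3 ≤ (Real.log n + 1) ^ 3 := by gcongr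
  have hk2 : 64 * (n - n₁ + 1) * K ≤ 2 * n₁ := by
    have : (64 * (n - n₁ + 1 : ℕ) * K : ℝ) ≤ 2 * n₁ := by
      rw [hcast]
      have e : 64 * ((n : ℝ) - n₁ + 1) * K ≤ 64 * (2 * 10 ^ 13 * (K : ℝ) ^ 2) * K := by gcongr
      have e2 : 2 * 10 ^ 13 * (K : ℝ) ^ 2 ≤ 2 * 10 ^ 13 * (K : ℝ) ^ 3 := by
        gcongr
        · linarith
        · norm_num
      nlinarith
    exact_mod_cast this
  have hm := lt_of_pow_dvd_lucas_sub p hp n n₁ m K hn₁ hdvd hK hnK hk2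
  have hm' : (m : ℝ) < 4096 * (n - n₁ + 1 : ℕ) * K ^ 2 + 4 := by exact_mod_cast hm
  rw [hcast] at hm'
  set t := Real.log n
  have ht2 : (K : ℝ) ^ 2 ≤ 1.05 * t ^ 2 := by
    calc (K : ℝ) ^ 2 ≤ (t + 1) ^ 2 := by gcongr
      _ ≤ _ := by nlinarith
  have ht4 : (K : ℝ) ^ 2 * K ^ 2 ≤ 1.05 * t ^ 2 * (1.05 * t ^ 2) := by gcongr
  have e : 4096 * ((n : ℝ) - n₁ + 1) * K ^ 2 ≤ 4096 * (2 * 10 ^ 13 * (K : ℝ) ^ 2) * K ^ 2 := by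
    gcongr
  have h4 : 1 ≤ t ^ 4 := one_le_pow₀ (by linarith)
  nlinarith

theorem le_of_pow_dvd_lucas_sub {n n₁ p m : ℕ} (hn₁ : n₁ < n) (hn : 2 ≤ n) (hp : 2 ≤ p)
    (hdvd : (p : ℤ) ^ m ∣ lucas n - lucas n₁) : m ≤ n := by
  have h0 := lucas_pos n₁
  have h1 := lucas_lt_lucas hn₁ hn
  have h2 := Int.le_of_dvd (by omega) hdvd
  obtain ⟨k, rfl⟩ := Nat.exists_eq_add_of_le' (show 1 ≤ n by omega)
  have h3 := lucas_succ_le_two_pow k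
  have h4 : (2 : ℤ) ^ m ≤ (p : ℤ) ^ m := by gcongr; exact_mod_cast hp
  exact (pow_le_pow_iff_right₀ (one_lt_two (α := ℤ))).mp (by omega)

theorem log_gt_of_le {n : ℕ} (hn : 60000 ≤ n) (h : 2.4 * 10 ^ 17 * Real.log n ^ 4 ≤ n) :
    55 < Real.log n := by
  have hn' : (60000 : ℝ) ≤ n := by exact_mod_cast hn
  have hexp : ∀ k : ℕ, (2.7182818286 : ℝ) ^ k < n → (k : ℝ) < Real.log n := fun k hk => by
    rw [Real.lt_log_iff_exp_lt (by linarith), ← mul_one (k : ℝ), Real.exp_nat_mul]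
    refine lt_of_le_of_lt ?_ hk
    gcongr
    exact Real.exp_one_lt_d9.le
  have step : ∀ k k' : ℕ, (2.7182818286 : ℝ) ^ k' < 2.4 * 10 ^ 17 * k ^ 4 →
      (k : ℝ) < Real.log n → (k' : ℝ) < Real.log n := fun k k' hk hlog =>
    hexp k' (hk.trans_le (le_trans (by gcongr) h))
  have h10 := hexp 10 (lt_of_lt_of_le (by norm_num) hn')
  have h49 := step 10 49 (by norm_num) h10
  exact_mod_cast step 49 55 (by norm_num) h49

theorem neg_c_min_bound (c : ℤ) (hc : c < 0)
    (n n₁ n₂ x x₁ x₂ y y₁ y₂ : ℕ)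
    (h1 : c = lucas n - 2 ^ x * 3 ^ y) (h2 : c = lucas n₁ - 2 ^ x₁ * 3 ^ y₁)
    (h3 : c = lucas n₂ - 2 ^ x₂ * 3 ^ y₂)
    (hnn : n₁ < n) (hnn' : n₂ < n₁) (hn₁ : 500 < n₁) (hn : 60000 ≤ n) :
    (min x x₁ : ℝ) < 2.4 * 10 ^ 17 * Real.log n ^ 4 ∧
    (min y y₁ : ℝ) < 2.4 * 10 ^ 17 * Real.log n ^ 4 := by
  have key : ∀ p m : ℕ, p = 2 ∨ p = 3 → (p : ℤ) ^ m ∣ lucas n - lucas n₁ →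
      (m : ℝ) < 2.4 * 10 ^ 17 * Real.log n ^ 4 := by
    intro p m hp hdvd
    by_contra! hm
    have hmn : (m : ℝ) ≤ n := by
      exact_mod_cast le_of_pow_dvd_lucas_sub hnn (by omega) (by omega) hdvd
    refine hm.not_gt (lt_log_pow_of_pow_dvd (x := x) (y := y) (x₁ := x₁) (y₁ := y₁) (x₂ := x₂)
      (y₂ := y₂) (C := -c) ?_ ?_ ?_ ?_ hnn' hnn (by omega)
      (log_gt_of_le hn (hm.trans hmn)) hp hdvd)
    · exact_mod_cast (by omega : 1 ≤ -c)
    · rw [h1]; push_cast; ring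
    · rw [h2]; push_cast; ring
    · rw [h3]; push_cast; ring
  have hsub : lucas n - lucas n₁ = 2 ^ x * 3 ^ y - 2 ^ x₁ * 3 ^ y₁ := by linarith
  constructor
  · have := key 2 (min x x₁) (Or.inl rfl) (by
      rw [hsub]
      exact dvd_sub ((pow_dvd_pow _ (min_le_left _ _)).mul_right _)
        ((pow_dvd_pow _ (min_le_right _ _)).mul_right _))
    exact_mod_cast this
  · have := key 3 (min y y₁) (Or.inr rfl) (by
      rw [hsub]
      exact dvd_sub ((pow_dvd_pow _ (min_le_left _ _)).mul_left _)
        ((pow_dvd_pow _ (min_le_right _ _)).mul_left _))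
    exact_mod_cast this
end

section
/- Let c be a negative integer and suppose that c = L_n − 2^x·3^y = L_{n₁} − 2^{x₁}·3^{y₁} for nonnegative integers n, n₁, x, x₁, y, y₁ with n₁ < n ≤ 500. Then x < 382 and y < 241. -/
/-! The exponential equations are refuted by a kernel computation modulo `2 ^ 18 * (2 ^ 32 - 1)`.
The functions below use bare `Nat` operations, which the kernel evaluates on literals. -/

/-- `f n`, arranged so that the kernel evaluates `n` to a literal before unfolding `f`. -/
def withValue {α : Type} (n : ℕ) (f : ℕ → α) : α := Nat.rec (f 0) (fun k _ => f k.succ) n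

/-- Refine a discrete logarithm `v` of `c` to base `3` from modulus `2 ^ i` to `2 ^ (i + k)`. -/
def logThree (c k : ℕ) : ℕ → ℕ → ℕ :=
  Nat.rec (fun _ v => v) (fun _ ih i v =>
    cond (((Nat.pow 3 v).mod (Nat.pow 2 (i.add 3))).beq (c.mod (Nat.pow 2 (i.add 3))))
      (ih i.succ v) (ih i.succ (v.add (Nat.pow 2 i)))) k

/-- A test satisfied by every `c` that is congruent to a difference `3 ^ w - 2 ^ u`
modulo `2 ^ (j + 2)` and modulo `2 ^ (2 * j) - 1`. -/
def passes (c j : ℕ) : Bool :=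
  withValue (logThree c j 0 0) fun v =>
    cond (((Nat.pow 3 v).mod (Nat.pow 2 (j.add 2))).beq (c.mod (Nat.pow 2 (j.add 2))))
      (withValue ((Nat.pow 2 (j.mul 2)).sub 1) fun M =>
        ((Nat.pow 2 (j.mul 2)).mod
          (((Nat.pow 3 (v.add (Nat.pow 2 j))).add (M.sub (c.mod M))).mod M)).beq 0)
      false

/-- A test satisfied by every `c` that is congruent to a difference `3 ^ w - 2 ^ u`
modulo `2 ^ 18 * (2 ^ 32 - 1)`. -/
def admissible (c : ℕ) : Bool :=
  cond (passes c 1) (cond (passes c 2) (cond (passes c 4)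
    (cond (passes c 8) (passes c 16) false) false) false) false

/-- Representatives of the differences `3 ^ w - 2 ^ u` modulo `16320 = 2 ^ 6 * (2 ^ 8 - 1)`. -/
def maskResidue (i : ℕ) : ℕ :=
  ((Nat.pow 3 ((i.mod 16).succ)).add
    (Nat.sub 16320 ((Nat.pow 2 ((i.div 16).add 6)).mod 16320))).mod 16320

/-- The set of the residues `± (3 ^ w - 2 ^ u)` modulo `16320`, as a bit mask. -/
def mask : ℕ :=
  Nat.rec 0 (fun i s =>
    (s.lor (Nat.pow 2 (maskResidue i))).lor (Nat.pow 2 (Nat.sub 16320 (maskResidue i)))) 128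

/-- A certificate that `D` is not of the form `± 2 ^ a * 3 ^ b * (3 ^ w - 2 ^ u)` with `w` positive
and `u` large; the argument `s` stands for `mask`. -/
def excluded (s D : ℕ) : Bool :=
  withValue (D.div (D.gcd 3869835264)) fun d =>
    cond ((d.gcd 6).beq 1)
      (cond (((s.div (Nat.pow 2 (d.mod 16320))).mod 2).beq 0) true
        (withValue (d.mod 1125899906580480) fun c =>
          cond (admissible c) false
            (withValue (Nat.sub 1125899906580480 c) fun c' => cond (admissible c') false true)))
      false

/-- `excluded` for the differences of `a` and the first `m` terms of the additive sequence that
starts with `p`, `q`. -/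
def excludedBelow (s a m : ℕ) : ℕ → ℕ → Bool :=
  Nat.rec (fun _ _ => true) (fun _ ih p q =>
    cond (excluded s (a.sub p)) (withValue (p.add q) fun r => ih q r) false) m

/-- `excluded` for the differences of the Lucas numbers with indices below `n + k`, the larger index
being at least `n`, where `p` and `q` are the Lucas numbers with indices `n` and `n + 1`. -/
def excludedUpTo (s k : ℕ) : ℕ → ℕ → ℕ → Bool :=
  Nat.rec (fun _ _ _ => true) (fun _ ih n p q =>
    cond (excludedBelow s p n 2 1) (withValue (p.add q) fun r => ih n.succ q r) false) k

theorem excludedUpTo_mask : (withValue mask fun s => excludedUpTo s 499 2 3 4) = true := by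
  decide +kernel

theorem withValue_eq {α : Type} (n : ℕ) (f : ℕ → α) : withValue n f = f n := by
  cases n <;> rfl

theorem pow_modEq_pow_of_modEq {a m n s x y : ℕ} (h : a ^ (n + s) ≡ a ^ s [MOD m])
    (hxy : x ≡ y [MOD n]) (hx : s ≤ x) (hy : s ≤ y) : a ^ x ≡ a ^ y [MOD m] := by
  have reduce (q r : ℕ) : a ^ (n * q + r + s) ≡ a ^ (r + s) [MOD m] := by
    induction q with
    | zero => simp [Nat.ModEq.refl]
    | succ q ih =>
      calc a ^ (n * (q + 1) + r + s) = a ^ (n * q + r) * a ^ (n + s) := by ring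
        _ ≡ a ^ (n * q + r) * a ^ s [MOD m] := h.mul_left _
        _ = a ^ (n * q + r + s) := by ring
        _ ≡ a ^ (r + s) [MOD m] := ih
  obtain ⟨x, rfl⟩ := Nat.exists_eq_add_of_le' hx
  obtain ⟨y, rfl⟩ := Nat.exists_eq_add_of_le' hy
  have hxy' : x % n = y % n := Nat.ModEq.add_right_cancel' s hxy
  have h1 := reduce (x / n) (x % n)
  have h2 := reduce (y / n) (y % n)
  rw [Nat.div_add_mod] at h1 h2
  exact h1.trans (hxy' ▸ h2.symm)

theorem exists_three_pow_two_pow (i : ℕ) :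
    ∃ q, 3 ^ 2 ^ (i + 1) = 1 + 2 ^ (i + 3) * (2 * q + 1) := by
  induction i with
  | zero => exact ⟨0, by norm_num⟩
  | succ i ih =>
    obtain ⟨q, hq⟩ := ih
    refine ⟨q + 2 ^ (i + 1) * (2 * q + 1) ^ 2, ?_⟩
    rw [pow_succ 2 (i + 1), pow_mul, hq]
    ring

theorem three_pow_two_pow_modEq (i : ℕ) : 3 ^ 2 ^ (i + 1) ≡ 1 [MOD 2 ^ (i + 3)] := by
  obtain ⟨q, hq⟩ := exists_three_pow_two_pow i
  simp [hq, Nat.ModEq]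

theorem three_pow_two_pow_not_modEq (i : ℕ) : ¬ 3 ^ 2 ^ i ≡ 1 [MOD 2 ^ (i + 3)] := by
  cases i with
  | zero => decide
  | succ i =>
    obtain ⟨q, hq⟩ := exists_three_pow_two_pow i
    intro h
    have h2 := (Nat.modEq_iff_dvd' (Nat.one_le_pow _ _ (by norm_num))).1 h.symm
    rw [hq, Nat.add_sub_cancel_left, show 2 ^ (i + 1 + 3) = 2 ^ (i + 3) * 2 by ring] at h2
    have := Nat.dvd_of_mul_dvd_mul_left (by positivity) h2
    omega

theorem logThree_modEq {c w : ℕ} (k i v : ℕ) (hc : 3 ^ w ≡ c [MOD 2 ^ (i + k + 2)])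
    (hv : v ≡ w [MOD 2 ^ i]) : logThree c k i v ≡ w [MOD 2 ^ (i + k)] := by
  induction k generalizing i v with
  | zero => exact hv
  | succ k ih =>
    have hc' : 3 ^ w ≡ c [MOD 2 ^ (i + 3)] := hc.of_dvd (pow_dvd_pow 2 (by omega))
    have period {x y : ℕ} (h : x ≡ y [MOD 2 ^ (i + 1)]) : 3 ^ x ≡ 3 ^ y [MOD 2 ^ (i + 3)] :=
      pow_modEq_pow_of_modEq (s := 0) (three_pow_two_pow_modEq i) h (Nat.zero_le _) (Nat.zero_le _)
    have lift : v ≡ w [MOD 2 ^ (i + 1)] ∨ v + 2 ^ i ≡ w [MOD 2 ^ (i + 1)] := by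
      obtain ⟨t, ht⟩ := Nat.modEq_iff_dvd.1 hv
      push_cast at ht
      obtain ⟨s, rfl | rfl⟩ := Int.even_or_odd' t
      · exact Or.inl (Nat.modEq_iff_dvd.2 ⟨s, by push_cast; rw [ht]; ring⟩)
      · exact Or.inr (Nat.modEq_iff_dvd.2 ⟨s, by push_cast; linear_combination ht⟩)
    have e : i + (k + 1) = i + 1 + k := by omega
    rw [e] at hc ⊢
    have unfold_step : logThree c (k + 1) i v =
        cond ((3 ^ v % 2 ^ (i + 3)).beq (c % 2 ^ (i + 3)))
          (logThree c k (i + 1) v) (logThree c k (i + 1) (v + 2 ^ i)) := rfl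
    rw [unfold_step]
    cases hb : (3 ^ v % 2 ^ (i + 3)).beq (c % 2 ^ (i + 3)) with
    | true =>
      refine ih _ _ hc (lift.resolve_right fun h => three_pow_two_pow_not_modEq i ?_)
      have h1 : 3 ^ v ≡ c [MOD 2 ^ (i + 3)] := Nat.eq_of_beq_eq_true hb
      have h2 : 3 ^ v * 3 ^ 2 ^ i ≡ 3 ^ v * 1 [MOD 2 ^ (i + 3)] := by
        rw [← pow_add, mul_one]
        exact ((period h).trans hc').trans h1.symm
      exact h2.cancel_left_of_coprime (Nat.Coprime.pow _ _ (by norm_num))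
    | false =>
      refine ih _ _ hc (lift.resolve_left fun h => Nat.ne_of_beq_eq_false hb ?_)
      exact (period h).trans hc'

theorem passes_of_modEq {c j u w : ℕ} (hj : 1 ≤ j) (hw : 1 ≤ w)
    (hM : 3 ^ (2 ^ j + 1) ≡ 3 ^ 1 [MOD 2 ^ (j * 2) - 1])
    (h2 : 3 ^ w ≡ c [MOD 2 ^ (j + 2)]) (h3 : 3 ^ w ≡ 2 ^ u + c [MOD 2 ^ (j * 2) - 1]) :
    passes c j = true := by
  have hv : logThree c j 0 0 ≡ w [MOD 2 ^ j] := by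
    simpa using logThree_modEq j 0 0 (by simpa using h2) (by simp [Nat.modEq_one])
  have hle : 2 ^ 2 ≤ 2 ^ (j * 2) := Nat.pow_le_pow_right (by norm_num) (by omega)
  set M := 2 ^ (j * 2) - 1 with hMdef
  have unfold_passes : passes c j = withValue (logThree c j 0 0) fun v =>
      cond ((3 ^ v % 2 ^ (j + 2)).beq (c % 2 ^ (j + 2)))
        (withValue M fun M =>
          (2 ^ (j * 2) % ((3 ^ (v + 2 ^ j) + (M - c % M)) % M)).beq 0) false := rfl
  rw [unfold_passes, withValue_eq, withValue_eq]
  generalize logThree c j 0 0 = v at hv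
  have hv2 : 3 ^ v ≡ c [MOD 2 ^ (j + 2)] := by
    obtain ⟨i, rfl⟩ := Nat.exists_eq_add_of_le' hj
    exact (pow_modEq_pow_of_modEq (s := 0) (three_pow_two_pow_modEq i) hv
      (Nat.zero_le _) (Nat.zero_le _)).trans h2
  have hv3 : 3 ^ (v + 2 ^ j) ≡ 3 ^ w [MOD M] :=
    pow_modEq_pow_of_modEq hM (by simpa [Nat.ModEq] using hv)
      (le_add_left Nat.one_le_two_pow) hw
  have hr : 3 ^ (v + 2 ^ j) + (M - c % M) ≡ 2 ^ (u % (j * 2)) [MOD M] := by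
    have hc : c % M < M := Nat.mod_lt _ (by omega)
    calc 3 ^ (v + 2 ^ j) + (M - c % M) ≡ 2 ^ u + c + (M - c % M) [MOD M] :=
          (hv3.trans h3).add_right _
      _ = 2 ^ u + M * (c / M + 1) := by
          have := Nat.div_add_mod c M
          rw [mul_add]
          omega
      _ ≡ 2 ^ u [MOD M] := by simp [Nat.ModEq]
      _ ≡ 2 ^ (u % (j * 2)) [MOD M] := by
          refine pow_modEq_pow_of_modEq (n := j * 2) (s := 0) ?_ (Nat.mod_modEq _ _).symm
            (Nat.zero_le _) (Nat.zero_le _)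
          refine ((Nat.modEq_iff_dvd' ?_).2 ?_).symm
          · exact Nat.one_le_two_pow
          · simp [hMdef]
  have hlt : 2 ^ (u % (j * 2)) < M := by
    have h1 : u % (j * 2) ≤ j * 2 - 1 := by
      have := Nat.mod_lt u (show j * 2 > 0 by omega)
      omega
    have h4 : 2 ^ (u % (j * 2)) ≤ 2 ^ (j * 2 - 1) := Nat.pow_le_pow_right (by norm_num) h1
    have h5 : 2 ^ (j * 2) = 2 * 2 ^ (j * 2 - 1) := by
      rw [← pow_succ', Nat.sub_add_cancel (by omega)]
    omega
  have hr' : (3 ^ (v + 2 ^ j) + (M - c % M)) % M = 2 ^ (u % (j * 2)) :=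
    Eq.trans hr (Nat.mod_eq_of_lt hlt)
  rw [hr', show 3 ^ v % 2 ^ (j + 2) = c % 2 ^ (j + 2) from hv2,
    Nat.mod_eq_zero_of_dvd (pow_dvd_pow 2 (Nat.mod_lt u (by omega)).le)]
  simp

theorem admissible_of_modEq {c u w : ℕ} (hu : 18 ≤ u) (hw : 1 ≤ w)
    (h : 3 ^ w ≡ 2 ^ u + c [MOD 1125899906580480]) : admissible c = true := by
  have main (j : ℕ) (hj : 1 ≤ j) (hj' : j ≤ 16)
      (hM : 3 ^ (2 ^ j + 1) ≡ 3 ^ 1 [MOD 2 ^ (j * 2) - 1])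
      (hd : 2 ^ (j * 2) - 1 ∣ 1125899906580480) : passes c j = true := by
    refine passes_of_modEq hj hw hM ?_ (h.of_dvd hd)
    have h18 : 2 ^ (j + 2) ∣ 2 ^ 18 := pow_dvd_pow 2 (by omega)
    have hu2 : 2 ^ u ≡ 0 [MOD 2 ^ (j + 2)] :=
      Nat.modEq_zero_iff_dvd.2 (h18.trans (pow_dvd_pow 2 hu))
    simpa using (h.of_dvd (h18.trans (by norm_num))).trans (hu2.add_right c)
  have h1 := main 1 (by norm_num) (by norm_num) (by decide +kernel) (by norm_num)
  have h2 := main 2 (by norm_num) (by norm_num) (by decide +kernel) (by norm_num)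
  have h4 := main 4 (by norm_num) (by norm_num) (by decide +kernel) (by norm_num)
  have h8 := main 8 (by norm_num) (by norm_num) (by decide +kernel) (by norm_num)
  have h16 := main 16 (by norm_num) (by norm_num) (by decide +kernel) (by norm_num)
  simp [admissible, h1, h2, h4, h8, h16]

theorem mask_bit (i : ℕ) (hi : i < 128) : 0 < maskResidue i ∧
    mask / 2 ^ maskResidue i % 2 = 1 ∧ mask / 2 ^ (16320 - maskResidue i) % 2 = 1 := by
  revert i
  decide +kernel

theorem mask_bit_of_modEq {d u w : ℕ} (hu : 6 ≤ u) (hw : 1 ≤ w)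
    (h : 3 ^ w ≡ 2 ^ u + d [MOD 16320] ∨ 3 ^ w + d ≡ 2 ^ u [MOD 16320]) :
    mask / 2 ^ (d % 16320) % 2 = 1 := by
  set i := (w - 1) % 16 + 16 * ((u - 6) % 8) with hi
  obtain ⟨hpos, hbit, hbit'⟩ := mask_bit i (by omega)
  have h3 : 3 ^ w ≡ 3 ^ (i % 16 + 1) [MOD 16320] :=
    pow_modEq_pow_of_modEq (n := 16) (s := 1) (by decide +kernel)
      (by unfold Nat.ModEq; omega) hw (by omega)
  have h2 : 2 ^ u ≡ 2 ^ (i / 16 + 6) [MOD 16320] :=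
    pow_modEq_pow_of_modEq (n := 8) (s := 6) (by decide +kernel)
      (by unfold Nat.ModEq; omega) hu (by omega)
  have hres : maskResidue i =
      (3 ^ (i % 16 + 1) + (16320 - 2 ^ (i / 16 + 6) % 16320)) % 16320 := rfl
  unfold Nat.ModEq at h h2 h3
  rcases h with h | h
  · have : d % 16320 = maskResidue i := by omega
    simpa only [this] using hbit
  · have : d % 16320 = 16320 - maskResidue i := by omega
    simpa only [this] using hbit'

theorem coprime_six_of_add_eq {e u w : ℕ} (hu : u ≠ 0) (hw : w ≠ 0)
    (h : 3 ^ w = 2 ^ u + e ∨ 3 ^ w + e = 2 ^ u) : e.Coprime 6 := by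
  have h2 : 2 ∣ 2 ^ u := dvd_pow_self 2 hu
  have h3 : 3 ∣ 3 ^ w := dvd_pow_self 3 hw
  have n2 : ¬ 2 ∣ 3 ^ w := fun hd => by
    have := Nat.prime_two.dvd_of_dvd_pow hd
    omega
  have n3 : ¬ 3 ∣ 2 ^ u := fun hd => by
    have := Nat.prime_three.dvd_of_dvd_pow hd
    omega
  have e2 : e.Coprime 2 :=
    ((Nat.Prime.coprime_iff_not_dvd Nat.prime_two).2 (by omega)).symm
  have e3 : e.Coprime 3 :=
    ((Nat.Prime.coprime_iff_not_dvd Nat.prime_three).2 (by omega)).symm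
  exact Nat.Coprime.mul_right e2 e3

theorem bounds_of_excluded {D a b u w : ℕ} (hD : excluded mask D = true) (hu : u ≠ 0) (hw : w ≠ 0)
    (h : 2 ^ a * 3 ^ b * 3 ^ w = 2 ^ a * 3 ^ b * 2 ^ u + D ∨
      2 ^ a * 3 ^ b * 3 ^ w + D = 2 ^ a * 3 ^ b * 2 ^ u) :
    a ≤ 16 ∧ b ≤ 10 ∧ u < 18 := by
  obtain ⟨S, hS⟩ : ∃ S, S = 2 ^ a * 3 ^ b := ⟨_, rfl⟩
  rw [← hS] at h
  have hS0 : 0 < S := by rw [hS]; positivity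
  obtain ⟨e, rfl, he⟩ : ∃ e, D = S * e ∧ (3 ^ w = 2 ^ u + e ∨ 3 ^ w + e = 2 ^ u) := by
    have hdvd : S ∣ D := by
      rcases h with h | h
      · exact (Nat.dvd_add_right (dvd_mul_right S _)).1 (h ▸ dvd_mul_right S _)
      · exact (Nat.dvd_add_right (dvd_mul_right S _)).1 (h ▸ dvd_mul_right S _)
    obtain ⟨e, rfl⟩ := hdvd
    rw [← mul_add, ← mul_add, Nat.mul_right_inj hS0.ne', Nat.mul_right_inj hS0.ne'] at h
    exact ⟨e, rfl, h⟩
  have he6 := coprime_six_of_add_eq hu hw he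
  have unfold_excluded : excluded mask (S * e) =
      withValue (S * e / (S * e).gcd 3869835264) fun d =>
        cond ((d.gcd 6).beq 1)
          (cond ((mask / 2 ^ (d % 16320) % 2).beq 0) true
            (withValue (d % 1125899906580480) fun c =>
              cond (admissible c) false
                (withValue (1125899906580480 - c) fun c' => cond (admissible c') false true)))
          false := rfl
  rw [unfold_excluded, withValue_eq] at hD
  obtain ⟨g, hg⟩ : ∃ g, g = (S * e).gcd 3869835264 := ⟨_, rfl⟩
  have hgG : g ∣ 2 ^ 16 * 3 ^ 10 := by
    rw [hg]
    exact Nat.gcd_dvd_right _ _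
  have hgD : g ∣ S * e := by
    rw [hg]
    exact Nat.gcd_dvd_left _ _
  have coprime_smooth {x : ℕ} (hx : x.Coprime 6) (i j : ℕ) : (2 ^ i * 3 ^ j).Coprime x := by
    have h2 : x.Coprime 2 := hx.coprime_dvd_right (by norm_num)
    have h3 : x.Coprime 3 := hx.coprime_dvd_right (by norm_num)
    exact (Nat.Coprime.mul_right (h2.pow_right i) (h3.pow_right j)).symm
  obtain ⟨d, hd⟩ := hgD
  have hgpos : 0 < g := Nat.pos_of_dvd_of_pos hgG (by norm_num)
  rw [← hg, hd, Nat.mul_div_cancel_left _ hgpos] at hD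
  have hd6 : d.Coprime 6 := by
    cases hb : (d.gcd 6).beq 1 with
    | true => exact Nat.eq_of_beq_eq_true hb
    | false => simp [hb] at hD
  have hgS : g = S := by
    refine Nat.dvd_antisymm ?_ ?_
    · exact ((coprime_smooth he6 16 10).coprime_dvd_left hgG).dvd_of_dvd_mul_right
        (hd ▸ dvd_mul_right g d)
    · exact (hS ▸ coprime_smooth hd6 a b).dvd_of_dvd_mul_right (hd ▸ dvd_mul_right S e)
  subst hgS
  obtain rfl : e = d := Nat.eq_of_mul_eq_mul_left hgpos hd
  refine ⟨?_, ?_, ?_⟩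
  · have : 2 ^ a ∣ 2 ^ 16 * 3 ^ 10 := (hS ▸ dvd_mul_right _ _ : 2 ^ a ∣ g).trans hgG
    exact (Nat.pow_dvd_pow_iff_le_right (by norm_num)).1
      (Nat.Coprime.dvd_of_dvd_mul_right (Nat.Coprime.pow _ _ (by norm_num)) this)
  · have : 3 ^ b ∣ 2 ^ 16 * 3 ^ 10 := (hS ▸ dvd_mul_left _ _ : 3 ^ b ∣ g).trans hgG
    exact (Nat.pow_dvd_pow_iff_le_right (by norm_num)).1
      (Nat.Coprime.dvd_of_dvd_mul_left (Nat.Coprime.pow _ _ (by norm_num)) this)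
  · by_contra! hu18
    have hbit : mask / 2 ^ (e % 16320) % 2 = 1 :=
      mask_bit_of_modEq (u := u) (w := w) (by omega) (Nat.one_le_iff_ne_zero.2 hw)
        (he.imp (fun h => congrArg (· % 16320) h) (fun h => congrArg (· % 16320) h))
    have hgcd : e.gcd 6 = 1 := he6
    rw [hgcd, hbit, withValue_eq, withValue_eq] at hD
    rcases he with he | he
    · have := admissible_of_modEq (c := e % 1125899906580480) hu18 (Nat.one_le_iff_ne_zero.2 hw)
        (by rw [he]; exact (Nat.mod_modEq _ _).symm.add_left _)
      simp [this] at hD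
    · have := admissible_of_modEq (c := 1125899906580480 - e % 1125899906580480) hu18
        (Nat.one_le_iff_ne_zero.2 hw) (by unfold Nat.ModEq; omega)
      simp [this] at hD

theorem pos_of_excluded {s D : ℕ} (h : excluded s D = true) : 0 < D := by
  rcases Nat.eq_zero_or_pos D with rfl | hD
  · exact absurd (show excluded s 0 = false from rfl) (by simp [h])
  · exact hD

theorem excluded_of_excludedBelow {s a m p q k i r : ℕ} (h : excludedBelow s a m p q = true)
    (hp : (p : ℤ) = lucas k) (hq : (q : ℤ) = lucas (k + 1)) (hi : i < m)
    (hr : (r : ℤ) = lucas (k + i)) : excluded s (a - r) = true := by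
  induction m generalizing p q k i with
  | zero => omega
  | succ m ih =>
    have unfold_step : excludedBelow s a (m + 1) p q = cond (excluded s (a - p))
        (withValue (p + q) fun r => excludedBelow s a m q r) false := rfl
    rw [unfold_step, withValue_eq] at h
    cases hb : excluded s (a - p) with
    | false => simp [hb] at h
    | true =>
      rw [hb] at h
      cases i with
      | zero =>
        obtain rfl : r = p := by exact_mod_cast hr.trans hp.symm
        exact hb
      | succ i =>
        refine ih (k := k + 1) (i := i) h hq ?_ (by omega) (by rw [hr]; congr 1; omega)
        rw [lucas, ← hp, ← hq]
        push_cast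
        ring

theorem excluded_of_excludedUpTo {s k n p q i m a r : ℕ} (h : excludedUpTo s k n p q = true)
    (hp : (p : ℤ) = lucas n) (hq : (q : ℤ) = lucas (n + 1)) (hi : i < k)
    (ha : (a : ℤ) = lucas (n + i)) (hm : m < n + i) (hr : (r : ℤ) = lucas m) :
    excluded s (a - r) = true := by
  induction k generalizing n p q i with
  | zero => omega
  | succ k ih =>
    have unfold_step : excludedUpTo s (k + 1) n p q = cond (excludedBelow s p n 2 1)
        (withValue (p + q) fun r => excludedUpTo s k (n + 1) q r) false := rfl
    rw [unfold_step, withValue_eq] at h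
    cases hb : excludedBelow s p n 2 1 with
    | false => simp [hb] at h
    | true =>
      rw [hb] at h
      cases i with
      | zero =>
        obtain rfl : a = p := by exact_mod_cast ha.trans hp.symm
        exact excluded_of_excludedBelow (k := 0) hb rfl rfl hm (by simpa using hr)
      | succ i =>
        have e : n + 1 + i = n + (i + 1) := by omega
        refine ih (n := n + 1) (i := i) h hq ?_ (by omega) (by rw [ha, e]) (by omega)
        rw [lucas, ← hp, ← hq]
        push_cast
        ring

theorem excluded_lucas_sub {n m a r : ℕ} (hn : 2 ≤ n) (hn' : n ≤ 500) (hm : m < n)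
    (ha : (a : ℤ) = lucas n) (hr : (r : ℤ) = lucas m) : excluded mask (a - r) = true := by
  have h := excludedUpTo_mask
  rw [withValue_eq] at h
  obtain ⟨i, rfl⟩ := Nat.exists_eq_add_of_le hn
  exact excluded_of_excludedUpTo h (by simp [lucas]) (by simp [lucas]) (by omega) ha hm hr

theorem lucas_nonneg (n : ℕ) : 0 ≤ lucas n := by
  induction n using Nat.twoStepInduction with
  | zero => simp [lucas]
  | one => simp [lucas]
  | more n h1 h2 => rw [lucas]; omega

theorem three_pow_mul_lucas_le (n : ℕ) : 3 ^ n * lucas n ≤ 2 * 5 ^ n := by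
  induction n using Nat.twoStepInduction with
  | zero => simp [lucas]
  | one => simp [lucas]
  | more n h1 h2 =>
    have : (0 : ℤ) ≤ 5 ^ n := by positivity
    rw [pow_succ] at h2
    rw [lucas, pow_add, pow_add]
    linarith [pow_succ (5 : ℤ) n]

set_option exponentiation.threshold 600 in
theorem lucas_lt {n : ℕ} (hn : n ≤ 500) : lucas n < 2 ^ 380 := by
  have h1 : (3 : ℤ) ^ (500 - n) ≤ 5 ^ (500 - n) := pow_le_pow_left₀ (by norm_num) (by norm_num) _
  have h2 : (3 : ℤ) ^ 500 * lucas n ≤ 2 * 5 ^ 500 := by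
    calc (3 : ℤ) ^ 500 * lucas n = 3 ^ (500 - n) * (3 ^ n * lucas n) := by
          rw [← mul_assoc, ← pow_add, Nat.sub_add_cancel hn]
      _ ≤ 5 ^ (500 - n) * (2 * 5 ^ n) :=
          mul_le_mul h1 (three_pow_mul_lucas_le n)
            (mul_nonneg (by positivity) (lucas_nonneg n)) (by positivity)
      _ = 2 * (5 ^ (500 - n) * 5 ^ n) := by ring
      _ = 2 * 5 ^ 500 := by rw [← pow_add, Nat.sub_add_cancel hn]
  by_contra! h
  have h3 : (3 : ℤ) ^ 500 * 2 ^ 380 ≤ 3 ^ 500 * lucas n :=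
    mul_le_mul_of_nonneg_left h (by positivity)
  exact absurd (h3.trans h2) (by norm_num)

set_option exponentiation.threshold 600 in
theorem exponent_bounds_of_lt {x y : ℕ} (h : 2 ^ x * 3 ^ y < 2 ^ 381) : x < 382 ∧ y < 241 := by
  have h2 : 0 < 2 ^ x := by positivity
  have h3 : 0 < 3 ^ y := by positivity
  constructor
  · have : 2 ^ x < 2 ^ 382 := by
      calc 2 ^ x ≤ 2 ^ x * 3 ^ y := Nat.le_mul_of_pos_right _ h3
        _ < 2 ^ 381 := h
        _ < 2 ^ 382 := by norm_num
    exact (Nat.pow_lt_pow_iff_right (by norm_num)).1 this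
  · have : 3 ^ y < 3 ^ 241 := by
      calc 3 ^ y ≤ 2 ^ x * 3 ^ y := Nat.le_mul_of_pos_left _ h2
        _ < 2 ^ 381 := h
        _ < 3 ^ 241 := by norm_num
    exact (Nat.pow_lt_pow_iff_right (by norm_num)).1 this

theorem exponent_bounds_of_excluded {D x x₁ y y₁ : ℕ} (hD : excluded mask D = true)
    (hlt : D < 2 ^ 380)
    (h : 2 ^ x * 3 ^ y = 2 ^ x₁ * 3 ^ y₁ + D ∨ 2 ^ x * 3 ^ y + D = 2 ^ x₁ * 3 ^ y₁) :
    x < 382 ∧ y < 241 := by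
  have hpos := pos_of_excluded hD
  have hP₁ : 0 < 2 ^ x₁ * 3 ^ y₁ := by positivity
  rcases le_or_gt x₁ x with hx | hx <;> rcases le_or_gt y₁ y with hy | hy
  · have hdvd : 2 ^ x₁ * 3 ^ y₁ ∣ 2 ^ x * 3 ^ y :=
      mul_dvd_mul (pow_dvd_pow 2 hx) (pow_dvd_pow 3 hy)
    have hle := Nat.le_of_dvd (by positivity) hdvd
    have h' := h.resolve_right (by omega)
    rw [h'] at hdvd
    have := Nat.le_of_dvd hpos ((Nat.dvd_add_right dvd_rfl).1 hdvd)
    exact exponent_bounds_of_lt (by omega)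
  · obtain ⟨u, rfl⟩ := Nat.exists_eq_add_of_le hx
    obtain ⟨w, rfl⟩ := Nat.exists_eq_add_of_lt hy
    rcases Nat.eq_zero_or_pos u with rfl | hu
    · have hdvd : 2 ^ (x₁ + 0) * 3 ^ y ∣ 2 ^ x₁ * 3 ^ (y + w + 1) :=
        mul_dvd_mul dvd_rfl (pow_dvd_pow 3 (by omega))
      have hle := Nat.le_of_dvd (by positivity) hdvd
      have h' := h.resolve_left (by omega)
      rw [← h'] at hdvd
      have := Nat.le_of_dvd hpos ((Nat.dvd_add_right dvd_rfl).1 hdvd)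
      exact exponent_bounds_of_lt (by omega)
    · have := bounds_of_excluded (a := x₁) (b := y) (u := u) (w := w + 1) hD (by omega) (by omega)
        (by
          rw [show 2 ^ x₁ * 3 ^ y * 3 ^ (w + 1) = 2 ^ x₁ * 3 ^ (y + w + 1) by ring,
            show 2 ^ x₁ * 3 ^ y * 2 ^ u = 2 ^ (x₁ + u) * 3 ^ y by ring]
          omega)
      omega
  · obtain ⟨u, rfl⟩ := Nat.exists_eq_add_of_lt hx
    obtain ⟨w, rfl⟩ := Nat.exists_eq_add_of_le hy
    rcases Nat.eq_zero_or_pos w with rfl | hw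
    · have hdvd : 2 ^ x * 3 ^ (y₁ + 0) ∣ 2 ^ (x + u + 1) * 3 ^ y₁ :=
        mul_dvd_mul (pow_dvd_pow 2 (by omega)) dvd_rfl
      have hle := Nat.le_of_dvd (by positivity) hdvd
      have h' := h.resolve_left (by omega)
      rw [← h'] at hdvd
      have := Nat.le_of_dvd hpos ((Nat.dvd_add_right dvd_rfl).1 hdvd)
      exact exponent_bounds_of_lt (by omega)
    · obtain ⟨ha, hb, hu⟩ := bounds_of_excluded (a := x) (b := y₁) (u := u + 1) (w := w) hD
        (by omega) (by omega)
        (by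
          rw [show 2 ^ x * 3 ^ y₁ * 3 ^ w = 2 ^ x * 3 ^ (y₁ + w) by ring,
            show 2 ^ x * 3 ^ y₁ * 2 ^ (u + 1) = 2 ^ (x + u + 1) * 3 ^ y₁ by ring]
          omega)
      have : 2 ^ (x + u + 1) * 3 ^ y₁ ≤ 2 ^ 33 * 3 ^ 10 :=
        Nat.mul_le_mul (Nat.pow_le_pow_right (by norm_num) (by omega))
          (Nat.pow_le_pow_right (by norm_num) hb)
      exact exponent_bounds_of_lt (by omega)
  · have hle : 2 ^ x * 3 ^ y ∣ 2 ^ x₁ * 3 ^ y₁ :=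
      mul_dvd_mul (pow_dvd_pow 2 hx.le) (pow_dvd_pow 3 hy.le)
    have hle' := Nat.le_of_dvd hP₁ hle
    have h' := h.resolve_left (by omega)
    rw [← h'] at hle
    have := Nat.le_of_dvd hpos ((Nat.dvd_add_right dvd_rfl).1 hle)
    exact exponent_bounds_of_lt (by omega)

theorem neg_c_small_n_xy_bound (c : ℤ) (hc : c < 0) (n n₁ x x₁ y y₁ : ℕ)
    (h1 : c = lucas n - 2 ^ x * 3 ^ y) (h2 : c = lucas n₁ - 2 ^ x₁ * 3 ^ y₁)
    (hnn : n₁ < n) (hn : n ≤ 500) :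
    x < 382 ∧ y < 241 := by
  obtain ⟨a, ha⟩ := Int.eq_ofNat_of_zero_le (lucas_nonneg n)
  obtain ⟨r, hr⟩ := Int.eq_ofNat_of_zero_le (lucas_nonneg n₁)
  have ha380 : a < 2 ^ 380 := by exact_mod_cast ha ▸ lucas_lt hn
  have h : 2 ^ x * 3 ^ y + r = 2 ^ x₁ * 3 ^ y₁ + a := by
    zify
    linarith
  rcases le_or_gt 2 n with hn2 | hn2
  · have hD := excluded_lucas_sub hn2 hn hnn ha.symm hr.symm
    have := pos_of_excluded hD
    exact exponent_bounds_of_excluded (x₁ := x₁) (y₁ := y₁) hD (by omega) (Or.inl (by omega))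
  · obtain rfl : n = 1 := by omega
    obtain rfl : n₁ = 0 := by omega
    obtain rfl : a = 1 := Int.natCast_inj.1 (ha.symm.trans (by simp [lucas]))
    obtain rfl : r = 2 := Int.natCast_inj.1 (hr.symm.trans (by simp [lucas]))
    have hD := excluded_lucas_sub (n := 2) (m := 0) (a := 3) (r := 2) (by norm_num) (by norm_num)
      (by norm_num) (by simp [lucas]) (by simp [lucas])
    exact exponent_bounds_of_excluded (x₁ := x₁) (y₁ := y₁) hD (by norm_num) (Or.inr (by omega))
end
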